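/- There exist universal constants c, C > 0 such that for every dimension n and every isotropic random vector X in ℝⁿ with log-concave density, one has P(| |X| − √n | ≥ t√n) ≤ C·exp(−c·n^{1/2}·min(t³, t)) for all t ≥ 0. -/

import Mathlib

open MeasureTheory ProbabilityTheory Real
open scoped ENNReal RealInnerProductSpace Pointwise NNReal

noncomputable section

/-- A nonnegative function is log-concave if `f(λx+(1-λ)y) ≥ f(x)^λ f(y)^{1-λ}`. -/
def IsLogConcaveFn {E : Type*} [AddCommGroup E] [Module ℝ E] (f : E → ℝ) : Prop :=
  (∀ x, 0 ≤ f x) ∧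
  ∀ x y : E, ∀ l : ℝ, 0 ≤ l → l ≤ 1 →
    f x ^ l * f y ^ (1 - l) ≤ f (l • x + (1 - l) • y)

/-- Hilbert-Schmidt (Frobenius) norm of a matrix. -/
def hsNorm {n : ℕ} (A : Matrix (Fin n) (Fin n) ℝ) : ℝ :=
  Real.sqrt (∑ i, ∑ j, (A i j) ^ 2)

/-- Operator norm of a matrix acting on Euclidean space. -/
def opNorm {n : ℕ} (A : Matrix (Fin n) (Fin n) ℝ) : ℝ :=
  ‖LinearMap.toContinuousLinearMap (Matrix.toEuclideanLin A)‖

/-- Application of a matrix to a Euclidean vector. -/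
def mApp {n : ℕ} (A : Matrix (Fin n) (Fin n) ℝ) (x : EuclideanSpace ℝ (Fin n)) :
    EuclideanSpace ℝ (Fin n) := Matrix.toEuclideanLin A x

/-- The random vector `X` has density `f` with respect to Lebesgue measure. -/
def HasDensityFn {Ω : Type*} [MeasurableSpace Ω] (P : Measure Ω) {n : ℕ}
    (X : Ω → EuclideanSpace ℝ (Fin n)) (f : EuclideanSpace ℝ (Fin n) → ℝ) : Prop :=
  Measurable X ∧ Measure.map X P = volume.withDensity fun x => ENNReal.ofReal (f x)

/-- `X` is isotropic: centered with identity covariance. -/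
def Isotropic {Ω : Type*} [MeasurableSpace Ω] (P : Measure Ω) {n : ℕ}
    (X : Ω → EuclideanSpace ℝ (Fin n)) : Prop :=
  (∫ ω, X ω ∂P) = 0 ∧
  ∀ θ η : EuclideanSpace ℝ (Fin n), (∫ ω, ⟪X ω, θ⟫ * ⟪X ω, η⟫ ∂P) = ⟪θ, η⟫

/-- `X` is ψ_α with constant `b`. -/
def IsPsiAlpha {Ω : Type*} [MeasurableSpace Ω] (P : Measure Ω) {n : ℕ}
    (X : Ω → EuclideanSpace ℝ (Fin n)) (α b : ℝ) : Prop :=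
  ∀ p : ℝ, 2 ≤ p → ∀ y : EuclideanSpace ℝ (Fin n),
    (∫ ω, |⟪X ω, y⟫| ^ p ∂P) ^ (1/p) ≤ b * p ^ (1/α) * (∫ ω, ⟪X ω, y⟫ ^ 2 ∂P) ^ ((1:ℝ)/2)

/-- `G` is a standard Gaussian random vector in `ℝⁿ`. -/
def IsStdGaussian {Ω : Type*} [MeasurableSpace Ω] (P : Measure Ω) {n : ℕ}
    (G : Ω → EuclideanSpace ℝ (Fin n)) : Prop :=
  Measurable G ∧
  Measure.map G P = volume.withDensity fun x =>
    ENNReal.ofReal ((2 * π) ^ (-(n:ℝ)/2) * Real.exp (-‖x‖ ^ 2 / 2))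

/-- Surface area of the unit sphere `S^{k-1}` in `ℝᵏ`. -/
def sphereVol (k : ℕ) : ℝ := 2 * π ^ ((k : ℝ)/2) / Real.Gamma ((k : ℝ)/2)

/-- The marginal density `π_F g(x) = ∫_{F^⊥} g(x+y) dy`. -/
def marginalDensity {n : ℕ} (g : EuclideanSpace ℝ (Fin n) → ℝ)
    (F : Submodule ℝ (EuclideanSpace ℝ (Fin n))) (x : EuclideanSpace ℝ (Fin n)) : ℝ :=
  ∫ y : Fᗮ, g (x + y)

/-- `h_{k,p}(u) = vol(S^{k-1}) ∫₀^∞ t^{p+k-1} π_{u(E₀)} g(t u(θ₀)) dt`. -/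
def hkp {n : ℕ} (g : EuclideanSpace ℝ (Fin n) → ℝ)
    (E₀ : Submodule ℝ (EuclideanSpace ℝ (Fin n))) (θ₀ : EuclideanSpace ℝ (Fin n))
    (k : ℕ) (p : ℝ) (u : Matrix (Fin n) (Fin n) ℝ) : ℝ :=
  sphereVol k * ∫ t in Set.Ioi (0:ℝ), t ^ (p + (k:ℝ) - 1) *
    marginalDensity g (Submodule.map (Matrix.toEuclideanLin u) E₀) (t • mApp u θ₀)

/-- Support functional of the one-sided L_q-centroid body `Z⁺_q(w)`. -/
def suppZplus {m : ℕ} (w : EuclideanSpace ℝ (Fin m) → ℝ) (q : ℝ)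
    (y : EuclideanSpace ℝ (Fin m)) : ℝ :=
  (2 * ∫ x, (max ⟪x, y⟫ 0) ^ q * w x) ^ (1/q)

/-- Ball's body `K_q(w) = {x : q ∫₀^∞ t^{q-1} w(tx) dt ≥ 1}`. -/
def ballBody {m : ℕ} (w : EuclideanSpace ℝ (Fin m) → ℝ) (q : ℝ) :
    Set (EuclideanSpace ℝ (Fin m)) :=
  {x | 1 ≤ q * ∫ t in Set.Ioi (0:ℝ), t ^ (q-1) * w (t • x)}

/-- The one-sided L_q-centroid body `Z⁺_q(w)`, as the convex set with support
functional `suppZplus w q`. -/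
def ZplusBody {m : ℕ} (w : EuclideanSpace ℝ (Fin m) → ℝ) (q : ℝ) :
    Set (EuclideanSpace ℝ (Fin m)) :=
  {x | ∀ y, ⟪x, y⟫ ≤ suppZplus w q y}

section

lemma bm_compact {A B : Set ℝ} (hA : IsCompact A) (hB : IsCompact B) (hAn : A.Nonempty)
    (hBn : B.Nonempty) : volume A + volume B ≤ volume (A + B) := by
  obtain ⟨a, haA, ha⟩ := hA.exists_isGreatest hAn
  obtain ⟨b, hbB, hb⟩ := hB.exists_isLeast hBn
  have h1 : volume A ≤ volume ((A + B) \ Set.Ici (a + b)) := by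
    have : volume A = volume ((fun x => x + b) '' (A \ {a})) := by
      rw [Set.image_add_right, measure_preimage_add_right, measure_sdiff_null (by simp)]
    rw [this]
    apply measure_mono
    rintro _ ⟨x, ⟨hx, hxa⟩, rfl⟩
    refine ⟨Set.add_mem_add hx hbB, ?_⟩
    simp only [Set.mem_Ici, not_le]
    have := ha hx
    have : x < a := lt_of_le_of_ne this hxa
    simpa using this
  have h2 : volume B ≤ volume ((A + B) ∩ Set.Ici (a + b)) := by
    have : volume B = volume ((fun x => a + x) '' B) := by
      rw [Set.image_add_left, measure_preimage_add]
    rw [this]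
    apply measure_mono
    rintro _ ⟨x, hx, rfl⟩
    refine ⟨Set.add_mem_add haA hx, ?_⟩
    have := hb hx
    simpa using this
  calc volume A + volume B ≤ _ := add_le_add h1 h2
    _ = volume (A + B) := by
      rw [add_comm, measure_inter_add_sdiff _ measurableSet_Ici]

lemma bm_one {A B C : Set ℝ} {l : ℝ} (hl0 : 0 < l) (hl1 : l < 1)
    (hA : MeasurableSet A) (hB : MeasurableSet B)
    (hAn : A.Nonempty) (hBn : B.Nonempty)
    (hC : ∀ a ∈ A, ∀ b ∈ B, l * a + (1 - l) * b ∈ C) :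
    ENNReal.ofReal l * volume A + ENNReal.ofReal (1 - l) * volume B ≤ volume C := by
  obtain ⟨a0, ha0⟩ := hAn
  obtain ⟨b0, hb0⟩ := hBn
  have key : ∀ K : Set ℝ, (K ⊆ A ∧ IsCompact K) → ∀ K' : Set ℝ, (K' ⊆ B ∧ IsCompact K') →
      ENNReal.ofReal l * volume K + ENNReal.ofReal (1 - l) * volume K' ≤ volume C := by
    rintro K ⟨hKA, hK⟩ K' ⟨hKB, hK'⟩
    have e1 : IsCompact (l • insert a0 K) := (hK.insert a0).smul l
    have e2 : IsCompact ((1 - l) • insert b0 K') := (hK'.insert b0).smul (1 - l)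
    have := bm_compact e1 e2 ((Set.insert_nonempty _ _).smul_set) ((Set.insert_nonempty _ _).smul_set)
    rw [Measure.addHaar_smul, Measure.addHaar_smul] at this
    simp only [Module.finrank_self, pow_one, abs_of_pos hl0, abs_of_pos (sub_pos.2 hl1)] at this
    refine le_trans (add_le_add ?_ ?_) (this.trans (measure_mono ?_))
    · gcongr; exact Set.subset_insert _ _
    · gcongr; exact Set.subset_insert _ _
    · rintro _ ⟨_, ⟨x, hx, rfl⟩, _, ⟨y, hy, rfl⟩, rfl⟩
      refine hC x ?_ y ?_
      · rcases hx with rfl | hx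
        exacts [ha0, hKA hx]
      · rcases hy with rfl | hy
        exacts [hb0, hKB hy]
  rw [hA.measure_eq_iSup_isCompact, hB.measure_eq_iSup_isCompact]
  simp_rw [ENNReal.mul_iSup]
  simp_rw [iSup_and']
  exact ENNReal.biSup_add_biSup_le' ⟨∅, by simp⟩ ⟨∅, by simp⟩ key

def PLprop {α : Type*} [AddCommGroup α] [Module ℝ α] [MeasurableSpace α] (μ : Measure α) (l : ℝ)
    (q : α → α → ℝ≥0∞) : Prop :=
  ∀ f g h : α → ℝ≥0∞, Measurable f → Measurable g → Measurable h →
    (∀ x y, f x ^ l * g y ^ (1 - l) ≤ q x y * h (l • x + (1 - l) • y)) →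
    (∫⁻ x, f x ∂μ) ^ l * (∫⁻ x, g x ∂μ) ^ (1 - l) ≤ ∫⁻ x, h x ∂μ

lemma ennreal_young {l : ℝ} (hl0 : 0 < l) (hl1 : l < 1) (a b : ℝ≥0∞) :
    a ^ l * b ^ (1 - l) ≤ ENNReal.ofReal l * a + ENNReal.ofReal (1 - l) * b := by
  have h1 : 0 < 1 - l := sub_pos.2 hl1
  have := ENNReal.young_inequality (a ^ l) (b ^ (1 - l)) (p := 1 / l) (q := 1 / (1 - l))
    (by constructor <;> first | positivity | (field_simp; ring))
  rw [← ENNReal.rpow_mul, ← ENNReal.rpow_mul, mul_one_div_cancel hl0.ne',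
    mul_one_div_cancel h1.ne', ENNReal.rpow_one, ENNReal.rpow_one] at this
  refine this.trans (le_of_eq ?_)
  rw [ENNReal.div_eq_inv_mul, ENNReal.div_eq_inv_mul, ← ENNReal.ofReal_inv_of_pos (by positivity),
    ← ENNReal.ofReal_inv_of_pos (by positivity)]
  simp

lemma pl_one_norm {l : ℝ} (hl0 : 0 < l) (hl1 : l < 1) (f g h : ℝ → ℝ≥0∞)
    (hf : Measurable f) (hg : Measurable g) (hh : Measurable h)
    (hF : ⨆ x, f x = 1) (hG : ⨆ x, g x = 1)
    (H : ∀ x y, f x ^ l * g y ^ (1 - l) ≤ h (l • x + (1 - l) • y)) :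
    ENNReal.ofReal l * (∫⁻ x, f x) + ENNReal.ofReal (1 - l) * (∫⁻ x, g x) ≤ ∫⁻ x, h x := by
  have lc : ∀ f : ℝ → ℝ≥0∞, Measurable f → ⨆ x, f x ≤ 1 →
      ∫⁻ x, f x = ∫⁻ t in Set.Ioo (0:ℝ) 1, volume {x | ENNReal.ofReal t < f x} := by
    intro f hf hle
    have hle' : ∀ x, f x ≤ 1 := fun x => (le_iSup f x).trans hle
    have e : ∀ x, f x = ENNReal.ofReal (f x).toReal := fun x =>
      (ENNReal.ofReal_toReal ((hle' x).trans_lt ENNReal.one_lt_top).ne).symm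
    have : ∫⁻ x, f x = ∫⁻ t in Set.Ioi (0:ℝ), volume {x | t < (f x).toReal} := by
      rw [← lintegral_eq_lintegral_meas_lt volume (f := fun x => (f x).toReal)
        (Filter.Eventually.of_forall fun x => ENNReal.toReal_nonneg) hf.ennreal_toReal.aemeasurable]
      exact lintegral_congr e
    rw [this]
    rw [← Set.Ioo_union_Ici_eq_Ioi (zero_lt_one (α := ℝ)), lintegral_union measurableSet_Ici
      (Set.disjoint_left.2 fun x hx hx' => absurd hx.2 (not_lt.2 hx'))]
    have z : ∫⁻ t in Set.Ici (1:ℝ), volume {x | t < (f x).toReal} = 0 := by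
      rw [setLIntegral_congr_fun measurableSet_Ici (g := fun _ => 0)]
      · simp
      · intro t ht
        have : {x | t < (f x).toReal} = ∅ := by
          ext x
          simp only [Set.mem_ofPred_eq, Set.mem_empty_iff_false, iff_false, not_lt]
          refine le_trans ?_ ht
          have := ENNReal.toReal_mono ENNReal.one_ne_top (hle' x)
          simpa using this
        simp [this]
    rw [z, add_zero]
    apply setLIntegral_congr_fun measurableSet_Ioo
    intro t ht
    simp only
    congr 1
    ext x
    simp only [Set.mem_ofPred_eq]
    rw [ENNReal.ofReal_lt_iff_lt_toReal ht.1.le ((hle' x).trans_lt ENNReal.one_lt_top).ne]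
  have lch : ∫⁻ t in Set.Ioo (0:ℝ) 1, volume {x | ENNReal.ofReal t < h x} ≤ ∫⁻ x, h x := by
    have := lc (fun x => min (h x) 1) (hh.min measurable_const) (by simp)
    calc _ = ∫⁻ t in Set.Ioo (0:ℝ) 1, volume {x | ENNReal.ofReal t < min (h x) 1} := by
          apply setLIntegral_congr_fun measurableSet_Ioo
          intro t ht
          simp only
          congr 1
          ext x
          have : ENNReal.ofReal t < 1 := by simpa using ht.2
          simp [this]
      _ = _ := this.symm
      _ ≤ _ := lintegral_mono fun x => min_le_left _ _
  refine le_trans ?_ lch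
  rw [lc f hf hF.le, lc g hg hG.le]
  have m : ∀ f : ℝ → ℝ≥0∞, Measurable fun t : ℝ => volume {x | ENNReal.ofReal t < f x} := by
    intro f
    apply Antitone.measurable
    intro s t hst
    apply measure_mono
    intro x hx
    exact lt_of_le_of_lt (ENNReal.ofReal_le_ofReal hst) hx
  rw [← lintegral_const_mul _ (m f), ← lintegral_const_mul _ (m g),
    ← lintegral_add_left ((m f).const_mul _)]
  apply setLIntegral_mono (m h)
  intro t ht
  have ht1 : ENNReal.ofReal t < 1 := by simpa using ht.2
  refine bm_one hl0 hl1 (measurableSet_lt measurable_const hf) (measurableSet_lt measurable_const hg)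
    ?_ ?_ ?_
  · exact lt_iSup_iff.1 (hF ▸ ht1)
  · exact lt_iSup_iff.1 (hG ▸ ht1)
  · intro a ha b hb
    refine lt_of_lt_of_le ?_ (H a b)
    have h0 : (0:ℝ) < 1 - l := sub_pos.2 hl1
    calc ENNReal.ofReal t = ENNReal.ofReal t ^ l * ENNReal.ofReal t ^ (1 - l) := by
          rw [← ENNReal.rpow_add _ _ (by simpa using ht.1) ENNReal.ofReal_ne_top]; simp
      _ < _ := ENNReal.mul_lt_mul (ENNReal.rpow_lt_rpow ha hl0) (ENNReal.rpow_lt_rpow hb h0)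

lemma pl_one_bdd {l : ℝ} (hl0 : 0 < l) (hl1 : l < 1) (f g h : ℝ → ℝ≥0∞)
    (hf : Measurable f) (hg : Measurable g) (hh : Measurable h)
    (hF : ⨆ x, f x ≠ ⊤) (hG : ⨆ x, g x ≠ ⊤)
    (H : ∀ x y, f x ^ l * g y ^ (1 - l) ≤ h (l • x + (1 - l) • y)) :
    (∫⁻ x, f x) ^ l * (∫⁻ x, g x) ^ (1 - l) ≤ ∫⁻ x, h x := by
  have h0 : (0:ℝ) < 1 - l := sub_pos.2 hl1
  set F := ⨆ x, f x with hFd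
  set G := ⨆ x, g x with hGd
  by_cases hF0 : F = 0
  · have : ∀ x, f x = 0 := fun x => le_antisymm ((le_iSup f x).trans hF0.le) bot_le
    simp [this, hl0]
  by_cases hG0 : G = 0
  · have : ∀ x, g x = 0 := fun x => le_antisymm ((le_iSup g x).trans hG0.le) bot_le
    simp [this, h0]
  have hFl0 : F ^ l ≠ 0 := by simp [ENNReal.rpow_eq_zero_iff, hF0, hF]
  have hGl0 : G ^ (1-l) ≠ 0 := by simp [ENNReal.rpow_eq_zero_iff, hG0, hG]
  have hFl : F ^ l ≠ ⊤ := by simp [hF0, hF]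
  have hGl : G ^ (1-l) ≠ ⊤ := by simp [hG0, hG]
  have := pl_one_norm hl0 hl1 (fun x => F⁻¹ * f x) (fun x => G⁻¹ * g x)
    (fun x => (F ^ l * G ^ (1-l))⁻¹ * h x) (hf.const_mul _) (hg.const_mul _) (hh.const_mul _)
    (by rw [← ENNReal.mul_iSup, ENNReal.inv_mul_cancel hF0 hF])
    (by rw [← ENNReal.mul_iSup, ENNReal.inv_mul_cancel hG0 hG]) (by
      intro x y
      rw [ENNReal.mul_rpow_of_nonneg _ _ hl0.le, ENNReal.mul_rpow_of_nonneg _ _ h0.le,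
        ENNReal.inv_rpow, ENNReal.inv_rpow, ENNReal.mul_inv (Or.inl hFl0) (Or.inl hFl)]
      calc _ = (F ^ l)⁻¹ * (G ^ (1-l))⁻¹ * (f x ^ l * g y ^ (1-l)) := by ring
        _ ≤ _ := by gcongr; exact H x y)
  have y := (ennreal_young hl0 hl1 _ _).trans this
  rw [lintegral_const_mul _ hf, lintegral_const_mul _ hg, lintegral_const_mul _ hh,
    ENNReal.mul_rpow_of_nonneg _ _ hl0.le, ENNReal.mul_rpow_of_nonneg _ _ h0.le,
        ENNReal.inv_rpow, ENNReal.inv_rpow, ENNReal.mul_inv (Or.inl hFl0) (Or.inl hFl)] at y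
  have y2 := mul_le_mul_right y (F ^ l * G ^ (1-l))
  calc _ = F ^ l * G ^ (1 - l) * ((F ^ l)⁻¹ * (∫⁻ (a : ℝ), f a) ^ l * ((G ^ (1 - l))⁻¹ * (∫⁻ (a : ℝ), g a) ^ (1 - l))) := by
        calc _ = 1 * 1 * ((∫⁻ (a : ℝ), f a) ^ l * (∫⁻ (a : ℝ), g a) ^ (1 - l)) := by simp
          _ = (F ^ l * (F ^ l)⁻¹) * (G ^ (1-l) * (G ^ (1-l))⁻¹) *
              ((∫⁻ (a : ℝ), f a) ^ l * (∫⁻ (a : ℝ), g a) ^ (1 - l)) := by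
            rw [ENNReal.mul_inv_cancel hFl0 hFl, ENNReal.mul_inv_cancel hGl0 hGl]
          _ = _ := by ring
    _ ≤ _ := y2
    _ = _ := by
      calc _ = (F ^ l * (F ^ l)⁻¹) * (G ^ (1-l) * (G ^ (1-l))⁻¹) * ∫⁻ x, h x := by ring
        _ = _ := by rw [ENNReal.mul_inv_cancel hFl0 hFl, ENNReal.mul_inv_cancel hGl0 hGl]; simp

lemma lintegral_iSup_min (f : ℝ → ℝ≥0∞) (hf : Measurable f) :
    ∫⁻ x, f x = ⨆ N : ℕ, ∫⁻ x, min (f x) N := by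
  rw [← lintegral_iSup (fun N => hf.min measurable_const)]
  · congr 1
    ext x
    apply le_antisymm
    · by_cases hx : f x = ⊤
      · rw [hx]
        simp [ENNReal.iSup_natCast]
      · obtain ⟨N, hN⟩ := ENNReal.exists_nat_gt hx
        exact le_iSup_of_le N (by simp [hN.le])
    · exact iSup_le fun N => min_le_left _ _
  · intro a b hab x
    exact min_le_min_left _ (by exact_mod_cast hab)

lemma iSup_rpow' {l : ℝ} (hl0 : 0 < l) (a : ℕ → ℝ≥0∞) : (⨆ i, a i) ^ l = ⨆ i, a i ^ l := by
  exact (ENNReal.orderIsoRpow l hl0).map_iSup a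

theorem pl_real {l : ℝ} (hl0 : 0 < l) (hl1 : l < 1) :
    PLprop (volume : Measure ℝ) l (fun _ _ => 1) := by
  intro f g h hf hg hh H
  have h0 : (0:ℝ) < 1 - l := sub_pos.2 hl1
  rw [lintegral_iSup_min f hf, lintegral_iSup_min g hg, iSup_rpow' hl0, iSup_rpow' h0,
    ENNReal.iSup_mul]
  refine iSup_le fun N => ?_
  rw [ENNReal.mul_iSup]
  refine iSup_le fun M => ?_
  refine pl_one_bdd hl0 hl1 _ _ _ (hf.min measurable_const) (hg.min measurable_const) hh ?_ ?_ ?_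
  · exact ((iSup_le fun x => min_le_right _ _).trans_lt (ENNReal.natCast_lt_top N)).ne
  · exact ((iSup_le fun x => min_le_right _ _).trans_lt (ENNReal.natCast_lt_top M)).ne
  · intro x y
    refine le_trans ?_ ((H x y).trans (by simp))
    gcongr
    · exact min_le_left _ _
    · exact min_le_left _ _

end

section

lemma PLprop.prod {α β : Type*} [AddCommGroup α] [Module ℝ α] [MeasurableSpace α]
    [AddCommGroup β] [Module ℝ β] [MeasurableSpace β] {μ : Measure α} {ν : Measure β}
    [SFinite μ] [SFinite ν] {l : ℝ} {q : α → α → ℝ≥0∞} {q' : β → β → ℝ≥0∞}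
    (h1 : PLprop μ l q) (h2 : PLprop ν l q') :
    PLprop (μ.prod ν) l (fun x y => q x.1 y.1 * q' x.2 y.2) := by
  intro f g h hf hg hh H
  rw [lintegral_prod _ hf.aemeasurable, lintegral_prod _ hg.aemeasurable,
    lintegral_prod _ hh.aemeasurable]
  refine h1 _ _ _ hf.lintegral_prod_right' hg.lintegral_prod_right' hh.lintegral_prod_right' ?_
  intro x y
  have hh' : Measurable fun b => h (l • x + (1 - l) • y, b) := hh.comp measurable_prodMk_left
  rw [← lintegral_const_mul _ hh']
  refine h2 (fun a => f (x, a)) (fun a => g (y, a)) _ (hf.comp measurable_prodMk_left)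
    (hg.comp measurable_prodMk_left) (hh'.const_mul _) ?_
  intro a b
  refine (H (x, a) (y, b)).trans (le_of_eq ?_)
  simp only [Prod.smul_mk, Prod.mk_add_mk]
  ring

lemma PLprop.map {α β : Type*} [AddCommGroup α] [Module ℝ α] [MeasurableSpace α]
    [AddCommGroup β] [Module ℝ β] [MeasurableSpace β] {μ : Measure α} {ν : Measure β}
    {l : ℝ} {q : α → α → ℝ≥0∞} {q' : β → β → ℝ≥0∞}
    (h1 : PLprop μ l q) (e : α → β) (he : MeasurePreserving e μ ν)
    (hlin : ∀ x y, e (l • x + (1 - l) • y) = l • e x + (1 - l) • e y)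
    (hq : ∀ x y, q' (e x) (e y) ≤ q x y) :
    PLprop ν l q' := by
  intro f g h hf hg hh H
  rw [← he.lintegral_comp hf, ← he.lintegral_comp hg, ← he.lintegral_comp hh]
  refine h1 _ _ _ (hf.comp he.measurable) (hg.comp he.measurable) (hh.comp he.measurable) ?_
  intro x y
  refine (H (e x) (e y)).trans ?_
  rw [← hlin]
  exact mul_le_mul_left (hq x y) _

lemma PLprop.pi {α : Type*} [AddCommGroup α] [Module ℝ α] [MeasurableSpace α] {μ : Measure α}
    [SigmaFinite μ] {l : ℝ} {q : α → α → ℝ≥0∞} (h1 : PLprop μ l q) (n : ℕ) :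
    PLprop (Measure.pi (fun _ : Fin n => μ)) l (fun x y => ∏ i, q (x i) (y i)) := by
  induction n with
  | zero =>
    intro f g h hf hg hh H
    have := H (fun i => i.elim0) (fun i => i.elim0)
    rw [Measure.pi_of_empty (fun _ : Fin 0 => μ) (x := fun i => i.elim0)]
    rw [lintegral_dirac, lintegral_dirac, lintegral_dirac]
    rw [Subsingleton.elim (l • (fun i : Fin 0 => (i.elim0 : α)) + (1 - l) • fun i : Fin 0 => (i.elim0 : α))
      (fun i => i.elim0)] at this
    simpa using this
  | succ n ih =>
    refine (h1.prod ih).map (fun p => Fin.cons p.1 p.2) ?_ ?_ ?_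
    · have := (measurePreserving_piFinSuccAbove (fun _ : Fin (n+1) => μ) 0).symm
      convert this using 1
      ext p i
      simp [MeasurableEquiv.piFinSuccAbove, Fin.insertNthEquiv]
    · intro x y
      ext i
      refine Fin.cases ?_ ?_ i <;> simp
    · intro x y
      simp [Fin.prod_univ_succ]

lemma pl_gaussianReal : PLprop (gaussianReal 0 1) (1/2)
    (fun x y => ENNReal.ofReal (rexp ((x - y)^2 / 8))) := by
  intro f g h hf hg hh H
  rw [gaussianReal_of_var_ne_zero _ one_ne_zero]
  have hm := measurable_gaussianPDF 0 1
  rw [lintegral_withDensity_eq_lintegral_mul _ hm hf, lintegral_withDensity_eq_lintegral_mul _ hm hg,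
    lintegral_withDensity_eq_lintegral_mul _ hm hh]
  refine pl_real (by norm_num) (by norm_num) _ _ _ (hm.mul hf) (hm.mul hg) (hm.mul hh) ?_
  intro x y
  simp only [Pi.mul_apply, one_mul]
  rw [ENNReal.mul_rpow_of_nonneg _ _ (by norm_num), ENNReal.mul_rpow_of_nonneg _ _ (by norm_num)]
  have key : gaussianPDF 0 1 x ^ (1/2:ℝ) * gaussianPDF 0 1 y ^ (1 - 1/2:ℝ) *
      ENNReal.ofReal (rexp ((x - y)^2 / 8)) = gaussianPDF 0 1 ((1/2:ℝ) • x + (1 - 1/2:ℝ) • y) := by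
    simp only [gaussianPDF]
    rw [ENNReal.ofReal_rpow_of_nonneg (gaussianPDFReal_nonneg _ _ _) (by norm_num),
      ENNReal.ofReal_rpow_of_nonneg (gaussianPDFReal_nonneg _ _ _) (by norm_num),
      ← ENNReal.ofReal_mul (by have := gaussianPDFReal_nonneg 0 1 x; have := gaussianPDFReal_nonneg 0 1 y; positivity),
      ← ENNReal.ofReal_mul (by have := gaussianPDFReal_nonneg 0 1 x; have := gaussianPDFReal_nonneg 0 1 y; positivity)]
    congr 1
    simp only [gaussianPDFReal]
    rw [Real.mul_rpow (by positivity) (by positivity), Real.mul_rpow (by positivity) (by positivity),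
      ← Real.exp_mul, ← Real.exp_mul]
    have hs : ((√(2 * π * ((1:ℝ≥0):ℝ)))⁻¹) ^ (1/2:ℝ) * ((√(2 * π * ((1:ℝ≥0):ℝ)))⁻¹) ^ (1-1/2:ℝ) = (√(2 * π * ((1:ℝ≥0):ℝ)))⁻¹ := by
      rw [← Real.rpow_add (by positivity)]; norm_num
    set s := (√(2 * π * ((1:ℝ≥0):ℝ)))⁻¹
    rw [show ∀ a b c d e : ℝ, a * b * (c * d) * e = a * c * (b * d * e) by intros; ring, hs,
      ← Real.exp_add, ← Real.exp_add]
    congr 2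
    simp
    ring
  calc _ = (gaussianPDF 0 1 x ^ (1/2:ℝ) * gaussianPDF 0 1 y ^ (1 - 1/2:ℝ)) *
        (f x ^ (1/2:ℝ) * g y ^ (1 - 1/2:ℝ)) := by ring
    _ ≤ (gaussianPDF 0 1 x ^ (1/2:ℝ) * gaussianPDF 0 1 y ^ (1 - 1/2:ℝ)) * _ :=
        mul_le_mul_right (H x y) _
    _ = _ := by rw [← mul_assoc, key]

lemma pl_stdGaussian (k : ℕ) : PLprop (stdGaussian (EuclideanSpace ℝ (Fin k))) (1/2)
    (fun x y => ENNReal.ofReal (rexp (‖x - y‖^2 / 8))) := by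
  refine (pl_gaussianReal.pi k).map (WithLp.toLp 2) ⟨by fun_prop, map_pi_eq_stdGaussian⟩ ?_ ?_
  · intro x y; rfl
  · intro x y
    rw [← ENNReal.ofReal_prod_of_nonneg (by intros; positivity), ← Real.exp_sum, ← Finset.sum_div,
      EuclideanSpace.real_norm_sq_eq]
    simp

lemma pl_matGaussian (n k : ℕ) :
    PLprop (Measure.pi (fun _ : Fin n => stdGaussian (EuclideanSpace ℝ (Fin k)))) (1/2)
    (fun x y => ENNReal.ofReal (rexp ((∑ j, ‖x j - y j‖^2) / 8))) := by
  convert (pl_stdGaussian k).pi n using 3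
  rw [← ENNReal.ofReal_prod_of_nonneg (by intros; positivity), ← Real.exp_sum, ← Finset.sum_div]

lemma pl_euclidean {l : ℝ} (hl0 : 0 < l) (hl1 : l < 1) (n : ℕ) :
    PLprop (volume : Measure (EuclideanSpace ℝ (Fin n))) l (fun _ _ => 1) := by
  refine ((pl_real hl0 hl1).pi n).map (WithLp.toLp 2) ?_ ?_ ?_
  · exact (PiLp.volume_preserving_toLp (Fin n))
  · intro x y; rfl
  · intro x y; simp

end

section

def IsLC {n : ℕ} (μ : Measure (EuclideanSpace ℝ (Fin n))) : Prop :=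
  ∀ l : ℝ, 0 < l → l < 1 → PLprop μ l (fun _ _ => 1)

lemma isLC_of_density {n : ℕ} (g : EuclideanSpace ℝ (Fin n) → ℝ≥0∞) (hg : Measurable g)
    (H : ∀ l : ℝ, 0 < l → l < 1 → ∀ x y, g x ^ l * g y ^ (1 - l) ≤ g (l • x + (1 - l) • y)) :
    IsLC (volume.withDensity g) := by
  intro l hl0 hl1 u v w hu hv hw h
  have h0 : 0 < 1 - l := sub_pos.2 hl1
  rw [lintegral_withDensity_eq_lintegral_mul _ hg hu, lintegral_withDensity_eq_lintegral_mul _ hg hv,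
    lintegral_withDensity_eq_lintegral_mul _ hg hw]
  refine pl_euclidean hl0 hl1 n _ _ _ (hg.mul hu) (hg.mul hv) (hg.mul hw) ?_
  intro x y
  simp only [Pi.mul_apply, one_mul]
  rw [ENNReal.mul_rpow_of_nonneg _ _ hl0.le, ENNReal.mul_rpow_of_nonneg _ _ h0.le]
  have := h x y
  rw [one_mul] at this
  calc _ = (g x ^ l * g y ^ (1-l)) * (u x ^ l * v y ^ (1-l)) := by ring
    _ ≤ _ := mul_le_mul' (H l hl0 hl1 x y) this

lemma isLC_of_logconcave {n : ℕ} (f : EuclideanSpace ℝ (Fin n) → ℝ) (hf0 : ∀ x, 0 ≤ f x)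
    (hf : ∀ x y, ∀ l : ℝ, 0 ≤ l → l ≤ 1 → f x ^ l * f y ^ (1 - l) ≤ f (l • x + (1 - l) • y)) :
    IsLC (volume.withDensity fun x => ENNReal.ofReal (f x)) := by
  set S : Set (EuclideanSpace ℝ (Fin n)) := {x | 0 < f x} with hS
  have hSc : Convex ℝ S := by
    intro x hx y hy a b ha hb hab
    obtain rfl : b = 1 - a := by linarith
    have hx' : 0 < f x := hx
    have hy' : 0 < f y := hy
    have := hf x y a ha (by linarith)
    exact lt_of_lt_of_le (by positivity) this
  set T := interior S
  have hTc : Convex ℝ T := hSc.interior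
  have hTo : IsOpen T := isOpen_interior
  have hTS : ∀ x ∈ T, 0 < f x := by
    intro x hx
    have h : x ∈ S := interior_subset hx
    exact h
  have hcont : ContinuousOn f T := by
    have hconc : ConcaveOn ℝ T (fun x => Real.log (f x)) := by
      refine ⟨hTc, ?_⟩
      intro x hx y hy a b ha hb hab
      obtain rfl : b = 1 - a := by linarith
      have hx' := hTS x hx
      have hy' := hTS y hy
      have := hf x y a ha (by linarith)
      have h2 := Real.log_le_log (by positivity) this
      rw [Real.log_mul (by positivity) (by positivity), Real.log_rpow hx', Real.log_rpow hy'] at h2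
      simpa using h2
    have := hconc.continuousOn hTo
    refine (Real.continuous_exp.comp_continuousOn this).congr ?_
    intro x hx
    simp [Real.exp_log (hTS x hx)]
  set g : EuclideanSpace ℝ (Fin n) → ℝ≥0∞ := T.indicator fun x => ENNReal.ofReal (f x) with hgd
  have hg : Measurable g := by
    classical
    have h1 : ContinuousOn (fun x => ENNReal.ofReal (f x)) T :=
      ENNReal.continuous_ofReal.comp_continuousOn hcont
    have := h1.measurable_piecewise (g := fun _ => (0:ℝ≥0∞)) continuousOn_const hTo.measurableSet
    convert this using 1
    ext x
    simp [g, Set.indicator, Set.piecewise]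
  have hae : (fun x => ENNReal.ofReal (f x)) =ᵐ[volume] g := by
    have : ∀ᵐ x ∂(volume : Measure (EuclideanSpace ℝ (Fin n))), x ∉ frontier S :=
      measure_eq_zero_iff_ae_notMem.1 (hSc.addHaar_frontier volume)
    filter_upwards [this] with x hx
    by_cases hxT : x ∈ T
    · simp [g, hxT]
    · have : x ∉ S := fun h => hx ⟨subset_closure h, hxT⟩
      have : f x = 0 := le_antisymm (not_lt.1 this) (hf0 x)
      simp [g, this, hxT]
  rw [withDensity_congr_ae hae]
  apply isLC_of_density g hg
  intro l hl0 hl1 x y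
  by_cases hx : x ∈ T
  · by_cases hy : y ∈ T
    · have hm : l • x + (1 - l) • y ∈ T := hTc hx hy hl0.le (by linarith) (by ring)
      simp only [g, Set.indicator_of_mem hx, Set.indicator_of_mem hy, Set.indicator_of_mem hm]
      rw [ENNReal.ofReal_rpow_of_nonneg (hf0 x) hl0.le,
        ENNReal.ofReal_rpow_of_nonneg (hf0 y) (by linarith), ← ENNReal.ofReal_mul]
      · exact ENNReal.ofReal_le_ofReal (hf x y l hl0.le hl1.le)
      · have := hf0 x
        positivity
    · have : 0 < 1 - l := by linarith
      simp [g, hy, this]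
  · simp [g, hx, hl0]

lemma IsLC.sets {n : ℕ} {μ : Measure (EuclideanSpace ℝ (Fin n))} (hμ : IsLC μ) {l : ℝ} (hl0 : 0 < l)
    (hl1 : l < 1) {S K H : Set (EuclideanSpace ℝ (Fin n))} (hS : MeasurableSet S)
    (hK : MeasurableSet K) (hH : MeasurableSet H)
    (h : ∀ x ∈ S, ∀ y ∈ K, l • x + (1 - l) • y ∈ H) :
    μ S ^ l * μ K ^ (1 - l) ≤ μ H := by
  have := hμ l hl0 hl1 (S.indicator 1) (K.indicator 1) (H.indicator 1)
    (measurable_one.indicator hS) (measurable_one.indicator hK) (measurable_one.indicator hH) ?_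
  · rwa [lintegral_indicator_one hS, lintegral_indicator_one hK, lintegral_indicator_one hH] at this
  · intro x y
    have h0 : 0 < 1 - l := by linarith
    by_cases hx : x ∈ S
    · by_cases hy : y ∈ K
      · simp [hx, hy, h x hx y hy]
      · simp [hy, h0]
    · simp [hx, hl0]

lemma chebyshev_dir {n : ℕ} (μ : Measure (EuclideanSpace ℝ (Fin n))) [IsProbabilityMeasure μ]
    (v : EuclideanSpace ℝ (Fin n)) (hi : Integrable (fun x => ⟪x, v⟫ ^ 2) μ)
    (h2 : ∫ x, ⟪x, v⟫ ^ 2 ∂μ ≤ 1) :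
    μ.real {x | 2 ≤ |⟪x, v⟫|} ≤ 1 / 4 := by
  have := mul_meas_ge_le_integral_of_nonneg (μ := μ) (f := fun x => ⟪x, v⟫ ^ 2)
    (Filter.Eventually.of_forall fun x => sq_nonneg _) hi 4
  have e : {x | 2 ≤ |⟪x, v⟫|} = {x : EuclideanSpace ℝ (Fin n) | (4:ℝ) ≤ ⟪x, v⟫ ^ 2} := by
    ext x
    simp only [Set.mem_ofPred_eq]
    rw [← sq_abs, show (4:ℝ) = 2 ^ 2 by norm_num, sq_le_sq, abs_abs, abs_two]
  rw [e]
  linarith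

lemma dir_tail {n : ℕ} {μ : Measure (EuclideanSpace ℝ (Fin n))} [IsProbabilityMeasure μ]
    (hμ : IsLC μ) (v : EuclideanSpace ℝ (Fin n)) (hi : Integrable (fun x => ⟪x, v⟫ ^ 2) μ)
    (h2 : ∫ x, ⟪x, v⟫ ^ 2 ∂μ ≤ 1) (s : ℝ) :
    μ.real {x | s ≤ |⟪x, v⟫|} ≤ 2 * rexp (-s / 4) := by
  by_cases hs : s ≤ 2
  · have h1 : μ.real {x | s ≤ |⟪x, v⟫|} ≤ 1 := measureReal_le_one
    have h3 : -s/4 + 1 ≤ rexp (-s/4) := Real.add_one_le_exp _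
    linarith
  push Not at hs
  have hm : Measurable fun x : EuclideanSpace ℝ (Fin n) => |⟪x, v⟫| := by fun_prop
  set l := 4 / (s + 2) with hl
  have hl0 : 0 < l := by positivity
  have hl1 : l < 1 := by rw [hl, div_lt_one (by linarith)]; linarith
  have hls : l * (s + 2) = 4 := by rw [hl]; field_simp
  have hH := chebyshev_dir μ v hi h2
  set K := {x : EuclideanSpace ℝ (Fin n) | |⟪x, v⟫| < 2}
  have hKm : MeasurableSet K := measurableSet_lt hm measurable_const
  have hK : 3 / 4 ≤ μ.real K := by
    have : K = {x : EuclideanSpace ℝ (Fin n) | 2 ≤ |⟪x, v⟫|}ᶜ := by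
      ext x; simp [K]
    rw [this, probReal_compl_eq_one_sub (measurableSet_le measurable_const hm)]
    linarith
  have key := hμ.sets hl0 hl1 (S := {x | s ≤ |⟪x, v⟫|}) (K := K) (H := {x | 2 ≤ |⟪x, v⟫|})
    (measurableSet_le measurable_const hm) hKm (measurableSet_le measurable_const hm) (by
      intro x hx y hy
      simp only [Set.mem_ofPred_eq, K] at *
      rw [inner_add_left, real_inner_smul_left, real_inner_smul_left]
      have h1 : |l * ⟪x, v⟫| = l * |⟪x, v⟫| := by rw [abs_mul, abs_of_pos hl0]
      have h2 : |(1 - l) * ⟪y, v⟫| = (1 - l) * |⟪y, v⟫| := by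
        rw [abs_mul, abs_of_pos (by linarith)]
      have h3 := abs_sub_abs_le_abs_sub (l * ⟪x, v⟫) (-((1 - l) * ⟪y, v⟫))
      rw [abs_neg, sub_neg_eq_add, h1, h2] at h3
      nlinarith)
  have key' : μ.real {x | s ≤ |⟪x, v⟫|} ^ l * μ.real K ^ (1 - l) ≤ μ.real {x | 2 ≤ |⟪x, v⟫|} := by
    have := ENNReal.toReal_mono (measure_ne_top _ _) key
    rwa [ENNReal.toReal_mul, ← ENNReal.toReal_rpow, ← ENNReal.toReal_rpow] at this
  set p := μ.real {x | s ≤ |⟪x, v⟫|} with hp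
  have hp0 : 0 ≤ p := measureReal_nonneg
  have h34 : (3/4:ℝ) ≤ μ.real K ^ (1 - l) := by
    calc (3/4:ℝ) = (3/4) ^ (1:ℝ) := by simp
      _ ≤ (3/4) ^ (1 - l) := Real.rpow_le_rpow_of_exponent_ge (by norm_num) (by norm_num) (by linarith)
      _ ≤ _ := by gcongr
  have h13 : p ^ l ≤ 1 / 3 := by
    have : 0 ≤ p ^ l := by positivity
    nlinarith
  have : p ≤ (1/3) ^ ((s+2)/4) := by
    calc p = (p ^ l) ^ ((s+2)/4) := by
          rw [← Real.rpow_mul hp0, show l * ((s+2)/4) = 1 by rw [hl]; field_simp, Real.rpow_one]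
      _ ≤ _ := by gcongr
  refine this.trans ?_
  have h3 : (1/3:ℝ) ≤ rexp (-1) := by
    rw [Real.exp_neg, one_div]
    exact inv_anti₀ (Real.exp_pos _) (by linarith [Real.exp_one_lt_d9])
  calc (1/3:ℝ) ^ ((s+2)/4) ≤ rexp (-1) ^ ((s+2)/4) := by gcongr
    _ = rexp (-((s+2)/4)) := by rw [← Real.exp_mul]; ring_nf
    _ ≤ rexp (-s/4) := by gcongr; linarith
    _ ≤ _ := by linarith [Real.exp_pos (-s/4)]

lemma exp_moment_exists : ∃ C0 : ℝ, 1 ≤ C0 ∧ ∀ (n : ℕ) (μ : Measure (EuclideanSpace ℝ (Fin n))),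
    IsProbabilityMeasure μ → IsLC μ → ∀ v : EuclideanSpace ℝ (Fin n),
    Integrable (fun x => ⟪x, v⟫ ^ 2) μ → ∫ x, ⟪x, v⟫ ^ 2 ∂μ ≤ 1 →
    Integrable (fun x => rexp (|⟪x, v⟫| / 8)) μ ∧ ∫ x, rexp (|⟪x, v⟫| / 8) ∂μ ≤ C0 := by
  have hsum : Summable fun j : ℕ => 2 * rexp (1/8) * rexp (-1/8) ^ j := by
    refine (summable_geometric_of_lt_one (by positivity) ?_).mul_left _
    rw [Real.exp_lt_one_iff]; norm_num
  refine ⟨max 1 (∑' j : ℕ, 2 * rexp (1/8) * rexp (-1/8) ^ j), le_max_left _ _, ?_⟩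
  intro n μ _ hμ v hi h2
  have hm : Measurable fun x : EuclideanSpace ℝ (Fin n) => |⟪x, v⟫| := by fun_prop
  have hb : ∫⁻ x, ENNReal.ofReal (rexp (|⟪x, v⟫| / 8)) ∂μ ≤
      ENNReal.ofReal (∑' j : ℕ, 2 * rexp (1/8) * rexp (-1/8) ^ j) := by
    calc _ ≤ ∫⁻ x, ∑' j : ℕ, ({x | (j:ℝ) ≤ |⟪x, v⟫|} : Set (EuclideanSpace ℝ (Fin n))).indicator
            (fun _ => ENNReal.ofReal (rexp ((j + 1)/8))) x ∂μ := by
          apply lintegral_mono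
          intro x
          refine le_trans ?_ (ENNReal.le_tsum ⌊|⟪x, v⟫|⌋₊)
          have hmem : x ∈ {y : EuclideanSpace ℝ (Fin n) | ((⌊|⟪x, v⟫|⌋₊ : ℕ) : ℝ) ≤ |⟪y, v⟫|} :=
            Nat.floor_le (abs_nonneg (⟪x, v⟫ : ℝ))
          rw [Set.indicator_of_mem hmem]
          apply ENNReal.ofReal_le_ofReal
          apply Real.exp_le_exp.2
          have := (Nat.lt_floor_add_one |⟪x, v⟫|).le
          gcongr
      _ = ∑' j : ℕ, ENNReal.ofReal (rexp ((j + 1)/8)) * μ {x | (j:ℝ) ≤ |⟪x, v⟫|} := by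
          rw [lintegral_tsum]
          · congr 1
            ext j
            rw [lintegral_indicator_const (measurableSet_le measurable_const hm)]
          · intro j
            exact (measurable_const.indicator (measurableSet_le measurable_const hm)).aemeasurable
      _ ≤ ∑' j : ℕ, ENNReal.ofReal (2 * rexp (1/8) * rexp (-1/8) ^ j) := by
          refine ENNReal.tsum_le_tsum fun j => ?_
          rw [← ofReal_measureReal, ← ENNReal.ofReal_mul (by positivity)]
          apply ENNReal.ofReal_le_ofReal
          calc _ ≤ rexp ((j+1)/8) * (2 * rexp (-j/4)) := by
                gcongr; exact dir_tail hμ v hi h2 j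
            _ = _ := by
                rw [← Real.exp_nat_mul, mul_left_comm, ← Real.exp_add, mul_assoc, ← Real.exp_add]
                ring_nf
      _ = _ := by
          rw [ENNReal.ofReal_tsum_of_nonneg (by intros; positivity) hsum]
  have hme : AEStronglyMeasurable (fun x => rexp (|⟪x, v⟫| / 8)) μ := by
    apply Measurable.aestronglyMeasurable; fun_prop
  constructor
  · refine ⟨hme, ?_⟩
    rw [hasFiniteIntegral_iff_ofReal (Filter.Eventually.of_forall fun x => by positivity)]
    exact hb.trans_lt ENNReal.ofReal_lt_top
  · refine le_trans ?_ (le_max_right _ _)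
    rw [integral_eq_lintegral_of_nonneg_ae (Filter.Eventually.of_forall fun x => by positivity) hme]
    exact ENNReal.toReal_le_of_le_ofReal (tsum_nonneg (by intros; positivity)) hb

end

section

structure IsoLC {n : ℕ} (μ : Measure (EuclideanSpace ℝ (Fin n))) : Prop where
  prob : IsProbabilityMeasure μ
  lc : IsLC μ
  int : ∀ v, Integrable (fun x => ⟪x, v⟫ ^ 2) μ
  iso : ∀ v, ∫ x, ⟪x, v⟫ ^ 2 ∂μ = ‖v‖ ^ 2

noncomputable def mulG {n k : ℕ} (Γ : Fin n → EuclideanSpace ℝ (Fin k)) (x : EuclideanSpace ℝ (Fin n)) :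
    EuclideanSpace ℝ (Fin k) := ∑ j, x j • Γ j

noncomputable def rowG {n k : ℕ} (Γ : Fin n → EuclideanSpace ℝ (Fin k)) (i : Fin k) :
    EuclideanSpace ℝ (Fin n) := WithLp.toLp 2 fun j => Γ j i

noncomputable def hsq {n k : ℕ} (Γ : Fin n → EuclideanSpace ℝ (Fin k)) : ℝ := ∑ j, ‖Γ j‖ ^ 2

lemma hsq_nonneg {n k : ℕ} (Γ : Fin n → EuclideanSpace ℝ (Fin k)) : 0 ≤ hsq Γ :=
  Finset.sum_nonneg fun _ _ => sq_nonneg _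

lemma mulG_apply {n k : ℕ} (Γ : Fin n → EuclideanSpace ℝ (Fin k)) (x : EuclideanSpace ℝ (Fin n))
    (i : Fin k) : mulG Γ x i = ⟪x, rowG Γ i⟫ := by
  simp [mulG, rowG, PiLp.inner_apply, mul_comm]

lemma mulG_add {n k : ℕ} (Γ D : Fin n → EuclideanSpace ℝ (Fin k)) (x : EuclideanSpace ℝ (Fin n)) :
    mulG (Γ + D) x = mulG Γ x + mulG D x := by
  simp [mulG, Finset.sum_add_distrib]

lemma mulG_lin {n k : ℕ} (Γ : Fin n → EuclideanSpace ℝ (Fin k)) (a b : ℝ)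
    (x y : EuclideanSpace ℝ (Fin n)) :
    mulG Γ (a • x + b • y) = a • mulG Γ x + b • mulG Γ y := by
  simp [mulG, Finset.sum_add_distrib, add_smul, Finset.smul_sum, smul_smul]

lemma continuous_mulG {n k : ℕ} : Continuous fun p : (Fin n → EuclideanSpace ℝ (Fin k)) ×
    EuclideanSpace ℝ (Fin n) => mulG p.1 p.2 := by
  unfold mulG; fun_prop

lemma continuous_mulG_right {n k : ℕ} (Γ : Fin n → EuclideanSpace ℝ (Fin k)) :
    Continuous fun x => mulG Γ x := by
  unfold mulG; fun_prop

lemma norm_mulG_sq {n k : ℕ} (Γ : Fin n → EuclideanSpace ℝ (Fin k)) (x : EuclideanSpace ℝ (Fin n)) :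
    ‖mulG Γ x‖ ^ 2 = ∑ i, ⟪x, rowG Γ i⟫ ^ 2 := by
  rw [EuclideanSpace.norm_sq_eq]
  simp [mulG_apply]

lemma sum_row_sq {n k : ℕ} (Γ : Fin n → EuclideanSpace ℝ (Fin k)) :
    ∑ i, ‖rowG Γ i‖ ^ 2 = hsq Γ := by
  simp only [hsq, EuclideanSpace.norm_sq_eq, rowG]
  rw [Finset.sum_comm]

noncomputable def pot {n k : ℕ} (Γ : Fin n → EuclideanSpace ℝ (Fin k)) (y : EuclideanSpace ℝ (Fin k))
    (x : EuclideanSpace ℝ (Fin n)) : ℝ := ‖y - mulG Γ x‖ ^ 2 / (2 * n)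

noncomputable def Wf {n k : ℕ} (μ : Measure (EuclideanSpace ℝ (Fin n)))
    (Γ : Fin n → EuclideanSpace ℝ (Fin k)) (y : EuclideanSpace ℝ (Fin k)) : ℝ :=
  ∫ x, rexp (-pot Γ y x) ∂μ

lemma pot_nonneg {n k : ℕ} (Γ : Fin n → EuclideanSpace ℝ (Fin k)) (y : EuclideanSpace ℝ (Fin k))
    (x : EuclideanSpace ℝ (Fin n)) : 0 ≤ pot Γ y x := by
  unfold pot; positivity

lemma continuous_pot {n k : ℕ} (Γ : Fin n → EuclideanSpace ℝ (Fin k)) (y : EuclideanSpace ℝ (Fin k)) :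
    Continuous (pot Γ y) := by
  unfold pot
  have := continuous_mulG_right Γ
  fun_prop

lemma bdd_mul_int {α : Type*} [MeasurableSpace α] {μ : Measure α} {f V : α → ℝ}
    (hf : Integrable f μ) (hV : Measurable V) (h0 : ∀ x, 0 ≤ V x) :
    Integrable (fun x => f x * rexp (-V x)) μ := by
  refine hf.mono (hf.aestronglyMeasurable.mul (by fun_prop)) (Filter.Eventually.of_forall fun x => ?_)
  rw [norm_mul]
  apply mul_le_of_le_one_right (norm_nonneg _)
  rw [Real.norm_of_nonneg (Real.exp_pos _).le]
  exact Real.exp_le_one_iff.2 (by linarith [h0 x])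

lemma exp_jensen {α : Type*} [MeasurableSpace α] {μ : Measure α} {F Δ : α → ℝ} {a : ℝ}
    (hF : Integrable F μ) (hF0 : ∀ x, 0 ≤ F x) (hΔ : Integrable (fun x => Δ x * F x) μ)
    (hE : Integrable (fun x => F x * rexp (-Δ x)) μ) (h : ∫ x, Δ x * F x ∂μ ≤ a * ∫ x, F x ∂μ) :
    rexp (-a) * ∫ x, F x ∂μ ≤ ∫ x, F x * rexp (-Δ x) ∂μ := by
  calc rexp (-a) * ∫ x, F x ∂μ
      ≤ rexp (-a) * (∫ x, F x ∂μ - (∫ x, Δ x * F x ∂μ - a * ∫ x, F x ∂μ)) := by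
        gcongr; linarith
    _ = ∫ x, rexp (-a) * (F x - (Δ x * F x - a * F x)) ∂μ := by
        have h1 : Integrable (fun x => Δ x * F x - a * F x) μ := hΔ.sub (hF.const_mul a)
        rw [integral_const_mul, integral_sub hF h1,
          integral_sub hΔ (hF.const_mul a), integral_const_mul]
    _ ≤ _ := by
        refine integral_mono ((hF.sub (hΔ.sub (hF.const_mul a))).const_mul _) hE fun x => ?_
        have h1 : rexp (-Δ x) = rexp (-a) * rexp (-(Δ x - a)) := by rw [← Real.exp_add]; ring_nf
        have h2 : -(Δ x - a) + 1 ≤ rexp (-(Δ x - a)) := Real.add_one_le_exp _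
        simp only
        rw [h1]
        have h3 : F x * (-(Δ x - a) + 1) ≤ F x * rexp (-(Δ x - a)) :=
          mul_le_mul_of_nonneg_left h2 (hF0 x)
        have h4 := mul_le_mul_of_nonneg_left h3 (Real.exp_pos (-a)).le
        linarith

section
variable {n k : ℕ} {μ : Measure (EuclideanSpace ℝ (Fin n))}

lemma IsoLC.int_mulG (hμ : IsoLC μ) (Γ : Fin n → EuclideanSpace ℝ (Fin k)) :
    Integrable (fun x => ‖mulG Γ x‖ ^ 2) μ := by
  simp only [norm_mulG_sq]
  exact integrable_finsetSum _ fun i _ => hμ.int _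

lemma IsoLC.integral_mulG (hμ : IsoLC μ) (Γ : Fin n → EuclideanSpace ℝ (Fin k)) :
    ∫ x, ‖mulG Γ x‖ ^ 2 ∂μ = hsq Γ := by
  simp only [norm_mulG_sq]
  rw [integral_finsetSum _ fun i _ => hμ.int _]
  simp only [hμ.iso]
  exact sum_row_sq Γ

lemma pot_le (Γ : Fin n → EuclideanSpace ℝ (Fin k)) (y : EuclideanSpace ℝ (Fin k))
    (x : EuclideanSpace ℝ (Fin n)) : pot Γ y x ≤ (‖y‖ ^ 2 + ‖mulG Γ x‖ ^ 2) / n := by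
  have h1 := norm_sub_le y (mulG Γ x)
  have h2 : ‖y - mulG Γ x‖ ^ 2 ≤ 2 * (‖y‖ ^ 2 + ‖mulG Γ x‖ ^ 2) := by
    have := norm_nonneg (y - mulG Γ x)
    nlinarith [sq_nonneg (‖y‖ - ‖mulG Γ x‖)]
  rw [pot, ← div_div]
  gcongr
  linarith

lemma IsoLC.int_pot (hμ : IsoLC μ) (Γ : Fin n → EuclideanSpace ℝ (Fin k))
    (y : EuclideanSpace ℝ (Fin k)) : Integrable (pot Γ y) μ := by
  have := hμ.prob
  refine Integrable.mono' (g := fun x => (‖y‖ ^ 2 + ‖mulG Γ x‖ ^ 2) / n) ?_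
    (continuous_pot Γ y).aestronglyMeasurable (Filter.Eventually.of_forall fun x => ?_)
  · exact ((integrable_const _).add (hμ.int_mulG Γ)).div_const _
  · rw [Real.norm_of_nonneg (pot_nonneg _ _ _)]
    exact pot_le Γ y x

lemma IsoLC.integral_pot (hμ : IsoLC μ) (Γ : Fin n → EuclideanSpace ℝ (Fin k))
    (y : EuclideanSpace ℝ (Fin k)) : ∫ x, pot Γ y x ∂μ ≤ (‖y‖ ^ 2 + hsq Γ) / n := by
  have := hμ.prob
  calc _ ≤ ∫ x, (‖y‖ ^ 2 + ‖mulG Γ x‖ ^ 2) / n ∂μ :=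
        integral_mono (hμ.int_pot Γ y) (((integrable_const _).add (hμ.int_mulG Γ)).div_const _)
          (pot_le Γ y)
    _ = _ := by
        rw [integral_div, integral_add (integrable_const _) (hμ.int_mulG Γ), hμ.integral_mulG]
        simp

lemma IsoLC.int_exp (hμ : IsoLC μ) (Γ : Fin n → EuclideanSpace ℝ (Fin k))
    (y : EuclideanSpace ℝ (Fin k)) : Integrable (fun x => rexp (-pot Γ y x)) μ := by
  have := hμ.prob
  have := bdd_mul_int (μ := μ) (integrable_const (1:ℝ)) (continuous_pot Γ y).measurable (pot_nonneg Γ y)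
  simpa using this

lemma IsoLC.W_lower (hμ : IsoLC μ) (Γ : Fin n → EuclideanSpace ℝ (Fin k))
    (y : EuclideanSpace ℝ (Fin k)) {a : ℝ} (ha : (‖y‖ ^ 2 + hsq Γ) / n ≤ a) :
    rexp (-a) ≤ Wf μ Γ y := by
  have := hμ.prob
  have := exp_jensen (μ := μ) (F := fun _ => 1) (Δ := pot Γ y) (a := a) (integrable_const _)
    (fun _ => zero_le_one) (by simpa using hμ.int_pot Γ y) (by simpa using hμ.int_exp Γ y)
    (by simpa using (hμ.integral_pot Γ y).trans ha)
  simpa [Wf] using this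

lemma IsoLC.W_pot (hμ : IsoLC μ) (Γ : Fin n → EuclideanSpace ℝ (Fin k))
    (y : EuclideanSpace ℝ (Fin k)) {a : ℝ} (ha : (‖y‖ ^ 2 + hsq Γ) / n ≤ a) :
    ∫ x, pot Γ y x * rexp (-pot Γ y x) ∂μ ≤ (a + 1) * Wf μ Γ y := by
  have := hμ.prob
  calc _ ≤ ∫ x, (a * rexp (-pot Γ y x) + rexp (-a)) ∂μ := by
        refine integral_mono (bdd_mul_int (hμ.int_pot Γ y) (continuous_pot Γ y).measurable
          (pot_nonneg Γ y)) (((hμ.int_exp Γ y).const_mul a).add (integrable_const _)) fun x => ?_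
        have h1 : pot Γ y x - a + 1 ≤ rexp (pot Γ y x - a) := Real.add_one_le_exp _
        have h2 : rexp (-a) = rexp (pot Γ y x - a) * rexp (-pot Γ y x) := by
          rw [← Real.exp_add]; ring_nf
        simp only
        rw [h2]
        nlinarith [Real.exp_pos (-pot Γ y x)]
    _ = a * Wf μ Γ y + rexp (-a) := by
        rw [integral_add ((hμ.int_exp Γ y).const_mul a) (integrable_const _), integral_const_mul]
        simp [Wf]
    _ ≤ _ := by linarith [hμ.W_lower Γ y ha]

lemma sq_le_aux (U a : ℝ) (hU : 0 ≤ U) : U ^ 2 ≤ 2 * a ^ 2 + 4 * rexp (U - a) := by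
  by_cases h : U ≤ a
  · nlinarith [Real.exp_pos (U - a)]
  · push Not at h
    have := Real.quadratic_le_exp_of_nonneg (show 0 ≤ U - a by linarith)
    nlinarith [sq_nonneg (U - a - a)]

lemma IsoLC.W_dir (hμ : IsoLC μ) {C0 : ℝ}
    (hC0 : ∀ v : EuclideanSpace ℝ (Fin n),
    Integrable (fun x => ⟪x, v⟫ ^ 2) μ → ∫ x, ⟪x, v⟫ ^ 2 ∂μ ≤ 1 →
    Integrable (fun x => rexp (|⟪x, v⟫| / 8)) μ ∧ ∫ x, rexp (|⟪x, v⟫| / 8) ∂μ ≤ C0)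
    (Γ : Fin n → EuclideanSpace ℝ (Fin k))
    (y : EuclideanSpace ℝ (Fin k)) {a : ℝ} (ha : (‖y‖ ^ 2 + hsq Γ) / n ≤ a)
    (v : EuclideanSpace ℝ (Fin n)) :
    ∫ x, ⟪x, v⟫ ^ 2 * rexp (-pot Γ y x) ∂μ ≤ 64 * (2 * a ^ 2 + 4 * C0) * ‖v‖ ^ 2 * Wf μ Γ y := by
  have := hμ.prob
  have key : ∀ v : EuclideanSpace ℝ (Fin n), ‖v‖ = 1 →
      ∫ x, ⟪x, v⟫ ^ 2 * rexp (-pot Γ y x) ∂μ ≤ 64 * (2 * a ^ 2 + 4 * C0) * Wf μ Γ y := by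
    intro v hv
    obtain ⟨hi, hb⟩ := hC0 v (hμ.int v) (by rw [hμ.iso, hv]; norm_num)
    calc _ ≤ ∫ x, (128 * a ^ 2 * rexp (-pot Γ y x) + 256 * rexp (-a) * rexp (|⟪x, v⟫| / 8)) ∂μ := by
          refine integral_mono (bdd_mul_int (hμ.int v) (continuous_pot Γ y).measurable
            (pot_nonneg Γ y)) (((hμ.int_exp Γ y).const_mul _).add (hi.const_mul _)) fun x => ?_
          simp only
          have h1 := sq_le_aux (|⟪x, v⟫| / 8) a (by positivity)
          rw [div_pow, sq_abs, sub_eq_neg_add, Real.exp_add] at h1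
          have h2 : rexp (-pot Γ y x) ≤ 1 := Real.exp_le_one_iff.2 (by linarith [pot_nonneg Γ y x])
          have h3 := Real.exp_pos (-pot Γ y x)
          have h4 : 0 < rexp (-a) * rexp (|⟪x, v⟫| / 8) := by positivity
          calc _ ≤ (128 * a ^ 2 + 256 * (rexp (-a) * rexp (|⟪x, v⟫| / 8))) * rexp (-pot Γ y x) := by
                gcongr; linarith
            _ ≤ _ := by nlinarith
      _ = 128 * a ^ 2 * Wf μ Γ y + 256 * rexp (-a) * ∫ x, rexp (|⟪x, v⟫| / 8) ∂μ := by
          rw [integral_add ((hμ.int_exp Γ y).const_mul _) (hi.const_mul _), integral_const_mul,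
            integral_const_mul, Wf]
      _ ≤ 128 * a ^ 2 * Wf μ Γ y + 256 * Wf μ Γ y * C0 := by
          have h0 : 0 ≤ ∫ x, rexp (|⟪x, v⟫| / 8) ∂μ := integral_nonneg fun _ => (Real.exp_pos _).le
          have h1 := hμ.W_lower Γ y ha
          have h2 := Real.exp_pos (-a)
          have h3 : rexp (-a) * ∫ x, rexp (|⟪x, v⟫| / 8) ∂μ ≤ Wf μ Γ y * C0 :=
            mul_le_mul h1 hb h0 (by linarith)
          linarith
      _ = _ := by ring
  by_cases hv : v = 0
  · simp [hv]
  have hv' : 0 < ‖v‖ := norm_pos_iff.2 hv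
  have := key (‖v‖⁻¹ • v) (by rw [norm_smul, norm_inv, norm_norm, inv_mul_cancel₀ hv'.ne'])
  have e : ∀ x : EuclideanSpace ℝ (Fin n), ⟪x, v⟫ ^ 2 * rexp (-pot Γ y x)
      = ‖v‖ ^ 2 * (⟪x, ‖v‖⁻¹ • v⟫ ^ 2 * rexp (-pot Γ y x)) := by
    intro x
    rw [real_inner_smul_right]
    field_simp
  simp only [e]
  rw [integral_const_mul]
  calc _ ≤ ‖v‖ ^ 2 * (64 * (2 * a ^ 2 + 4 * C0) * Wf μ Γ y) := by gcongr
    _ = _ := by ring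

lemma IsoLC.stability (hμ : IsoLC μ) {C0 : ℝ} (h1C0 : 1 ≤ C0)
    (hC0 : ∀ v : EuclideanSpace ℝ (Fin n),
    Integrable (fun x => ⟪x, v⟫ ^ 2) μ → ∫ x, ⟪x, v⟫ ^ 2 ∂μ ≤ 1 →
    Integrable (fun x => rexp (|⟪x, v⟫| / 8)) μ ∧ ∫ x, rexp (|⟪x, v⟫| / 8) ∂μ ≤ C0)
    (hn : 0 < n) (Γ D : Fin n → EuclideanSpace ℝ (Fin k))
    (y : EuclideanSpace ℝ (Fin k)) {a C3 : ℝ} (ha : (‖y‖ ^ 2 + hsq Γ) / n ≤ a)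
    (hC3 : C3 = 64 * (2 * a ^ 2 + 4 * C0)) (hCn : 4 * C3 ≤ n) :
    rexp (-(4 * C3 / n * (a + 1) + hsq D / 4)) * Wf μ Γ y ≤ Wf μ (Γ + D) y := by
  have := hμ.prob
  have hn' : (0:ℝ) < n := by exact_mod_cast hn
  have hC3p : 0 < C3 := by rw [hC3]; positivity
  have hDint : ∫ x, ‖mulG D x‖ ^ 2 * rexp (-pot Γ y x) ∂μ ≤ C3 * hsq D * Wf μ Γ y := by
    simp only [norm_mulG_sq, Finset.sum_mul]
    rw [integral_finsetSum]
    · calc _ ≤ ∑ i, 64 * (2 * a ^ 2 + 4 * C0) * ‖rowG D i‖ ^ 2 * Wf μ Γ y :=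
            Finset.sum_le_sum fun i _ => hμ.W_dir hC0 Γ y ha _
        _ = _ := by
            rw [← Finset.sum_mul, ← Finset.mul_sum, sum_row_sq, hC3]
    · intro i _
      exact bdd_mul_int (hμ.int _) (continuous_pot Γ y).measurable (pot_nonneg Γ y)
  have hDi : Integrable (fun x => ‖mulG D x‖ ^ 2 * rexp (-pot Γ y x)) μ :=
    bdd_mul_int (hμ.int_mulG D) (continuous_pot Γ y).measurable (pot_nonneg Γ y)
  have hVi : Integrable (fun x => pot Γ y x * rexp (-pot Γ y x)) μ :=
    bdd_mul_int (hμ.int_pot Γ y) (continuous_pot Γ y).measurable (pot_nonneg Γ y)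
  have hΔi : Integrable (fun x => (pot (Γ + D) y x - pot Γ y x) * rexp (-pot Γ y x)) μ :=
    bdd_mul_int ((hμ.int_pot _ y).sub (hμ.int_pot Γ y)) (continuous_pot Γ y).measurable (pot_nonneg Γ y)
  have hW0 : 0 ≤ Wf μ Γ y := integral_nonneg fun _ => (Real.exp_pos _).le
  have hee : ∀ x, rexp (-pot Γ y x) * rexp (-(pot (Γ + D) y x - pot Γ y x)) = rexp (-pot (Γ + D) y x) := by
    intro x; rw [← Real.exp_add]; ring_nf
  set τ := 4 * C3 / n with hτ
  have hτp : 0 < τ := by positivity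
  have hτn : τ * n = 4 * C3 := by rw [hτ]; field_simp
  have main := exp_jensen (μ := μ) (F := fun x => rexp (-pot Γ y x))
    (Δ := fun x => pot (Γ + D) y x - pot Γ y x) (a := τ * (a + 1) + hsq D / 4)
    (hμ.int_exp Γ y) (fun _ => (Real.exp_pos _).le) hΔi (by simp only [hee]; exact hμ.int_exp _ y) ?_
  · simp only [hee] at main
    exact main
  calc _ ≤ ∫ x, (τ * (pot Γ y x * rexp (-pot Γ y x)) +
            (1 / (2 * τ * n) + 1 / (2 * n)) * (‖mulG D x‖ ^ 2 * rexp (-pot Γ y x))) ∂μ := by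
        refine integral_mono hΔi ((hVi.const_mul _).add (hDi.const_mul _)) fun x => ?_
        simp only
        rw [← mul_assoc, ← mul_assoc, ← add_mul]
        refine mul_le_mul_of_nonneg_right ?_ (Real.exp_pos _).le
        simp only [pot, mulG_add]
        set u := y - mulG Γ x
        set w := mulG D x
        have h1 : y - (mulG Γ x + w) = u - w := by simp only [u]; abel
        rw [h1, norm_sub_sq_real]
        have h2 : -(‖u‖ * ‖w‖) ≤ ⟪u, w⟫ := by
          have := abs_real_inner_le_norm u w
          exact (abs_le.1 this).1
        have h3 : 2 * (‖u‖ * ‖w‖) ≤ τ * ‖u‖ ^ 2 + ‖w‖ ^ 2 / τ := by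
          have : τ * ‖u‖ ^ 2 + ‖w‖ ^ 2 / τ - 2 * (‖u‖ * ‖w‖) = τ * (‖u‖ - ‖w‖ / τ) ^ 2 := by
            field_simp; ring
          have h5 : 0 ≤ τ * (‖u‖ - ‖w‖ / τ) ^ 2 := by positivity
          linarith
        have e : τ * (‖u‖ ^ 2 / (2 * n)) + (1 / (2 * τ * n) + 1 / (2 * n)) * ‖w‖ ^ 2 =
            (τ * ‖u‖ ^ 2 + ‖w‖ ^ 2 / τ + ‖w‖ ^ 2) / (2 * n) := by field_simp; ring
        rw [e, ← sub_div]
        gcongr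
        linarith
    _ = τ * ∫ x, (pot Γ y x * rexp (-pot Γ y x)) ∂μ +
            (1 / (2 * τ * n) + 1 / (2 * n)) * ∫ x, (‖mulG D x‖ ^ 2 * rexp (-pot Γ y x)) ∂μ := by
        rw [integral_add (hVi.const_mul _) (hDi.const_mul _), integral_const_mul, integral_const_mul]
    _ ≤ τ * ((a + 1) * Wf μ Γ y) + (1 / (2 * τ * n) + 1 / (2 * n)) * (C3 * hsq D * Wf μ Γ y) := by
        have := hμ.W_pot Γ y ha
        gcongr
    _ ≤ τ * ((a + 1) * Wf μ Γ y) + 1 / 4 * (hsq D * Wf μ Γ y) := by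
        have h1 : (1 / (2 * τ * n) + 1 / (2 * n)) * C3 ≤ 1 / 4 := by
          have e1 : 1 / (2 * τ * n) * C3 = 1 / 8 := by
            rw [mul_assoc 2 τ, hτn]; field_simp; norm_num
          have e2 : 1 / (2 * n) * C3 ≤ 1 / 8 := by
            rw [div_mul_eq_mul_div, one_mul, div_le_iff₀ (by positivity)]; linarith
          rw [add_mul, e1]; linarith
        have h2 : 0 ≤ hsq D * Wf μ Γ y := mul_nonneg (hsq_nonneg D) hW0
        have h3 := mul_le_mul_of_nonneg_right h1 h2
        linarith
    _ = _ := by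
        simp only [Wf]; ring

lemma Wf_eq_ofReal (hμ : IsoLC μ) (Γ : Fin n → EuclideanSpace ℝ (Fin k)) (y : EuclideanSpace ℝ (Fin k)) :
    ∫⁻ x, ENNReal.ofReal (rexp (-pot Γ y x)) ∂μ = ENNReal.ofReal (Wf μ Γ y) := by
  rw [Wf, ofReal_integral_eq_lintegral_ofReal (hμ.int_exp Γ y)
    (Filter.Eventually.of_forall fun _ => (Real.exp_pos _).le)]

lemma IsoLC.W_mid (hμ : IsoLC μ) (Γ : Fin n → EuclideanSpace ℝ (Fin k)) (y z : EuclideanSpace ℝ (Fin k)) :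
    ENNReal.ofReal (Wf μ Γ y) ^ (1/2:ℝ) * ENNReal.ofReal (Wf μ Γ z) ^ (1 - 1/2 : ℝ) ≤
      ENNReal.ofReal (Wf μ Γ ((1/2:ℝ) • y + (1 - 1/2 : ℝ) • z)) := by
  have hme : ∀ y, Measurable fun x => ENNReal.ofReal (rexp (-pot Γ y x)) := by
    intro y
    have := continuous_pot Γ y
    fun_prop
  rw [← Wf_eq_ofReal hμ, ← Wf_eq_ofReal hμ, ← Wf_eq_ofReal hμ]
  refine hμ.lc (1/2) (by norm_num) (by norm_num) _ _ _ (hme _) (hme _) (hme _) ?_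
  intro x x'
  rw [one_mul, ENNReal.ofReal_rpow_of_pos (Real.exp_pos _), ENNReal.ofReal_rpow_of_pos (Real.exp_pos _),
    ← ENNReal.ofReal_mul (by positivity), ← Real.exp_mul, ← Real.exp_mul, ← Real.exp_add]
  apply ENNReal.ofReal_le_ofReal
  apply Real.exp_le_exp.2
  simp only [pot, mulG_lin]
  set u := y - mulG Γ x
  set w := z - mulG Γ x'
  have e : (1/2:ℝ) • y + (1 - 1/2:ℝ) • z - ((1/2:ℝ) • mulG Γ x + (1 - 1/2:ℝ) • mulG Γ x')
      = (1/2:ℝ) • (u + w) := by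
    simp only [u, w]; norm_num; module
  rw [e, norm_smul, mul_pow]
  have h := parallelogram_law_with_norm ℝ u w
  have h2 : ‖u + w‖ ^ 2 ≤ 2 * (‖u‖ ^ 2 + ‖w‖ ^ 2) := by nlinarith [sq_nonneg ‖u - w‖]
  have h3 : ‖(1/2:ℝ)‖ ^ 2 = 1 / 4 := by norm_num
  rw [h3]
  have h4 : 1/4 * ‖u + w‖ ^ 2 / (2 * n) ≤ (1/2 * (‖u‖ ^ 2 + ‖w‖ ^ 2)) / (2 * n) :=
    div_le_div_of_nonneg_right (by linarith) (by positivity)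
  have e2 : (1/2 * (‖u‖ ^ 2 + ‖w‖ ^ 2)) / (2 * n) = ‖u‖ ^ 2 / (2 * n) * (1/2) + ‖w‖ ^ 2 / (2 * n) * (1 - 1/2) := by
    ring
  linarith
end

end

section

section
variable {n k : ℕ} {μ : Measure (EuclideanSpace ℝ (Fin n))}

lemma continuous_hsq : Continuous (hsq (n := n) (k := k)) := by
  unfold hsq; fun_prop

lemma convex_hsq (Γ D : Fin n → EuclideanSpace ℝ (Fin k)) {K : ℝ} (h1 : hsq Γ ≤ K) (h2 : hsq D ≤ K) :
    hsq ((1/2:ℝ) • Γ + (1 - 1/2:ℝ) • D) ≤ K := by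
  have : hsq ((1/2:ℝ) • Γ + (1 - 1/2:ℝ) • D) ≤ 1/2 * hsq Γ + 1/2 * hsq D := by
    unfold hsq
    rw [Finset.mul_sum, Finset.mul_sum, ← Finset.sum_add_distrib]
    refine Finset.sum_le_sum fun j _ => ?_
    have h := parallelogram_law_with_norm ℝ (Γ j) (D j)
    have e : ((1/2:ℝ) • Γ + (1 - 1/2:ℝ) • D) j = (1/2:ℝ) • (Γ j + D j) := by
      simp only [Pi.add_apply, Pi.smul_apply]; norm_num
    have h3 : ‖(1/2:ℝ)‖ ^ 2 = 1 / 4 := by norm_num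
    rw [e, norm_smul, mul_pow, h3]
    nlinarith [sq_nonneg ‖Γ j - D j‖]
  linarith

noncomputable def Wl (μ : Measure (EuclideanSpace ℝ (Fin n))) (Γ : Fin n → EuclideanSpace ℝ (Fin k))
    (y : EuclideanSpace ℝ (Fin k)) : ℝ≥0∞ := ∫⁻ x, ENNReal.ofReal (rexp (-pot Γ y x)) ∂μ

lemma measurable_Wl [SFinite μ] : Measurable fun p : (Fin n → EuclideanSpace ℝ (Fin k)) ×
    EuclideanSpace ℝ (Fin k) => Wl μ p.1 p.2 := by
  unfold Wl
  have hc : Continuous fun q : ((Fin n → EuclideanSpace ℝ (Fin k)) × EuclideanSpace ℝ (Fin k)) ×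
      EuclideanSpace ℝ (Fin n) => ENNReal.ofReal (rexp (-pot q.1.1 q.1.2 q.2)) := by
    have h : Continuous fun q : ((Fin n → EuclideanSpace ℝ (Fin k)) × EuclideanSpace ℝ (Fin k)) ×
      EuclideanSpace ℝ (Fin n) => mulG q.1.1 q.2 :=
      continuous_mulG.comp (by fun_prop : Continuous fun q : ((Fin n → EuclideanSpace ℝ (Fin k)) ×
        EuclideanSpace ℝ (Fin k)) × EuclideanSpace ℝ (Fin n) => (q.1.1, q.2))
    unfold pot
    refine ENNReal.continuous_ofReal.comp ?_
    fun_prop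
  exact Measurable.lintegral_prod_right' hc.measurable

noncomputable def psi (μ : Measure (EuclideanSpace ℝ (Fin n))) (θ : EuclideanSpace ℝ (Fin k))
    (I : Set ℝ) (p : (Fin n → EuclideanSpace ℝ (Fin k)) × ℝ) : ℝ≥0∞ :=
  ({Γ | hsq Γ ≤ 4 * k * n} ×ˢ I).indicator
    (fun p => ENNReal.ofReal (p.2 ^ (k - 1)) * Wl μ p.1 (p.2 • θ)) p

lemma measurable_psi [SFinite μ] (θ : EuclideanSpace ℝ (Fin k)) {I : Set ℝ} (hI : MeasurableSet I) :
    Measurable (psi μ θ I) := by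
  unfold psi
  refine Measurable.indicator ?_ ?_
  · have h0 : Measurable fun p : (Fin n → EuclideanSpace ℝ (Fin k)) × ℝ =>
        ENNReal.ofReal (p.2 ^ (k - 1)) := (measurable_snd.pow_const _).ennreal_ofReal
    refine Measurable.mul h0 ?_
    have h1 : Measurable fun p : (Fin n → EuclideanSpace ℝ (Fin k)) × ℝ => (p.1, p.2 • θ) :=
      measurable_fst.prodMk (measurable_snd.smul_const θ)
    have h2 := (measurable_Wl (n := n) (k := k) (μ := μ)).comp h1
    exact h2
  · exact (measurableSet_le continuous_hsq.measurable measurable_const).prod hI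

lemma radial_aux {a b r s q : ℝ} (m : ℕ) (ha : 0 < a) (hab : a ≤ b) (hr : 0 < r) (hra : r ≤ a)
    (hs : b ≤ s) (hq : 0 ≤ q) (hqq : 4 * (a * b) ≤ q ^ 2 * (a + b) ^ 2) :
    ENNReal.ofReal (r ^ m) ^ (1/2:ℝ) * ENNReal.ofReal (s ^ m) ^ (1 - 1/2:ℝ) ≤
      ENNReal.ofReal (q ^ m) * ENNReal.ofReal (((1/2:ℝ) • r + (1 - 1/2:ℝ) • s) ^ m) := by
  have hs0 : 0 < s := by linarith
  have h1 : 4 * (r * s) ≤ q ^ 2 * (r + s) ^ 2 := by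
    have h2 : (a + b) ^ 2 * (r * s) ≤ (r + s) ^ 2 * (a * b) := by
      have h3 : 0 ≤ (b * s - a * r) * (a * s - b * r) := by
        apply mul_nonneg <;> nlinarith
      nlinarith
    have h4 : 0 < (a + b) ^ 2 := by
      have : 0 < a + b := by linarith
      positivity
    have h5 : (a + b) ^ 2 * (4 * (r * s)) ≤ (a + b) ^ 2 * (q ^ 2 * (r + s) ^ 2) := by
      nlinarith [sq_nonneg (r + s)]
    exact le_of_mul_le_mul_left h5 h4
  have h6 : √r * √s ≤ q * ((1/2:ℝ) • r + (1 - 1/2:ℝ) • s) := by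
    rw [← Real.sqrt_mul hr.le]
    apply Real.sqrt_le_iff.2
    have e : (1/2:ℝ) • r + (1 - 1/2:ℝ) • s = (r + s) / 2 := by simp only [smul_eq_mul]; ring
    rw [e]
    exact ⟨by positivity, by nlinarith⟩
  have e1 : (1 - 1/2 : ℝ) = 1/2 := by norm_num
  rw [← ENNReal.ofReal_mul (by positivity), ← mul_pow, ENNReal.ofReal_rpow_of_pos (by positivity),
    ENNReal.ofReal_rpow_of_pos (by positivity), ← ENNReal.ofReal_mul (by positivity)]
  apply ENNReal.ofReal_le_ofReal
  have e2 : (r ^ m) ^ (1/2:ℝ) * (s ^ m) ^ (1 - 1/2:ℝ) = (√r * √s) ^ m := by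
    rw [e1, ← Real.sqrt_eq_rpow, ← Real.sqrt_eq_rpow, mul_pow]
    congr 1
    · rw [Real.sqrt_eq_iff_mul_self_eq (by positivity) (by positivity), ← mul_pow, Real.mul_self_sqrt hr.le]
    · rw [Real.sqrt_eq_iff_mul_self_eq (by positivity) (by positivity), ← mul_pow, Real.mul_self_sqrt hs0.le]
  rw [e2]
  gcongr

lemma pl_psi (hμ : IsoLC μ) {θ : EuclideanSpace ℝ (Fin k)} (hθ : ‖θ‖ = 1) {κ a b rm q : ℝ}
    (Hst : ∀ (Γ D : Fin n → EuclideanSpace ℝ (Fin k)) (y : EuclideanSpace ℝ (Fin k)),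
      hsq Γ ≤ 4 * k * n → ‖y‖ ^ 2 ≤ 600 * k * n →
        rexp (-(κ + hsq D / 4)) * Wf μ Γ y ≤ Wf μ (Γ + D) y)
    (ha : 0 < a) (hab : a ≤ b) (hbr : b ≤ rm) (hrm : rm ^ 2 ≤ 600 * k * n) (hq : 0 ≤ q)
    (hqq : 4 * (a * b) ≤ q ^ 2 * (a + b) ^ 2) :
    (∫⁻ p, psi μ θ (Set.Ioc 0 a) p ∂((Measure.pi (fun _ : Fin n =>
        stdGaussian (EuclideanSpace ℝ (Fin k)))).prod volume)) ^ (1/2:ℝ) *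
    (∫⁻ p, psi μ θ (Set.Icc b rm) p ∂((Measure.pi (fun _ : Fin n =>
        stdGaussian (EuclideanSpace ℝ (Fin k)))).prod volume)) ^ (1 - 1/2:ℝ) ≤
    ENNReal.ofReal (rexp κ) * ENNReal.ofReal (q ^ (k - 1)) *
      ∫⁻ p, psi μ θ (Set.Ioc 0 rm) p ∂((Measure.pi (fun _ : Fin n =>
        stdGaussian (EuclideanSpace ℝ (Fin k)))).prod volume) := by
  have := hμ.prob
  rw [← lintegral_const_mul _ (measurable_psi θ measurableSet_Ioc)]
  refine (pl_matGaussian n k).prod (pl_real (l := 1/2) (by norm_num) (by norm_num)) _ _ _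
    (measurable_psi θ measurableSet_Ioc) (measurable_psi θ measurableSet_Icc)
    ((measurable_psi θ measurableSet_Ioc).const_mul _) ?_
  rintro ⟨Γ, r⟩ ⟨D, s⟩
  by_cases h1 : hsq Γ ≤ 4 * k * n ∧ r ∈ Set.Ioc 0 a
  swap
  · have : psi μ θ (Set.Ioc 0 a) (Γ, r) = 0 := Set.indicator_of_notMem
      (show (Γ, r) ∉ ({Γ | hsq Γ ≤ 4 * k * n} ×ˢ Set.Ioc 0 a) from h1) _
    rw [this]
    simp
  by_cases h2 : hsq D ≤ 4 * k * n ∧ s ∈ Set.Icc b rm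
  swap
  · have : psi μ θ (Set.Icc b rm) (D, s) = 0 := Set.indicator_of_notMem
      (show (D, s) ∉ ({Γ | hsq Γ ≤ 4 * k * n} ×ˢ Set.Icc b rm) from h2) _
    rw [this]
    norm_num
  obtain ⟨hΓ, hr0, hra⟩ := h1
  obtain ⟨hD, hbs, hsr⟩ := h2
  have hM := convex_hsq Γ D hΓ hD
  set M := (1/2:ℝ) • Γ + (1 - 1/2:ℝ) • D with hMdef
  set ρ := (1/2:ℝ) • r + (1 - 1/2:ℝ) • s with hρ
  have hρ' : ρ = (r + s) / 2 := by rw [hρ]; simp only [smul_eq_mul]; ring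
  have e1 : psi μ θ (Set.Ioc 0 a) (Γ, r) = ENNReal.ofReal (r ^ (k - 1)) * Wl μ Γ (r • θ) :=
    Set.indicator_of_mem (show (Γ, r) ∈ ({Γ | hsq Γ ≤ 4 * k * n} ×ˢ Set.Ioc 0 a) from ⟨hΓ, hr0, hra⟩) _
  have e2 : psi μ θ (Set.Icc b rm) (D, s) = ENNReal.ofReal (s ^ (k - 1)) * Wl μ D (s • θ) :=
    Set.indicator_of_mem (show (D, s) ∈ ({Γ | hsq Γ ≤ 4 * k * n} ×ˢ Set.Icc b rm) from ⟨hD, hbs, hsr⟩) _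
  have e3 : psi μ θ (Set.Ioc 0 rm) ((1/2:ℝ) • (Γ, r) + (1 - 1/2:ℝ) • (D, s)) =
      ENNReal.ofReal (ρ ^ (k - 1)) * Wl μ M (ρ • θ) :=
    Set.indicator_of_mem (show (M, ρ) ∈ ({Γ | hsq Γ ≤ 4 * k * n} ×ˢ Set.Ioc 0 rm) from
      ⟨hM, by rw [hρ']; linarith, by rw [hρ']; linarith⟩) _
  rw [e1, e2, e3]
  simp only [mul_one]
  set S := ∑ j, ‖Γ j - D j‖ ^ 2 with hS
  have hS0 : 0 ≤ S := Finset.sum_nonneg fun _ _ => sq_nonneg _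
  have nrm : ∀ t : ℝ, 0 ≤ t → t ≤ rm → ‖t • θ‖ ^ 2 ≤ 600 * k * n := by
    intro t ht htr
    rw [norm_smul, hθ, mul_one, Real.norm_of_nonneg ht]
    nlinarith
  have w1 : ∀ (Γ' F : Fin n → EuclideanSpace ℝ (Fin k)) (y : EuclideanSpace ℝ (Fin k)),
      hsq Γ' ≤ 4 * k * n → ‖y‖ ^ 2 ≤ 600 * k * n → hsq F = S / 4 → Γ' + F = M →
      Wl μ Γ' y ≤ ENNReal.ofReal (rexp (κ + S / 16)) * Wl μ M y := by
    intro Γ' F y hg hy hF hFM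
    have := Hst Γ' F y hg hy
    rw [hFM, hF] at this
    unfold Wl
    rw [Wf_eq_ofReal hμ, Wf_eq_ofReal hμ, ← ENNReal.ofReal_mul (by positivity)]
    apply ENNReal.ofReal_le_ofReal
    calc Wf μ Γ' y = rexp (κ + S/16) * (rexp (-(κ + S / 4 / 4)) * Wf μ Γ' y) := by
          rw [← mul_assoc, ← Real.exp_add]
          rw [show κ + S / 16 + -(κ + S / 4 / 4) = 0 by ring, Real.exp_zero, one_mul]
      _ ≤ _ := by gcongr
  have f1 := w1 Γ ((1/2:ℝ) • (D - Γ)) (r • θ) hΓ (nrm r hr0.le (by linarith)) (by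
      rw [hS, hsq, Finset.sum_div]
      refine Finset.sum_congr rfl fun j _ => ?_
      rw [Pi.smul_apply, Pi.sub_apply, norm_smul, mul_pow, norm_sub_rev]; norm_num; ring)
      (by rw [hMdef]; norm_num; module)
  have f2 := w1 D ((1/2:ℝ) • (Γ - D)) (s • θ) hD (nrm s (by linarith) hsr) (by
      rw [hS, hsq, Finset.sum_div]
      refine Finset.sum_congr rfl fun j _ => ?_
      rw [Pi.smul_apply, Pi.sub_apply, norm_smul, mul_pow]; norm_num; ring)
      (by rw [hMdef]; norm_num; module)
  have f3 := hμ.W_mid M (r • θ) (s • θ)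
  rw [← Wf_eq_ofReal hμ, ← Wf_eq_ofReal hμ, ← Wf_eq_ofReal hμ] at f3
  change Wl μ M (r • θ) ^ (1/2:ℝ) * Wl μ M (s • θ) ^ (1 - 1/2:ℝ) ≤ Wl μ M _ at f3
  have e4 : (1/2:ℝ) • r • θ + (1 - 1/2:ℝ) • s • θ = ρ • θ := by
    rw [smul_smul, smul_smul, ← add_smul]; rfl
  rw [e4] at f3
  have f4 := radial_aux (k - 1) ha hab hr0 hra hbs hq hqq
  rw [← hρ] at f4
  have hhalf : (0:ℝ) ≤ 1/2 := by norm_num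
  have hhalf' : (0:ℝ) ≤ 1 - 1/2 := by norm_num
  set Q := ENNReal.ofReal (rexp (κ + S / 16)) with hQ
  have hQQ : Q ^ (1/2:ℝ) * Q ^ (1-1/2:ℝ) = Q := by
    rw [← ENNReal.rpow_add _ _ (by exact (ENNReal.ofReal_pos.2 (Real.exp_pos _)).ne')
      ENNReal.ofReal_ne_top]
    rw [show (1/2 + (1 - 1/2) : ℝ) = 1 by norm_num, ENNReal.rpow_one]
  have f5 : Wl μ Γ (r • θ) ^ (1/2:ℝ) * Wl μ D (s • θ) ^ (1 - 1/2:ℝ) ≤ Q * Wl μ M (ρ • θ) := by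
    calc _ ≤ (Q * Wl μ M (r • θ)) ^ (1/2:ℝ) * (Q * Wl μ M (s • θ)) ^ (1 - 1/2:ℝ) :=
          mul_le_mul' (ENNReal.rpow_le_rpow f1 hhalf) (ENNReal.rpow_le_rpow f2 hhalf')
      _ = (Q ^ (1/2:ℝ) * Q ^ (1-1/2:ℝ)) * (Wl μ M (r • θ) ^ (1/2:ℝ) * Wl μ M (s • θ) ^ (1 - 1/2:ℝ)) := by
          rw [ENNReal.mul_rpow_of_nonneg _ _ hhalf, ENNReal.mul_rpow_of_nonneg _ _ hhalf']; ring
      _ ≤ _ := by rw [hQQ]; gcongr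
  have f6 : Q ≤ ENNReal.ofReal (rexp (S / 8)) * ENNReal.ofReal (rexp κ) := by
    rw [hQ, ← ENNReal.ofReal_mul (by positivity), ← Real.exp_add]
    apply ENNReal.ofReal_le_ofReal
    apply Real.exp_le_exp.2
    linarith
  calc _ = (ENNReal.ofReal (r ^ (k - 1)) ^ (1/2:ℝ) * ENNReal.ofReal (s ^ (k - 1)) ^ (1 - 1/2:ℝ)) *
        (Wl μ Γ (r • θ) ^ (1/2:ℝ) * Wl μ D (s • θ) ^ (1 - 1/2:ℝ)) := by
        rw [ENNReal.mul_rpow_of_nonneg _ _ hhalf, ENNReal.mul_rpow_of_nonneg _ _ hhalf']; ring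
    _ ≤ (ENNReal.ofReal (q ^ (k - 1)) * ENNReal.ofReal (ρ ^ (k - 1))) *
        (ENNReal.ofReal (rexp (S / 8)) * ENNReal.ofReal (rexp κ) * Wl μ M (ρ • θ)) := by
        refine mul_le_mul' f4 (f5.trans ?_)
        gcongr
    _ = _ := by ring
end

end

section

lemma gauss_density (k : ℕ) {s : ℝ} (hs : 0 < s) : ∃ A : ℝ≥0∞, A ≠ 0 ∧ A ≠ ∞ ∧
    (volume : Measure (EuclideanSpace ℝ (Fin k))).withDensity
      (fun z => ENNReal.ofReal (rexp (-(‖z‖ ^ 2 / (2 * s))))) =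
    A • (stdGaussian (EuclideanSpace ℝ (Fin k))).map (fun z => √s • z) := by
  set b : ℂ := ((1 / (2 * s) : ℝ) : ℂ) with hb
  have hb0 : 0 < b.re := by rw [hb, Complex.ofReal_re]; positivity
  set A : ℝ := (π / (1 / (2 * s))) ^ ((k : ℝ) / 2) with hA
  have hAp : 0 < A := by positivity
  have hIntg : Integrable (fun z : EuclideanSpace ℝ (Fin k) => rexp (-(‖z‖ ^ 2 / (2 * s)))) := by
    have h1 := (GaussianFourier.integrable_cexp_neg_mul_sq_norm_add hb0 0
      (0 : EuclideanSpace ℝ (Fin k))).norm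
    refine h1.congr (Filter.Eventually.of_forall fun z => ?_)
    simp only [Complex.norm_exp]
    congr 1
    rw [hb]
    simp [← Complex.ofReal_pow]
    field_simp
  have hfin : IsFiniteMeasure ((volume : Measure (EuclideanSpace ℝ (Fin k))).withDensity
      (fun z => ENNReal.ofReal (rexp (-(‖z‖ ^ 2 / (2 * s)))))) :=
    isFiniteMeasure_withDensity_ofReal hIntg.2
  have hp : IsProbabilityMeasure ((stdGaussian (EuclideanSpace ℝ (Fin k))).map (fun z => √s • z)) :=
    Measure.isProbabilityMeasure_map (by fun_prop)
  refine ⟨((A.toNNReal : ℝ≥0) : ℝ≥0∞), by simpa using hAp, ENNReal.coe_ne_top, ?_⟩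
  have hfin2 : IsFiniteMeasure (((A.toNNReal : ℝ≥0) : ℝ≥0∞) •
      (stdGaussian (EuclideanSpace ℝ (Fin k))).map (fun z => √s • z)) :=
    Measure.smul_finite _ ENNReal.coe_ne_top
  apply Measure.ext_of_charFun
  ext t
  have e1 : charFun (((A.toNNReal : ℝ≥0) : ℝ≥0∞) • (stdGaussian (EuclideanSpace ℝ (Fin k))).map
      (fun z => √s • z)) t = A * Complex.exp (-s * ‖t‖ ^ 2 / 2) := by
    rw [charFun_apply, integral_smul_measure, ← charFun_apply, charFun_map_smul, charFun_stdGaussian,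
      norm_smul, ← Complex.ofReal_pow, mul_pow, Real.norm_of_nonneg (by positivity), Real.sq_sqrt hs.le]
    simp [hAp.le]
  rw [e1, charFun_apply, integral_withDensity_eq_integral_toReal_smul]
  · have h2 := GaussianFourier.integral_cexp_neg_mul_sq_norm_add hb0 Complex.I t
    have e2 : ∀ v : EuclideanSpace ℝ (Fin k), (ENNReal.ofReal (rexp (-(‖v‖ ^ 2 / (2 * s))))).toReal •
        Complex.exp (⟪v, t⟫ * Complex.I) = Complex.exp (-b * ‖v‖ ^ 2 + Complex.I * ⟪t, v⟫) := by
      intro v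
      rw [ENNReal.toReal_ofReal (Real.exp_pos _).le, Complex.real_smul, Complex.ofReal_exp,
        ← Complex.exp_add, real_inner_comm]
      congr 1
      rw [hb]
      push_cast
      ring
    simp only [e2]
    rw [h2, finrank_euclideanSpace_fin]
    congr 1
    · rw [hA, hb, Complex.ofReal_cpow (by positivity)]
      push_cast
      rfl
    · congr 1
      have hs' : (s : ℂ) ≠ 0 := by exact_mod_cast hs.ne'
      rw [hb, Complex.I_sq]
      push_cast
      field_simp
      ring
  · fun_prop
  · exact Filter.Eventually.of_forall fun _ => ENNReal.ofReal_lt_top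

lemma gauss_lint (k : ℕ) {s : ℝ} (hs : 0 < s) : ∃ A : ℝ≥0∞, A ≠ 0 ∧ A ≠ ∞ ∧
    ∀ (h : EuclideanSpace ℝ (Fin k) → ℝ≥0∞) (w : EuclideanSpace ℝ (Fin k)), Measurable h →
    ∫⁻ y, h y * ENNReal.ofReal (rexp (-(‖y - w‖ ^ 2 / (2 * s)))) =
      A * ∫⁻ z, h (w + √s • z) ∂(stdGaussian (EuclideanSpace ℝ (Fin k))) := by
  obtain ⟨A, hA0, hA1, hA⟩ := gauss_density k hs
  refine ⟨A, hA0, hA1, fun h w hh => ?_⟩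
  rw [← lintegral_add_left_eq_self _ w]
  simp only [add_sub_cancel_left]
  have hw : Measurable fun z => h (w + z) := hh.comp (measurable_const_add w)
  have hd : Measurable fun z : EuclideanSpace ℝ (Fin k) =>
    ENNReal.ofReal (rexp (-(‖z‖ ^ 2 / (2 * s)))) := by fun_prop
  have := lintegral_withDensity_eq_lintegral_mul (volume : Measure (EuclideanSpace ℝ (Fin k))) hd hw
  rw [hA, lintegral_smul_measure, lintegral_map hw (by fun_prop)] at this
  rw [smul_eq_mul] at this
  rw [this]
  congr 1
  ext z
  simp only [Pi.mul_apply]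
  ring

lemma lintegral_radial (k : ℕ) (hk : 1 ≤ k) : ∃ c : ℝ≥0∞, c ≠ 0 ∧ c ≠ ∞ ∧
    ∀ g : ℝ → ℝ≥0∞, Measurable g → ∫⁻ y : EuclideanSpace ℝ (Fin k), g ‖y‖ =
      c * ∫⁻ r in Set.Ioi 0, ENNReal.ofReal (r ^ (k - 1)) * g r := by
  have : Nonempty (Fin k) := ⟨⟨0, hk⟩⟩
  set μ : Measure (EuclideanSpace ℝ (Fin k)) := volume
  refine ⟨μ.toSphere Set.univ, ?_, measure_ne_top _ _, ?_⟩
  · rw [Measure.measure_univ_ne_zero]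
    exact Measure.toSphere_ne_zero μ
  intro g hg
  have mp := μ.measurePreserving_homeomorphUnitSphereProd
  have h1 := mp.lintegral_comp (f := fun p => g p.2) (by fun_prop)
  simp only [homeomorphUnitSphereProd_apply_snd_coe] at h1
  have h2 : ∫⁻ y, g ‖y‖ ∂μ = ∫⁻ y in ({0}ᶜ : Set (EuclideanSpace ℝ (Fin k))), g ‖y‖ ∂μ := by
    rw [restrict_compl_singleton]
  rw [h2, ← lintegral_subtype_comap (measurableSet_singleton _).compl, h1, lintegral_prod _ (by fun_prop)]
  simp only [lintegral_const]
  rw [mul_comm]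
  congr 1
  rw [Measure.volumeIoiPow, lintegral_withDensity_eq_lintegral_mul _ (by fun_prop) (by fun_prop),
    finrank_euclideanSpace_fin, ← lintegral_subtype_comap measurableSet_Ioi]
  rfl

end

section

section
variable {n k : ℕ} {μ : Measure (EuclideanSpace ℝ (Fin n))}

noncomputable def matG (n k : ℕ) : Measure (Fin n → EuclideanSpace ℝ (Fin k)) :=
  Measure.pi fun _ : Fin n => stdGaussian (EuclideanSpace ℝ (Fin k))

instance : IsProbabilityMeasure (matG n k) := by unfold matG; infer_instance

lemma matG_rot (φ : EuclideanSpace ℝ (Fin k) ≃ₗᵢ[ℝ] EuclideanSpace ℝ (Fin k)) :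
    MeasurePreserving (fun (Γ : Fin n → EuclideanSpace ℝ (Fin k)) j => φ (Γ j)) (matG n k) (matG n k) := by
  unfold matG
  refine measurePreserving_pi _ _ fun i => ⟨φ.continuous.measurable, ?_⟩
  exact stdGaussian_map φ

lemma hsq_rot (φ : EuclideanSpace ℝ (Fin k) ≃ₗᵢ[ℝ] EuclideanSpace ℝ (Fin k))
    (Γ : Fin n → EuclideanSpace ℝ (Fin k)) : hsq (fun j => φ (Γ j)) = hsq Γ := by
  simp [hsq]

lemma pot_rot (φ : EuclideanSpace ℝ (Fin k) ≃ₗᵢ[ℝ] EuclideanSpace ℝ (Fin k))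
    (Γ : Fin n → EuclideanSpace ℝ (Fin k)) (y : EuclideanSpace ℝ (Fin k)) (x : EuclideanSpace ℝ (Fin n)) :
    pot (fun j => φ (Γ j)) (φ y) x = pot Γ y x := by
  have : mulG (fun j => φ (Γ j)) x = φ (mulG Γ x) := by simp [mulG]
  unfold pot
  rw [this, ← map_sub, LinearIsometryEquiv.norm_map]

noncomputable def indB (n k : ℕ) (Γ : Fin n → EuclideanSpace ℝ (Fin k)) : ℝ≥0∞ :=
  {Γ : Fin n → EuclideanSpace ℝ (Fin k) | hsq Γ ≤ 4 * k * n}.indicator (fun _ => 1) Γ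

lemma measurable_indB : Measurable (indB n k) :=
  measurable_const.indicator (measurableSet_le continuous_hsq.measurable measurable_const)

lemma measurable_Wl_left [SFinite μ] (y : EuclideanSpace ℝ (Fin k)) :
    Measurable fun Γ : Fin n → EuclideanSpace ℝ (Fin k) => Wl μ Γ y := by
  have h := measurable_Wl (n := n) (k := k) (μ := μ)
  have h1 : Measurable fun Γ : Fin n → EuclideanSpace ℝ (Fin k) => (Γ, y) := by fun_prop
  have h2 := h.comp h1
  exact h2

lemma measurable_Wl_swap [SFinite μ] : Measurable fun p : EuclideanSpace ℝ (Fin k) ×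
    (Fin n → EuclideanSpace ℝ (Fin k)) => Wl μ p.2 p.1 := by
  have h := measurable_Wl (n := n) (k := k) (μ := μ)
  have h1 : Measurable fun p : EuclideanSpace ℝ (Fin k) ×
    (Fin n → EuclideanSpace ℝ (Fin k)) => (p.2, p.1) := by fun_prop
  have h2 := h.comp h1
  exact h2

noncomputable def Hf (μ : Measure (EuclideanSpace ℝ (Fin n))) (y : EuclideanSpace ℝ (Fin k)) : ℝ≥0∞ :=
  ∫⁻ Γ, indB n k Γ * Wl μ Γ y ∂(matG n k)

lemma measurable_Hf [SFinite μ] : Measurable (Hf (k := k) μ) := by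
  unfold Hf
  refine Measurable.lintegral_prod_right' (f := fun p : EuclideanSpace ℝ (Fin k) ×
    (Fin n → EuclideanSpace ℝ (Fin k)) => indB n k p.2 * Wl μ p.2 p.1) ?_
  exact (measurable_indB.comp measurable_snd).mul measurable_Wl_swap

lemma Hf_rot [SFinite μ] {y z : EuclideanSpace ℝ (Fin k)} (h : ‖y‖ = ‖z‖) : Hf μ y = Hf μ z := by
  set φ : EuclideanSpace ℝ (Fin k) ≃ₗᵢ[ℝ] EuclideanSpace ℝ (Fin k) :=
    Submodule.reflection (ℝ ∙ (y - z))ᗮ with hφ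
  have hy : φ y = z := Submodule.reflection_sub h
  unfold Hf
  rw [← (matG_rot φ).lintegral_comp
    (f := fun Γ => indB n k Γ * Wl μ Γ z) (measurable_indB.mul
      (measurable_Wl_left _))]
  refine lintegral_congr fun Γ => ?_
  congr 1
  · simp only [indB, Set.indicator, Set.mem_ofPred_eq, hsq_rot]
  · unfold Wl
    rw [← hy]
    simp only [pot_rot]

noncomputable def indI (I : Set ℝ) (r : ℝ) : ℝ≥0∞ := I.indicator (fun _ => 1) r

lemma measurable_indI {I : Set ℝ} (hI : MeasurableSet I) : Measurable (indI I) :=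
  measurable_const.indicator hI

noncomputable def Nf (μ : Measure (EuclideanSpace ℝ (Fin n))) (k : ℕ) (I : Set ℝ) : ℝ≥0∞ :=
  ∫⁻ x, ∫⁻ Γ, indB n k Γ * ∫⁻ z, indI I ‖mulG Γ x + √n • z‖ ∂(stdGaussian (EuclideanSpace ℝ (Fin k)))
    ∂(matG n k) ∂μ

lemma psi_H [SFinite μ] (hk : 1 ≤ k) (θ : EuclideanSpace ℝ (Fin k)) (hθ : ‖θ‖ = 1) : ∃ c : ℝ≥0∞, c ≠ 0 ∧ c ≠ ∞ ∧
    ∀ I : Set ℝ, MeasurableSet I → I ⊆ Set.Ioi 0 →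
    ∫⁻ y : EuclideanSpace ℝ (Fin k), indI I ‖y‖ * Hf μ y =
      c * ∫⁻ p, psi μ θ I p ∂((matG n k).prod volume) := by
  obtain ⟨c, hc0, hc1, hc⟩ := lintegral_radial k hk
  refine ⟨c, hc0, hc1, fun I hI hI0 => ?_⟩
  have e1 : ∀ y : EuclideanSpace ℝ (Fin k), indI I ‖y‖ * Hf μ y = indI I ‖y‖ * Hf μ (‖y‖ • θ) := by
    intro y
    rw [Hf_rot (y := ‖y‖ • θ) (z := y)]
    rw [norm_smul, hθ]; simp
  simp only [e1]
  rw [hc (fun r => indI I r * Hf μ (r • θ)) ((measurable_indI hI).mul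
    (measurable_Hf.comp (measurable_id.smul_const θ)))]
  congr 1
  rw [lintegral_prod_symm _ (measurable_psi θ hI).aemeasurable, ← lintegral_indicator measurableSet_Ioi]
  refine lintegral_congr fun r => ?_
  by_cases hr : r ∈ I
  · rw [Set.indicator_of_mem (hI0 hr)]
    rw [indI, Set.indicator_of_mem hr, one_mul, Hf, ← lintegral_const_mul]
    · refine lintegral_congr fun Γ => ?_
      unfold psi indB
      by_cases hΓ : hsq Γ ≤ 4 * k * n
      · rw [Set.indicator_of_mem (show (Γ, r) ∈ _ ×ˢ _ from ⟨hΓ, hr⟩),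
          Set.indicator_of_mem (show Γ ∈ {Γ : Fin n → EuclideanSpace ℝ (Fin k) | hsq Γ ≤ 4 * k * n} from hΓ)]
        simp
      · rw [Set.indicator_of_notMem (show (Γ, r) ∉ _ ×ˢ _ from fun h => hΓ h.1),
          Set.indicator_of_notMem (show Γ ∉ {Γ : Fin n → EuclideanSpace ℝ (Fin k) | hsq Γ ≤ 4 * k * n} from hΓ)]
        simp
    · exact measurable_indB.mul (measurable_Wl_left _)
  · have : ∀ Γ, psi μ θ I (Γ, r) = 0 := fun Γ => Set.indicator_of_notMem (fun h => hr h.2) _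
    simp only [this, lintegral_zero]
    by_cases h0 : r ∈ Set.Ioi (0:ℝ)
    · rw [Set.indicator_of_mem h0, indI, Set.indicator_of_notMem hr]; simp
    · rw [Set.indicator_of_notMem h0]

lemma H_N [SFinite μ] (hn : 0 < n) : ∃ A : ℝ≥0∞, A ≠ 0 ∧ A ≠ ∞ ∧
    ∀ I : Set ℝ, MeasurableSet I →
    ∫⁻ y : EuclideanSpace ℝ (Fin k), indI I ‖y‖ * Hf μ y = A * Nf μ k I := by
  obtain ⟨A, hA0, hA1, hA⟩ := gauss_lint k (s := n) (by exact_mod_cast hn)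
  refine ⟨A, hA0, hA1, fun I hI => ?_⟩
  have mpot : Measurable fun q : EuclideanSpace ℝ (Fin k) × (Fin n → EuclideanSpace ℝ (Fin k)) ×
      EuclideanSpace ℝ (Fin n) => ENNReal.ofReal (rexp (-pot q.2.1 q.1 q.2.2)) := by
    have h : Continuous fun q : EuclideanSpace ℝ (Fin k) × (Fin n → EuclideanSpace ℝ (Fin k)) ×
      EuclideanSpace ℝ (Fin n) => mulG q.2.1 q.2.2 := continuous_mulG.comp continuous_snd
    unfold pot
    have h' := h.measurable
    fun_prop
  have mF : Measurable fun q : EuclideanSpace ℝ (Fin k) × (Fin n → EuclideanSpace ℝ (Fin k)) ×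
      EuclideanSpace ℝ (Fin n) => indI I ‖q.1‖ * (indB n k q.2.1 *
        ENNReal.ofReal (rexp (-pot q.2.1 q.1 q.2.2))) :=
    ((measurable_indI hI).comp (by fun_prop)).mul ((measurable_indB.comp (by fun_prop)).mul mpot)
  have s1 : ∀ y : EuclideanSpace ℝ (Fin k), indI I ‖y‖ * Hf μ y =
      ∫⁻ p, indI I ‖y‖ * (indB n k p.1 * ENNReal.ofReal (rexp (-pot p.1 y p.2))) ∂((matG n k).prod μ) := by
    intro y
    have my : Measurable fun p : (Fin n → EuclideanSpace ℝ (Fin k)) × EuclideanSpace ℝ (Fin n) =>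
        indB n k p.1 * ENNReal.ofReal (rexp (-pot p.1 y p.2)) :=
      by
        have h1 : Measurable fun p : (Fin n → EuclideanSpace ℝ (Fin k)) × EuclideanSpace ℝ (Fin n) =>
          (y, p) := by fun_prop
        have h2 := mpot.comp h1
        exact (measurable_indB.comp measurable_fst).mul h2
    rw [lintegral_const_mul _ my, lintegral_prod _ my.aemeasurable, Hf]
    congr 1
    refine lintegral_congr fun Γ => ?_
    have h1 : Measurable fun x : EuclideanSpace ℝ (Fin n) => (y, Γ, x) := by fun_prop
    have h2 := mpot.comp h1
    exact (lintegral_const_mul (indB n k Γ) h2).symm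
  simp only [s1]
  rw [lintegral_lintegral_swap mF.aemeasurable]
  have s2 : ∀ p : (Fin n → EuclideanSpace ℝ (Fin k)) × EuclideanSpace ℝ (Fin n),
      ∫⁻ y, indI I ‖y‖ * (indB n k p.1 * ENNReal.ofReal (rexp (-pot p.1 y p.2))) =
      A * (indB n k p.1 * ∫⁻ z, indI I ‖mulG p.1 p.2 + √n • z‖ ∂(stdGaussian (EuclideanSpace ℝ (Fin k)))) := by
    intro p
    have := hA (fun y => indI I ‖y‖ * indB n k p.1) (mulG p.1 p.2)
      (((measurable_indI hI).comp measurable_norm).mul_const _)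
    simp only [pot]
    simp only [mul_assoc] at this
    have m4 : Measurable fun z : EuclideanSpace ℝ (Fin k) => ‖mulG p.1 p.2 + √n • z‖ := by fun_prop
    have m5 : Measurable fun z : EuclideanSpace ℝ (Fin k) => indI I ‖mulG p.1 p.2 + √n • z‖ :=
      (measurable_indI hI).comp m4
    rw [this, lintegral_mul_const _ m5, mul_comm (indB n k p.1)]
  simp only [s2]
  have m3 : Measurable fun p : (Fin n → EuclideanSpace ℝ (Fin k)) × EuclideanSpace ℝ (Fin n) =>
      indB n k p.1 * ∫⁻ z, indI I ‖mulG p.1 p.2 + √n • z‖ ∂(stdGaussian (EuclideanSpace ℝ (Fin k))) := by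
    refine (measurable_indB.comp measurable_fst).mul ?_
    refine Measurable.lintegral_prod_right' (f := fun q : ((Fin n → EuclideanSpace ℝ (Fin k)) ×
      EuclideanSpace ℝ (Fin n)) × EuclideanSpace ℝ (Fin k) => indI I ‖mulG q.1.1 q.1.2 + √n • q.2‖) ?_
    have h : Continuous fun q : ((Fin n → EuclideanSpace ℝ (Fin k)) ×
      EuclideanSpace ℝ (Fin n)) × EuclideanSpace ℝ (Fin k) => mulG q.1.1 q.1.2 :=
        continuous_mulG.comp continuous_fst
    exact (measurable_indI hI).comp (by have := h.measurable; fun_prop)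
  rw [lintegral_const_mul _ m3, lintegral_prod_symm _ m3.aemeasurable, Nf]

/-- the main inequality for the smoothed radial measure -/
lemma N_ineq (hμ : IsoLC μ) (hn : 0 < n) (hk : 1 ≤ k) {κ a b rm q : ℝ}
    (Hst : ∀ (Γ D : Fin n → EuclideanSpace ℝ (Fin k)) (y : EuclideanSpace ℝ (Fin k)),
      hsq Γ ≤ 4 * k * n → ‖y‖ ^ 2 ≤ 600 * k * n →
      rexp (-(κ + hsq D / 4)) * Wf μ Γ y ≤ Wf μ (Γ + D) y)
    (ha : 0 < a) (hab : a ≤ b) (hbr : b ≤ rm) (hrm : rm ^ 2 ≤ 600 * k * n) (hq : 0 ≤ q)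
    (hqq : 4 * (a * b) ≤ q ^ 2 * (a + b) ^ 2) :
    (Nf μ k (Set.Ioc 0 a)) ^ (1/2:ℝ) * (Nf μ k (Set.Icc b rm)) ^ (1/2:ℝ) ≤
      ENNReal.ofReal (rexp κ * q ^ (k - 1)) := by
  have := hμ.prob
  have : Nonempty (Fin k) := ⟨⟨0, hk⟩⟩
  obtain ⟨θ, hθ⟩ : ∃ θ : EuclideanSpace ℝ (Fin k), ‖θ‖ = 1 := ⟨EuclideanSpace.single ⟨0, hk⟩ 1, by simp⟩
  have hp := pl_psi hμ hθ Hst ha hab hbr hrm hq hqq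
  obtain ⟨c, hc0, hc1, hc⟩ := psi_H (μ := μ) hk θ hθ
  obtain ⟨A, hA0, hA1, hA⟩ := H_N (μ := μ) (k := k) hn
  have key : ∀ I : Set ℝ, MeasurableSet I → I ⊆ Set.Ioi 0 →
      ∫⁻ p, psi μ θ I p ∂((matG n k).prod volume) = (c⁻¹ * A) * Nf μ k I := by
    intro I hI hI0
    rw [mul_assoc, ← hA I hI, hc I hI hI0, ← mul_assoc, ENNReal.inv_mul_cancel hc0 hc1, one_mul]
  change (∫⁻ p, _ ∂((matG n k).prod volume)) ^ _ * (∫⁻ p, _ ∂((matG n k).prod volume)) ^ _ ≤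
    _ * ∫⁻ p, _ ∂((matG n k).prod volume) at hp
  rw [key _ measurableSet_Ioc (fun x h => h.1), key _ measurableSet_Icc (fun x h => ha.trans_le (hab.trans h.1)),
    key _ measurableSet_Ioc (fun x h => h.1)] at hp
  generalize hBd : c⁻¹ * A = B at hp
  have hB0 : B ≠ 0 := hBd ▸ mul_ne_zero (ENNReal.inv_ne_zero.2 hc1) hA0
  have hB1 : B ≠ ∞ := hBd ▸ ENNReal.mul_ne_top (ENNReal.inv_ne_top.2 hc0) hA1
  have hN1 : Nf μ k (Set.Ioc 0 rm) ≤ 1 := by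
    unfold Nf
    have i1 : ∀ r, indI (Set.Ioc 0 rm) r ≤ 1 := fun r => Set.indicator_le_self' (by simp) r
    have i2 : ∀ Γ, indB n k Γ ≤ 1 := fun Γ => Set.indicator_le_self' (by simp) Γ
    calc _ ≤ ∫⁻ x, ∫⁻ Γ, 1 * ∫⁻ z, 1 ∂(stdGaussian (EuclideanSpace ℝ (Fin k))) ∂(matG n k) ∂μ := by
          gcongr
          · exact i2 _
          · exact i1 _
      _ = 1 := by simp
  rw [ENNReal.mul_rpow_of_nonneg _ _ (by norm_num), ENNReal.mul_rpow_of_nonneg _ _ (by norm_num),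
    show (1 - 1/2:ℝ) = 1/2 by norm_num] at hp
  have hBB : B ^ (1/2:ℝ) * B ^ (1/2:ℝ) = B := by
    rw [← ENNReal.rpow_add _ _ hB0 hB1]; norm_num
  have hp2 : B * ((Nf μ k (Set.Ioc 0 a)) ^ (1/2:ℝ) * (Nf μ k (Set.Icc b rm)) ^ (1/2:ℝ)) ≤
      B * ENNReal.ofReal (rexp κ * q ^ (k - 1)) := by
    calc _ = B ^ (1/2:ℝ) * Nf μ k (Set.Ioc 0 a) ^ (1/2:ℝ) *
          (B ^ (1/2:ℝ) * Nf μ k (Set.Icc b rm) ^ (1/2:ℝ)) := by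
            nth_rw 1 [← hBB]; ring
      _ ≤ _ := hp
      _ ≤ ENNReal.ofReal (rexp κ) * ENNReal.ofReal (q ^ (k - 1)) * (B * 1) := by gcongr
      _ = _ := by rw [ENNReal.ofReal_mul (Real.exp_pos _).le]; ring
  exact (ENNReal.mul_le_mul_iff_right hB0 hB1).1 hp2

end

end

section

section
variable {n k : ℕ} {μ : Measure (EuclideanSpace ℝ (Fin n))}

lemma mulG_law (x : EuclideanSpace ℝ (Fin n)) :
    ((matG n k).prod (stdGaussian (EuclideanSpace ℝ (Fin k)))).map (fun p => mulG p.1 x + √n • p.2) =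
    (stdGaussian (EuclideanSpace ℝ (Fin k))).map (fun z => √(‖x‖ ^ 2 + n) • z) := by
  have hm0 : Continuous fun p : (Fin n → EuclideanSpace ℝ (Fin k)) × EuclideanSpace ℝ (Fin k) =>
      mulG p.1 x := by unfold mulG; fun_prop
  have hm : Measurable fun p : (Fin n → EuclideanSpace ℝ (Fin k)) × EuclideanSpace ℝ (Fin k) =>
      mulG p.1 x + √n • p.2 := by have := hm0.measurable; fun_prop
  have i1 : IsProbabilityMeasure (((matG n k).prod (stdGaussian (EuclideanSpace ℝ (Fin k)))).map
    (fun p => mulG p.1 x + √n • p.2)) := Measure.isProbabilityMeasure_map hm.aemeasurable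
  have i2 : IsProbabilityMeasure ((stdGaussian (EuclideanSpace ℝ (Fin k))).map
    (fun z => √(‖x‖ ^ 2 + n) • z)) := Measure.isProbabilityMeasure_map (by fun_prop)
  apply Measure.ext_of_charFun
  ext t
  rw [charFun_map_smul, charFun_stdGaussian, charFun_apply, integral_map hm.aemeasurable (by fun_prop)]
  have e1 : ∀ p : (Fin n → EuclideanSpace ℝ (Fin k)) × EuclideanSpace ℝ (Fin k),
      Complex.exp (⟪mulG p.1 x + √n • p.2, t⟫ * Complex.I) =
      (∏ j, Complex.exp (⟪p.1 j, x j • t⟫ * Complex.I)) * Complex.exp (⟪p.2, √n • t⟫ * Complex.I) := by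
    intro p
    rw [← Complex.exp_sum, ← Complex.exp_add, ← Finset.sum_mul, ← add_mul]
    congr 2
    rw [mulG, inner_add_left, sum_inner]
    simp only [real_inner_smul_left, real_inner_smul_right]
    push_cast
    rfl
  simp only [e1]
  rw [integral_prod_mul (fun Γ : Fin n → EuclideanSpace ℝ (Fin k) =>
    ∏ j, Complex.exp (⟪Γ j, x j • t⟫ * Complex.I))
    (fun z : EuclideanSpace ℝ (Fin k) => Complex.exp (⟪z, √n • t⟫ * Complex.I)), matG,
    integral_fintype_prod_eq_prod (fun j (g : EuclideanSpace ℝ (Fin k)) =>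
      Complex.exp (⟪g, x j • t⟫ * Complex.I))]
  simp only [← charFun_apply, charFun_stdGaussian]
  rw [← Complex.exp_sum, ← Complex.exp_add]
  congr 1
  simp only [norm_smul, ← Complex.ofReal_pow, mul_pow, EuclideanSpace.norm_sq_eq x]
  rw [Real.norm_of_nonneg (Real.sqrt_nonneg _), Real.norm_of_nonneg (Real.sqrt_nonneg _),
    Real.sq_sqrt (by positivity), Real.sq_sqrt (by positivity)]
  simp only [neg_div, Finset.sum_neg_distrib]
  rw [← Finset.sum_div, ← Complex.ofReal_sum, ← Finset.sum_mul]
  push_cast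
  ring

lemma gauss_sq_int : Integrable (fun w : ℝ => w ^ 2) (gaussianReal 0 1) := by
  have := (memLp_id_gaussianReal (μ := 0) (v := 1) 2).integrable_norm_pow (by norm_num)
  simpa using this

lemma gauss_sq_mean : ∫ w : ℝ, w ^ 2 ∂(gaussianReal 0 1) = 1 := by
  have h := variance_eq_sub (memLp_id_gaussianReal (μ := 0) (v := 1) 2)
  rw [variance_id_gaussianReal] at h
  simp only [id, integral_id_gaussianReal, Pi.pow_apply] at h
  norm_num at h
  exact h.symm

lemma gauss_sq_memLp : MemLp (fun w : ℝ => w ^ 2) 2 (gaussianReal 0 1) := by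
  rw [memLp_two_iff_integrable_sq (by fun_prop)]
  have := (memLp_id_gaussianReal (μ := 0) (v := 1) 4).integrable_norm_pow (by norm_num)
  refine this.congr (Filter.Eventually.of_forall fun w => ?_)
  simp only [id, Real.norm_eq_abs]
  rw [← pow_mul]
  exact Even.pow_abs ⟨2, rfl⟩ w

lemma mp_gauss : MeasurePreserving (WithLp.toLp 2) (Measure.pi fun _ : Fin k => gaussianReal 0 1)
    (stdGaussian (EuclideanSpace ℝ (Fin k))) := ⟨by fun_prop, map_pi_eq_stdGaussian⟩

lemma gauss_norm_int : Integrable (fun z => ‖z‖ ^ 2) (stdGaussian (EuclideanSpace ℝ (Fin k))) := by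
  rw [← mp_gauss.integrable_comp (by fun_prop)]
  have : ((fun z : EuclideanSpace ℝ (Fin k) => ‖z‖ ^ 2) ∘ WithLp.toLp 2) =
      fun w : Fin k → ℝ => ∑ i, (w i) ^ 2 := by
    ext w; simp [EuclideanSpace.norm_sq_eq]
  rw [this]
  refine integrable_finsetSum _ fun i _ => ?_
  exact (measurePreserving_eval (fun _ : Fin k => gaussianReal 0 1) i).integrable_comp_of_integrable gauss_sq_int

lemma gauss_norm_mean : ∫ z, ‖z‖ ^ 2 ∂(stdGaussian (EuclideanSpace ℝ (Fin k))) = k := by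
  rw [← map_pi_eq_stdGaussian, integral_map (by fun_prop) (by fun_prop)]
  simp only [EuclideanSpace.norm_sq_eq, Real.norm_eq_abs, sq_abs]
  rw [integral_finsetSum]
  · have : ∀ i, ∫ w : Fin k → ℝ, (w i) ^ 2 ∂(Measure.pi fun _ : Fin k => gaussianReal 0 1) = 1 := by
      intro i
      have h := integral_map (μ := Measure.pi fun _ : Fin k => gaussianReal 0 1)
        (measurePreserving_eval (fun _ : Fin k => gaussianReal 0 1) i).measurable.aemeasurable
        (f := fun w : ℝ => w ^ 2) (by fun_prop)
      rw [(measurePreserving_eval (fun _ : Fin k => gaussianReal 0 1) i).map_eq, gauss_sq_mean] at h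
      exact h.symm
    simp [this]
  · exact fun i _ => (measurePreserving_eval (fun _ : Fin k => gaussianReal 0 1) i).integrable_comp_of_integrable gauss_sq_int

lemma gauss_conc : ∃ M : ℝ, 1 ≤ M ∧ ∀ (k : ℕ) (δ : ℝ), 1 ≤ k → 0 < δ →
    (stdGaussian (EuclideanSpace ℝ (Fin k))) {z | δ * k ≤ |‖z‖ ^ 2 - k|} ≤
      ENNReal.ofReal (M / (k * δ ^ 2)) := by
  refine ⟨max 1 Var[fun w : ℝ => w ^ 2; gaussianReal 0 1], le_max_left _ _, fun k δ hk hδ => ?_⟩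
  have hk0 : (0:ℝ) < k := by exact_mod_cast hk
  have hm : MemLp (∑ i, fun w : Fin k → ℝ => (w i) ^ 2) 2 (Measure.pi fun _ : Fin k => gaussianReal 0 1) :=
    memLp_finsetSum' _ fun i _ => gauss_sq_memLp.comp_measurePreserving
      (measurePreserving_eval (fun _ : Fin k => gaussianReal 0 1) i)
  have h := meas_ge_le_variance_div_sq hm (c := δ * k) (by positivity)
  rw [variance_sum_pi (X := fun _ (w : ℝ) => w ^ 2) (fun i => gauss_sq_memLp)] at h
  have hmean : ∫ w, (∑ i, fun w : Fin k → ℝ => (w i) ^ 2) w ∂(Measure.pi fun _ : Fin k => gaussianReal 0 1) = k := by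
    rw [← gauss_norm_mean (k := k), ← map_pi_eq_stdGaussian, integral_map (by fun_prop) (by fun_prop)]
    congr 1
    ext w
    simp [EuclideanSpace.norm_sq_eq]
  rw [hmean] at h
  rw [← map_pi_eq_stdGaussian, Measure.map_apply (by fun_prop)
    (measurableSet_le (by fun_prop) (by fun_prop))]
  have e : (WithLp.toLp 2 ⁻¹' {z : EuclideanSpace ℝ (Fin k) | δ * k ≤ |‖z‖ ^ 2 - k|}) =
      {w : Fin k → ℝ | δ * k ≤ |(∑ i, fun w : Fin k → ℝ => (w i) ^ 2) w - k|} := by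
    ext w
    simp [EuclideanSpace.norm_sq_eq]
  rw [e]
  refine h.trans (ENNReal.ofReal_le_ofReal ?_)
  simp only [Finset.sum_const, Finset.card_univ, Fintype.card_fin, nsmul_eq_mul]
  rw [div_le_div_iff₀ (by positivity) (by positivity)]
  have := le_max_right 1 Var[fun w : ℝ => w ^ 2; gaussianReal 0 1]
  calc _ = Var[fun w : ℝ => w ^ 2; gaussianReal 0 1] * (k * δ) ^ 2 := by ring
    _ ≤ max 1 Var[fun w : ℝ => w ^ 2; gaussianReal 0 1] * (k * δ) ^ 2 := by gcongr
    _ = _ := by ring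

lemma matG_hsq (hn : 0 < n) (hk : 1 ≤ k) : (matG n k) {Γ | 4 * k * n ≤ hsq Γ} ≤ ENNReal.ofReal (1/4) := by
  have hk0 : (0:ℝ) < k := by exact_mod_cast hk
  have hn0 : (0:ℝ) < n := by exact_mod_cast hn
  have mp := fun j => measurePreserving_eval (fun _ : Fin n => stdGaussian (EuclideanSpace ℝ (Fin k))) j
  have hj : ∀ j, Integrable (fun Γ : Fin n → EuclideanSpace ℝ (Fin k) => ‖Γ j‖ ^ 2) (matG n k) :=
    fun j => (mp j).integrable_comp_of_integrable gauss_norm_int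
  have hIntg : Integrable (hsq (n := n) (k := k)) (matG n k) := integrable_finsetSum _ fun j _ => hj j
  have hmean : ∫ Γ, hsq Γ ∂(matG n k) = k * n := by
    unfold hsq
    rw [integral_finsetSum _ fun j _ => hj j]
    have : ∀ j, ∫ Γ : Fin n → EuclideanSpace ℝ (Fin k), ‖Γ j‖ ^ 2 ∂(matG n k) = k := by
      intro j
      have h := integral_map (μ := Measure.pi fun _ : Fin n => stdGaussian (EuclideanSpace ℝ (Fin k))) (mp j).measurable.aemeasurable
        (f := fun w : EuclideanSpace ℝ (Fin k) => ‖w‖ ^ 2) (by fun_prop)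
      rw [(mp j).map_eq, gauss_norm_mean] at h
      exact h.symm
    simp [this, mul_comm]
  have h := mul_meas_ge_le_integral_of_nonneg (Filter.Eventually.of_forall hsq_nonneg) hIntg (4 * k * n)
  rw [hmean] at h
  rw [← ENNReal.ofReal_toReal (measure_ne_top (matG n k) {Γ | 4 * k * n ≤ hsq Γ})]
  refine ENNReal.ofReal_le_ofReal ?_
  change (matG n k).real _ ≤ _
  have : (k * n : ℝ) * (4 * (matG n k).real {Γ | 4 * k * n ≤ hsq Γ}) ≤ (k * n) * 1 := by linarith
  have := le_of_mul_le_mul_left this (by positivity)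
  linarith

lemma N_lower : ∃ M : ℝ, 1 ≤ M ∧ ∀ (n k : ℕ) (μ : Measure (EuclideanSpace ℝ (Fin n))), SFinite μ → 0 < n → 1 ≤ k →
    ∀ (δ : ℝ) (I : Set ℝ) (S : Set (EuclideanSpace ℝ (Fin n))), 0 < δ → M ≤ k * δ ^ 2 →
    MeasurableSet I → MeasurableSet S →
    (∀ x ∈ S, ∀ r : ℝ, 0 ≤ r → (1 - δ) * (k * (‖x‖ ^ 2 + n)) < r ^ 2 →
      r ^ 2 < (1 + δ) * (k * (‖x‖ ^ 2 + n)) → r ∈ I) →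
    2⁻¹ * μ S ≤ Nf μ k I := by
  obtain ⟨M, hM1, hM⟩ := gauss_conc
  refine ⟨4 * M, by linarith, fun n k μ hs hn hk δ I S hδ hMk hI hS h => ?_⟩
  have hk0 : (0:ℝ) < k := by exact_mod_cast hk
  have hn0 : (0:ℝ) < n := by exact_mod_cast hn
  unfold Nf
  rw [← lintegral_indicator_const hS]
  refine lintegral_mono fun x => ?_
  by_cases hx : x ∈ S
  swap
  · rw [Set.indicator_of_notMem hx]; exact zero_le
  rw [Set.indicator_of_mem hx]
  set T := {p : (Fin n → EuclideanSpace ℝ (Fin k)) × EuclideanSpace ℝ (Fin k) |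
    hsq p.1 ≤ 4 * k * n ∧ ‖mulG p.1 x + √n • p.2‖ ∈ I} with hT
  have hm0 : Continuous fun p : (Fin n → EuclideanSpace ℝ (Fin k)) × EuclideanSpace ℝ (Fin k) =>
      mulG p.1 x := by unfold mulG; fun_prop
  have hm : Measurable fun p : (Fin n → EuclideanSpace ℝ (Fin k)) × EuclideanSpace ℝ (Fin k) =>
      mulG p.1 x + √n • p.2 := by have := hm0.measurable; fun_prop
  have mI : Measurable fun p : (Fin n → EuclideanSpace ℝ (Fin k)) × EuclideanSpace ℝ (Fin k) =>
      indB n k p.1 * indI I ‖mulG p.1 x + √n • p.2‖ :=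
    (measurable_indB.comp measurable_fst).mul ((measurable_indI hI).comp hm.norm)
  have e1 : ∫⁻ Γ, indB n k Γ * ∫⁻ z, indI I ‖mulG Γ x + √n • z‖ ∂(stdGaussian (EuclideanSpace ℝ (Fin k)))
      ∂(matG n k) = ∫⁻ p, indB n k p.1 * indI I ‖mulG p.1 x + √n • p.2‖
        ∂((matG n k).prod (stdGaussian (EuclideanSpace ℝ (Fin k)))) := by
    rw [lintegral_prod _ mI.aemeasurable]
    refine lintegral_congr fun Γ => ?_
    have m4 : Measurable fun z : EuclideanSpace ℝ (Fin k) => ‖mulG Γ x + √n • z‖ := by fun_prop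
    have m5 : Measurable fun z : EuclideanSpace ℝ (Fin k) => indI I ‖mulG Γ x + √n • z‖ :=
      (measurable_indI hI).comp m4
    exact (lintegral_const_mul _ m5).symm
  rw [e1]
  set Q := (matG n k).prod (stdGaussian (EuclideanSpace ℝ (Fin k)))
  set B1 := {p : (Fin n → EuclideanSpace ℝ (Fin k)) × EuclideanSpace ℝ (Fin k) | 4 * k * n ≤ hsq p.1}
  set B2 := {p : (Fin n → EuclideanSpace ℝ (Fin k)) × EuclideanSpace ℝ (Fin k) |
    δ * (k * (‖x‖ ^ 2 + n)) ≤ |‖mulG p.1 x + √n • p.2‖ ^ 2 - k * (‖x‖ ^ 2 + n)|}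
  have hB1 : Q B1 ≤ ENNReal.ofReal (1/4) := by
    have : B1 = {Γ : Fin n → EuclideanSpace ℝ (Fin k) | 4 * k * n ≤ hsq Γ} ×ˢ Set.univ := by
      ext p; simp [B1]
    rw [this, Measure.prod_prod, measure_univ, mul_one]
    exact matG_hsq hn hk
  have hB2 : Q B2 ≤ ENNReal.ofReal (1/4) := by
    have hR : 0 < ‖x‖ ^ 2 + n := by positivity
    have e2 : B2 = (fun p : (Fin n → EuclideanSpace ℝ (Fin k)) × EuclideanSpace ℝ (Fin k) =>
        mulG p.1 x + √n • p.2) ⁻¹' {y | δ * (k * (‖x‖ ^ 2 + n)) ≤ |‖y‖ ^ 2 - k * (‖x‖ ^ 2 + n)|} := rfl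
    have ms : MeasurableSet {y : EuclideanSpace ℝ (Fin k) |
        δ * (k * (‖x‖ ^ 2 + n)) ≤ |‖y‖ ^ 2 - k * (‖x‖ ^ 2 + n)|} :=
      measurableSet_le (by fun_prop) (by fun_prop)
    rw [e2, ← Measure.map_apply hm ms, mulG_law, Measure.map_apply (by fun_prop) ms]
    refine le_trans (measure_mono ?_) ((hM k δ hk hδ).trans (ENNReal.ofReal_le_ofReal ?_))
    · intro z hz
      have hz' : δ * (k * (‖x‖ ^ 2 + n)) ≤ |‖√(‖x‖ ^ 2 + n) • z‖ ^ 2 - k * (‖x‖ ^ 2 + n)| := hz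
      rw [norm_smul, mul_pow, Real.norm_of_nonneg (Real.sqrt_nonneg _), Real.sq_sqrt hR.le,
        show (‖x‖ ^ 2 + n) * ‖z‖ ^ 2 - k * (‖x‖ ^ 2 + n) = (‖x‖ ^ 2 + n) * (‖z‖ ^ 2 - k) by ring,
        abs_mul, abs_of_pos hR] at hz'
      show δ * k ≤ |‖z‖ ^ 2 - k|
      refine le_of_mul_le_mul_left ?_ hR
      linarith
    · rw [div_le_div_iff₀ (by positivity) (by norm_num)]
      linarith
  have hU : (B1 ∪ B2)ᶜ ⊆ {p | 1 ≤ indB n k p.1 * indI I ‖mulG p.1 x + √n • p.2‖} := by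
    intro p hp
    rw [Set.compl_union] at hp
    have h1 : ¬ (4 * k * n ≤ hsq p.1) := hp.1
    have h2 : ¬ (δ * (k * (‖x‖ ^ 2 + n)) ≤ |‖mulG p.1 x + √n • p.2‖ ^ 2 - k * (‖x‖ ^ 2 + n)|) := hp.2
    rw [not_le] at h1 h2
    rw [abs_lt] at h2
    have h3 := h x hx ‖mulG p.1 x + √n • p.2‖ (norm_nonneg _) (by linarith [h2.1]) (by linarith [h2.2])
    show 1 ≤ indB n k p.1 * indI I ‖mulG p.1 x + √n • p.2‖
    unfold indB indI
    rw [Set.indicator_of_mem (show p.1 ∈ {Γ : Fin n → EuclideanSpace ℝ (Fin k) | hsq Γ ≤ 4 * k * n} from h1.le),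
      Set.indicator_of_mem h3, one_mul]
  have hB : Q (B1 ∪ B2) ≤ 2⁻¹ := by
    refine (measure_union_le _ _).trans ((add_le_add hB1 hB2).trans ?_)
    rw [← ENNReal.ofReal_add (by norm_num) (by norm_num), show (1/4 + 1/4 : ℝ) = 2⁻¹ by norm_num,
      ENNReal.ofReal_inv_of_pos (by norm_num)]
    simp
  have hc : 2⁻¹ ≤ Q (B1 ∪ B2)ᶜ := by
    have h1 : 1 ≤ Q (B1 ∪ B2) + Q (B1 ∪ B2)ᶜ := by
      have := measure_union_le (μ := Q) (B1 ∪ B2) (B1 ∪ B2)ᶜ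
      rwa [Set.union_compl_self, measure_univ] at this
    have h2 : (2⁻¹:ℝ≥0∞) + 2⁻¹ ≤ 2⁻¹ + Q (B1 ∪ B2)ᶜ := by
      rw [ENNReal.inv_two_add_inv_two]
      exact h1.trans (by gcongr)
    exact (ENNReal.add_le_add_iff_left (by simp)).1 h2
  refine hc.trans ((measure_mono hU).trans ?_)
  have := mul_meas_ge_le_lintegral mI 1 (μ := Q)
  rwa [one_mul] at this

end

end

section

noncomputable def Rf {n : ℕ} (x : EuclideanSpace ℝ (Fin n)) : ℝ := √(‖x‖ ^ 2 + n)

lemma Rf_sq {n : ℕ} (x : EuclideanSpace ℝ (Fin n)) : Rf x ^ 2 = ‖x‖ ^ 2 + n :=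
  Real.sq_sqrt (by positivity)

lemma Rf_nonneg {n : ℕ} (x : EuclideanSpace ℝ (Fin n)) : 0 ≤ Rf x := Real.sqrt_nonneg _

lemma continuous_Rf {n : ℕ} : Continuous (Rf (n := n)) := by unfold Rf; fun_prop

lemma measurable_Rf {n : ℕ} : Measurable (Rf (n := n)) := continuous_Rf.measurable

lemma aux_ba {t : ℝ} (ht : 0 < t) (ht1 : t ≤ 1) :
    (1 + t/4) ^ 2 * (1 + t / 8) ≤ (1 - t / 8) * (1 + t) ^ 2 := by
  nlinarith [pow_pos ht 2, pow_pos ht 3, mul_nonneg (pow_pos ht 2).le (sub_nonneg.2 ht1)]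

lemma aux_qq {t a b : ℝ} (ht : 0 < t) (ht1 : t ≤ 1) (ha0 : 0 < a) (hb0 : 0 < b)
    (hba : (1 + t / 4) * a ≤ b) : 4 * (a * b) ≤ rexp (-(t ^ 2 / 160)) * (a + b) ^ 2 := by
  have ht2 : t ^ 2 ≤ 1 := by nlinarith
  have hexp : rexp (t ^ 2 / 160) ≤ 1 + t ^ 2 / 80 := by
    have h := Real.exp_bound' (x := t ^ 2 / 160) (by positivity) (by linarith) (n := 1) (by norm_num)
    norm_num at h
    linarith
  have h1 : rexp (t ^ 2 / 160) * (4 * (a * b)) ≤ (a + b) ^ 2 := by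
    have hd : t * a / 4 ≤ b - a := by linarith
    have hta : 0 ≤ t * a := by positivity
    calc rexp (t ^ 2 / 160) * (4 * (a * b)) ≤ (1 + t ^ 2 / 80) * (4 * (a * b)) := by gcongr
      _ ≤ _ := by
        have e1 : t ^ 2 * a ^ 2 / 16 ≤ (b - a) ^ 2 := by nlinarith
        have e2 : t * a * (b - a) / 4 ≤ (b - a) ^ 2 := by nlinarith
        have e3 : t ^ 2 * a * (b - a) ≤ t * a * (b - a) := by
          have : 0 ≤ t * a * (b - a) := by apply mul_nonneg hta; linarith
          nlinarith
        nlinarith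
  rw [Real.exp_neg, ← div_eq_inv_mul, le_div_iff₀ (Real.exp_pos _)]
  linarith

lemma aux_rm {t k n : ℝ} (ht1 : t ≤ 1) (hk0 : 0 < k) (hn0 : 0 < n) :
    (1 + t / 8) * (400 * n) * k ≤ 600 * k * n := by
  have : (1 + t / 8) * (400 * (k * n)) ≤ (3/2) * (400 * (k * n)) := by gcongr; linarith
  linarith

lemma aux_h6 {t k κ : ℝ} (hκle : κ ≤ t ^ 2 * k / 1280) (hk2 : 2 ≤ k) :
    2 * (κ + (k - 1) * -(t ^ 2 / 320)) ≤ -(t ^ 2 * k / 640) := by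
  have := mul_nonneg (sq_nonneg t) (sub_nonneg.2 hk2)
  linarith

set_option maxHeartbeats 1000000 in
lemma A_core : ∃ K M : ℝ, 1 ≤ K ∧ 1 ≤ M ∧ ∀ (n k : ℕ) (μ : Measure (EuclideanSpace ℝ (Fin n))), IsoLC μ → 0 < n →
    2 ≤ k → ∀ ρ t : ℝ, 0 < ρ → 0 < t → t ≤ 1 → 64 * M ≤ k * t ^ 2 → K * k ^ 2 ≤ t ^ 2 * n / 1280 →
    (1 + t) * ρ ≤ 20 * √n →
    μ.real {x | Rf x ≤ ρ} * μ.real {x | (1 + t) * ρ ≤ Rf x ∧ Rf x ≤ 20 * √n} ≤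
      4 * rexp (-(t ^ 2 * k / 640)) := by
  obtain ⟨C0, hC01, hC0⟩ := exp_moment_exists
  obtain ⟨M, hM1, hM⟩ := N_lower
  set K1 : ℝ := 128 * 604 ^ 2 + 256 * C0 with hK1
  refine ⟨4 * 605 * K1, M, by rw [hK1]; linarith, hM1, ?_⟩
  intro n k μ hμ hn hk ρ t hρ ht ht1 hMk hKk hρ20
  have hpr := hμ.prob
  have hn0 : (0:ℝ) < n := by exact_mod_cast hn
  have hk2 : (2:ℝ) ≤ k := by exact_mod_cast hk
  have hk0 : (0:ℝ) < k := by linarith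
  have hK1p : 0 < K1 := by rw [hK1]; linarith
  have hC3le : 64 * (2 * (604 * (k:ℝ)) ^ 2 + 4 * C0) ≤ K1 * k ^ 2 := by
    have : (1:ℝ) ≤ k ^ 2 := by nlinarith
    rw [hK1]; nlinarith
  set C3 : ℝ := 64 * (2 * (604 * (k:ℝ)) ^ 2 + 4 * C0) with hC3
  have hC3p : 0 < C3 := by rw [hC3]; positivity
  have htn : t ^ 2 * n ≤ n := by
    have : t ^ 2 ≤ 1 := by nlinarith
    nlinarith
  have hCn : 4 * C3 ≤ n := by linarith [mul_pos hK1p (pow_pos hk0 2)]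
  set κ : ℝ := 4 * C3 / n * (604 * k + 1) with hκ
  have hκle : κ ≤ t ^ 2 * k / 1280 := by
    have h1 : κ ≤ 4 * (K1 * k ^ 2) / n * (605 * k) := by
      rw [hκ]
      gcongr
      linarith
    refine h1.trans ?_
    rw [div_mul_eq_mul_div, div_le_iff₀ hn0]
    calc 4 * (K1 * (k:ℝ) ^ 2) * (605 * k) = (4 * 605 * K1 * k ^ 2) * k := by ring
      _ ≤ (t ^ 2 * n / 1280) * k := by gcongr
      _ = _ := by ring
  have Hst : ∀ (Γ D : Fin n → EuclideanSpace ℝ (Fin k)) (y : EuclideanSpace ℝ (Fin k)),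
      hsq Γ ≤ 4 * k * n → ‖y‖ ^ 2 ≤ 600 * k * n →
      rexp (-(κ + hsq D / 4)) * Wf μ Γ y ≤ Wf μ (Γ + D) y := by
    intro Γ D y h1 h2
    refine hμ.stability hC01 (hC0 n μ hpr hμ.lc) hn Γ D y (a := 604 * k) ?_ hC3 hCn
    rw [div_le_iff₀ hn0]
    linarith
  set δ := t / 8 with hδ
  have hδ0 : 0 < δ := by positivity
  have hδ1 : δ ≤ 1/8 := by rw [hδ]; linarith
  set a := √(1 + δ) * ρ * √k with ha
  set b := √(1 - δ) * ((1 + t) * ρ) * √k with hb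
  set rm := √(1 + δ) * (20 * √n) * √k with hrm
  have hsk : √(k:ℝ) ^ 2 = k := Real.sq_sqrt hk0.le
  have hsn : √(n:ℝ) ^ 2 = n := Real.sq_sqrt hn0.le
  have hs1 : √(1 + δ) ^ 2 = 1 + δ := Real.sq_sqrt (by linarith)
  have hs2 : √(1 - δ) ^ 2 = 1 - δ := Real.sq_sqrt (by linarith)
  have ha0 : 0 < a := by
    have : 0 < √(1 + δ) := Real.sqrt_pos.2 (by linarith)
    positivity
  have hb0 : 0 < b := by
    have : 0 < √(1 - δ) := Real.sqrt_pos.2 (by linarith)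
    positivity
  have ha2 : a ^ 2 = (1 + δ) * ρ ^ 2 * k := by rw [ha, mul_pow, mul_pow, hs1, hsk]
  have hb2 : b ^ 2 = (1 - δ) * ((1 + t) * ρ) ^ 2 * k := by rw [hb, mul_pow, mul_pow, hs2, hsk]
  have hrm2 : rm ^ 2 = (1 + δ) * (400 * n) * k := by
    rw [hrm, mul_pow, mul_pow, hs1, hsk, mul_pow, hsn]; norm_num
  have hrm0 : 0 ≤ rm := by positivity
  have hba : (1 + t / 4) * a ≤ b := by
    refine le_of_sq_le_sq ?_ hb0.le
    rw [mul_pow, ha2, hb2]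
    have : (1 + t/4) ^ 2 * (1 + δ) ≤ (1 - δ) * (1 + t) ^ 2 := by
      rw [hδ]
      exact aux_ba ht ht1
    calc _ = ((1 + t/4) ^ 2 * (1 + δ)) * (ρ ^ 2 * k) := by ring
      _ ≤ ((1 - δ) * (1 + t) ^ 2) * (ρ ^ 2 * k) := by gcongr
      _ = _ := by ring
  have hab : a ≤ b := by
    have : 0 ≤ t / 4 * a := by positivity
    linarith
  have hbr : b ≤ rm := by
    rw [hb, hrm]
    gcongr
    linarith
  have hrm3 : rm ^ 2 ≤ 600 * k * n := by
    rw [hrm2, hδ]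
    exact aux_rm ht1 hk0 hn0
  set q := rexp (-(t ^ 2 / 320)) with hq
  have hq2 : q ^ 2 = rexp (-(t ^ 2 / 160)) := by rw [hq, ← Real.exp_nat_mul]; congr 1; push_cast; ring
  have hqq : 4 * (a * b) ≤ q ^ 2 * (a + b) ^ 2 := by
    rw [hq2]
    exact aux_qq ht ht1 ha0 hb0 hba
  have hN := N_ineq hμ hn (by omega) Hst ha0 hab hbr hrm3 (Real.exp_pos _).le hqq
  have hδM : M ≤ k * δ ^ 2 := by rw [hδ]; linarith
  have mS1 : MeasurableSet {x : EuclideanSpace ℝ (Fin n) | Rf x ≤ ρ} :=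
    measurableSet_le measurable_Rf measurable_const
  have mS2 : MeasurableSet {x : EuclideanSpace ℝ (Fin n) | (1 + t) * ρ ≤ Rf x ∧ Rf x ≤ 20 * √n} :=
    (measurableSet_le measurable_const measurable_Rf).inter (measurableSet_le measurable_Rf measurable_const)
  have hN1 := hM n k μ inferInstance hn (by omega) δ (Set.Ioc 0 a) {x | Rf x ≤ ρ} hδ0 hδM measurableSet_Ioc mS1 (by
    intro x hx r hr h1 h2
    have hx' : Rf x ≤ ρ := hx
    have hx2 := Rf_sq x
    have : 0 < r ^ 2 := lt_of_le_of_lt (by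
      have : 0 ≤ 1 - δ := by linarith
      positivity) h1
    refine ⟨lt_of_le_of_ne hr (by rintro rfl; simp at this), ?_⟩
    refine le_of_sq_le_sq (h2.le.trans ?_) ha0.le
    rw [← hx2, ha2]
    have := Rf_nonneg x
    calc (1 + δ) * (k * Rf x ^ 2) ≤ (1 + δ) * (k * ρ ^ 2) := by gcongr
      _ = _ := by ring)
  have hN2 := hM n k μ inferInstance hn (by omega) δ (Set.Icc b rm)
    {x | (1 + t) * ρ ≤ Rf x ∧ Rf x ≤ 20 * √n} hδ0 hδM measurableSet_Icc mS2 (by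
    intro x hx r hr h1 h2
    have hx1 : (1 + t) * ρ ≤ Rf x := hx.1
    have hx3 : Rf x ≤ 20 * √n := hx.2
    have hx2 := Rf_sq x
    have h0 := Rf_nonneg x
    have : 0 ≤ 1 - δ := by linarith
    rw [← hx2] at h1 h2
    constructor
    · refine le_of_sq_le_sq (le_trans ?_ h1.le) hr
      rw [hb2]
      calc _ = (1 - δ) * (k * ((1 + t) * ρ) ^ 2) := by ring
        _ ≤ _ := by gcongr
    · refine le_of_sq_le_sq (h2.le.trans ?_) hrm0
      rw [hrm2]
      calc (1 + δ) * (k * Rf x ^ 2) ≤ (1 + δ) * (k * (20 * √n) ^ 2) := by gcongr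
        _ = _ := by rw [mul_pow, hsn]; ring)
  set P1 := {x : EuclideanSpace ℝ (Fin n) | Rf x ≤ ρ}
  set P2 := {x : EuclideanSpace ℝ (Fin n) | (1 + t) * ρ ≤ Rf x ∧ Rf x ≤ 20 * √n}
  have h3 : (2⁻¹ * μ P1) ^ (1/2:ℝ) * (2⁻¹ * μ P2) ^ (1/2:ℝ) ≤ ENNReal.ofReal (rexp κ * q ^ (k - 1)) := by
    refine le_trans ?_ hN
    gcongr
  have h4 : (2⁻¹ * μ P1) * (2⁻¹ * μ P2) ≤ ENNReal.ofReal (rexp κ * q ^ (k - 1)) ^ 2 := by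
    calc _ = ((2⁻¹ * μ P1) ^ (1/2:ℝ) * (2⁻¹ * μ P2) ^ (1/2:ℝ)) ^ 2 := by
          rw [mul_pow, ← ENNReal.rpow_natCast, ← ENNReal.rpow_natCast, ← ENNReal.rpow_mul, ← ENNReal.rpow_mul]
          norm_num
      _ ≤ _ := by gcongr
  have h5 := ENNReal.toReal_mono (by finiteness) h4
  rw [ENNReal.toReal_pow, ENNReal.toReal_ofReal (by positivity)] at h5
  simp only [ENNReal.toReal_mul, ENNReal.toReal_inv, ENNReal.toReal_ofNat] at h5
  have h6 : (rexp κ * q ^ (k - 1)) ^ 2 ≤ rexp (-(t ^ 2 * k / 640)) := by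
    rw [hq, ← Real.exp_nat_mul, ← Real.exp_add, ← Real.exp_nat_mul, Real.exp_le_exp]
    rw [Nat.cast_sub (by omega)]
    push_cast
    exact aux_h6 hκle hk2
  change μ.real P1 * μ.real P2 ≤ _
  unfold Measure.real
  linarith

lemma lemmaA : ∃ c C : ℝ, 0 < c ∧ 1 ≤ C ∧ ∀ (n : ℕ) (μ : Measure (EuclideanSpace ℝ (Fin n))), IsoLC μ → 0 < n →
    ∀ ρ t : ℝ, 0 < ρ → 0 ≤ t → t ≤ 1 →
    μ.real {x | Rf x ≤ ρ} * μ.real {x | (1 + t) * ρ ≤ Rf x ∧ Rf x ≤ 20 * √n} ≤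
      C * rexp (-(c * (t ^ 3 * √n))) := by
  obtain ⟨K, M, hK, hM, h⟩ := A_core
  set c2 : ℝ := 1 / (1280 * K) with hc2
  have hc2p : 0 < c2 := by positivity
  have hKc : K * c2 ^ 2 ≤ 1 / 1280 := by
    rw [hc2, div_pow, one_pow, mul_one_div, div_le_div_iff₀ (by positivity) (by norm_num)]
    nlinarith
  set L : ℝ := 128 * M / c2 with hL
  have hLp : 0 < L := by positivity
  set c := c2 / 1280 with hc
  refine ⟨c, 4 + rexp (c * L), by positivity, by linarith [Real.exp_pos (c * L)], ?_⟩
  intro n μ hμ hn ρ t hρ ht ht1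
  have hpr := hμ.prob
  have hn0 : (0:ℝ) < n := by exact_mod_cast hn
  have hsn : √(n:ℝ) ^ 2 = n := Real.sq_sqrt hn0.le
  have hsn0 : 0 < √(n:ℝ) := Real.sqrt_pos.2 hn0
  by_cases hsmall : t ^ 3 * √n < L
  · have h1 : μ.real {x | Rf x ≤ ρ} * μ.real {x | (1 + t) * ρ ≤ Rf x ∧ Rf x ≤ 20 * √n} ≤ 1 :=
      mul_le_one₀ measureReal_le_one measureReal_nonneg measureReal_le_one
    refine h1.trans ?_
    calc (1:ℝ) = rexp (c * L) * rexp (-(c * L)) := by rw [← Real.exp_add]; simp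
      _ ≤ (4 + rexp (c * L)) * rexp (-(c * (t ^ 3 * √n))) := by
        gcongr
        linarith
  rw [not_lt] at hsmall
  by_cases h20 : (1 + t) * ρ ≤ 20 * √n
  swap
  · have : {x : EuclideanSpace ℝ (Fin n) | (1 + t) * ρ ≤ Rf x ∧ Rf x ≤ 20 * √n} = ∅ := by
      ext x
      simp only [Set.mem_ofPred_eq, Set.mem_empty_iff_false, iff_false, not_and, not_le]
      intro h1
      push Not at h20
      linarith
    rw [this]
    simp only [measureReal_empty, mul_zero]
    positivity
  have ht0 : 0 < t := by
    rcases ht.lt_or_eq with h' | h'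
    · exact h'
    · rw [← h'] at hsmall; norm_num at hsmall; linarith
  have h1 : 128 * M ≤ c2 * (t ^ 3 * √n) := by
    rw [hL, div_le_iff₀ hc2p] at hsmall
    linarith
  have ht3 : t ^ 3 ≤ t := by nlinarith [mul_nonneg ht0.le (sub_nonneg.2 ht1)]
  have h2 : c2 * (t ^ 3 * √n) ≤ c2 * t * √n := by
    rw [mul_assoc]; gcongr
  set k := ⌊c2 * t * √n⌋₊ with hk
  have hk1 : (k:ℝ) ≤ c2 * t * √n := Nat.floor_le (by positivity)
  have hk2 : c2 * t * √n < k + 1 := Nat.lt_floor_add_one _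
  have hk3 : (64:ℝ) ≤ k := by linarith
  have hk4 : c2 * t * √n / 2 ≤ k := by linarith
  have := h n k μ hμ hn (by
    have : ((2:ℕ):ℝ) ≤ k := by push_cast; linarith
    exact_mod_cast this) ρ t hρ ht0 ht1 (by
      have : c2 * t * √n / 2 * t ^ 2 ≤ k * t ^ 2 := by gcongr
      nlinarith) (by
      calc K * (k:ℝ) ^ 2 ≤ K * (c2 * t * √n) ^ 2 := by gcongr
        _ = (K * c2 ^ 2) * (t ^ 2 * n) := by rw [mul_pow, mul_pow, hsn]; ring
        _ ≤ (1 / 1280) * (t ^ 2 * n) := by gcongr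
        _ = _ := by ring) h20
  refine this.trans ?_
  have e : -(t ^ 2 * k / 640) ≤ -(c * (t ^ 3 * √n)) := by
    have : t ^ 2 * (c2 * t * √n / 2) ≤ t ^ 2 * k := by gcongr
    rw [hc]
    nlinarith
  have := Real.exp_pos (c * L)
  gcongr
  linarith

end

section

lemma exists_median {α : Type*} [MeasurableSpace α] (μ : Measure α) [IsProbabilityMeasure μ] (f : α → ℝ)
    (hf : Measurable f) (h0 : ∀ x, 0 ≤ f x) :
    ∃ m, 1/2 ≤ μ.real {x | f x ≤ m} ∧ 1/2 ≤ μ.real {x | m ≤ f x} := by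
  set S : Set ℝ := {r | 1/2 ≤ μ.real {x | f x ≤ r}} with hS
  have hmono : ∀ {r s : ℝ}, r ≤ s → μ.real {x | f x ≤ r} ≤ μ.real {x | f x ≤ s} := by
    intro r s hrs
    exact measureReal_mono fun x (hx : f x ≤ r) => (hx.trans hrs : f x ≤ s)
  have hms : ∀ r, MeasurableSet {x | f x ≤ r} := fun r => measurableSet_le hf measurable_const
  have hbdd : BddBelow S := by
    refine ⟨0, fun r hr => ?_⟩
    by_contra hneg
    push Not at hneg
    have : {x | f x ≤ r} = ∅ := by
      ext x
      simp only [Set.mem_ofPred_eq, Set.mem_empty_iff_false, iff_false, not_le]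
      exact hneg.trans_le (h0 x)
    have hr' : 1/2 ≤ μ.real {x | f x ≤ r} := hr
    rw [this] at hr'
    norm_num at hr'
  have hne : S.Nonempty := by
    have hU : (⋃ j : ℕ, {x | f x ≤ (j:ℝ)}) = Set.univ := by
      ext x
      simp only [Set.mem_iUnion, Set.mem_univ, iff_true]
      obtain ⟨j, hj⟩ := exists_nat_ge (f x)
      exact ⟨j, hj⟩
    have ht := tendsto_measure_iUnion_atTop (μ := μ) (s := fun j : ℕ => {x | f x ≤ (j:ℝ)})
      (fun i j hij x (hx : f x ≤ i) => (hx.trans (by exact_mod_cast hij) : f x ≤ j))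
    rw [hU, measure_univ] at ht
    have ht' := (ENNReal.tendsto_toReal ENNReal.one_ne_top).comp ht
    have h1 := ht'.eventually (lt_mem_nhds (show (1/2:ℝ) < (1:ℝ≥0∞).toReal by norm_num))
    obtain ⟨j, hj⟩ := h1.exists
    exact ⟨j, show 1/2 ≤ μ.real {x | f x ≤ (j:ℝ)} from le_of_lt hj⟩
  set m := sInf S with hm
  have hgt : ∀ r, m < r → 1/2 ≤ μ.real {x | f x ≤ r} := by
    intro r hr
    obtain ⟨s, hs, hsr⟩ := exists_lt_of_csInf_lt hne hr
    exact le_trans (show 1/2 ≤ μ.real {x | f x ≤ s} from hs) (hmono hsr.le)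
  have hlt : ∀ r, r < m → μ.real {x | f x ≤ r} ≤ 1/2 := by
    intro r hr
    by_contra hc
    push Not at hc
    exact absurd (csInf_le hbdd (show r ∈ S from (le_of_lt hc : 1/2 ≤ μ.real {x | f x ≤ r}))) (not_le.2 hr)
  have hj0 : ∀ j : ℕ, (0:ℝ) < 1 / ((j:ℝ) + 1) := fun j => by positivity
  have hjanti : ∀ {i j : ℕ}, i ≤ j → 1 / ((j:ℝ) + 1) ≤ 1 / ((i:ℝ) + 1) := by
    intro i j hij
    have : (i:ℝ) ≤ j := by exact_mod_cast hij
    gcongr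
  refine ⟨m, ?_, ?_⟩
  · have hI : (⋂ j : ℕ, {x | f x ≤ m + 1 / ((j:ℝ) + 1)}) = {x | f x ≤ m} := by
      ext x
      simp only [Set.mem_iInter, Set.mem_ofPred_eq]
      constructor
      · intro h
        refine le_of_forall_pos_le_add fun ε hε => ?_
        obtain ⟨j, hj⟩ := exists_nat_one_div_lt hε
        linarith [h j]
      · intro h j
        linarith [hj0 j]
    have ht := tendsto_measure_iInter_atTop (μ := μ) (s := fun j : ℕ => {x | f x ≤ m + 1 / ((j:ℝ) + 1)})
      (fun j => (hms _).nullMeasurableSet)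
      (fun i j hij x (hx : f x ≤ m + 1 / ((j:ℝ) + 1)) => (hx.trans (by linarith [hjanti hij]) : f x ≤ m + 1 / ((i:ℝ) + 1)))
      ⟨0, measure_ne_top _ _⟩
    rw [hI] at ht
    have ht' := (ENNReal.tendsto_toReal (measure_ne_top μ _)).comp ht
    exact ge_of_tendsto' ht' fun j => hgt _ (by linarith [hj0 j])
  · have hI : (⋃ j : ℕ, {x | f x ≤ m - 1 / ((j:ℝ) + 1)}) = {x | f x < m} := by
      ext x
      simp only [Set.mem_iUnion, Set.mem_ofPred_eq]
      constructor
      · rintro ⟨j, hj⟩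
        linarith [hj0 j]
      · intro h
        obtain ⟨j, hj⟩ := exists_nat_one_div_lt (sub_pos.2 h)
        exact ⟨j, by linarith⟩
    have ht := tendsto_measure_iUnion_atTop (μ := μ) (s := fun j : ℕ => {x | f x ≤ m - 1 / ((j:ℝ) + 1)})
      (fun i j hij x (hx : f x ≤ m - 1 / ((i:ℝ) + 1)) => (hx.trans (by linarith [hjanti hij]) : f x ≤ m - 1 / ((j:ℝ) + 1)))
    rw [hI] at ht
    have ht' := (ENNReal.tendsto_toReal (measure_ne_top μ _)).comp ht
    have h1 : μ.real {x | f x < m} ≤ 1/2 := le_of_tendsto' ht' fun j => hlt _ (by linarith [hj0 j])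
    have h2 := probReal_add_probReal_compl (μ := μ) (measurableSet_lt hf (measurable_const (a := m)))
    have h3 : {x | f x < m}ᶜ = {x | m ≤ f x} := by ext x; simp
    rw [h3] at h2
    linarith

section
variable {n : ℕ} {μ : Measure (EuclideanSpace ℝ (Fin n))}

lemma IsoLC.norm_int (hμ : IsoLC μ) : Integrable (fun x => ‖x‖ ^ 2) μ := by
  have : (fun x : EuclideanSpace ℝ (Fin n) => ‖x‖ ^ 2) =
      fun x => ∑ i, ⟪x, EuclideanSpace.single i (1:ℝ)⟫ ^ 2 := by
    ext x; simp [EuclideanSpace.norm_sq_eq, EuclideanSpace.inner_single_right]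
  rw [this]
  exact integrable_finsetSum _ fun i _ => hμ.int _

lemma IsoLC.norm_mean (hμ : IsoLC μ) : ∫ x, ‖x‖ ^ 2 ∂μ = n := by
  have : (fun x : EuclideanSpace ℝ (Fin n) => ‖x‖ ^ 2) =
      fun x => ∑ i, ⟪x, EuclideanSpace.single i (1:ℝ)⟫ ^ 2 := by
    ext x; simp [EuclideanSpace.norm_sq_eq, EuclideanSpace.inner_single_right]
  rw [this, integral_finsetSum _ fun i _ => hμ.int _]
  simp [hμ.iso]

lemma IsoLC.markov (hμ : IsoLC μ) {r : ℝ} (hr : 0 < r) : μ.real {x | r ≤ ‖x‖} ≤ n / r ^ 2 := by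
  have h := mul_meas_ge_le_integral_of_nonneg (μ := μ) (f := fun x => ‖x‖ ^ 2)
    (Filter.Eventually.of_forall fun _ => sq_nonneg _) hμ.norm_int (r ^ 2)
  rw [hμ.norm_mean] at h
  have e : {x : EuclideanSpace ℝ (Fin n) | r ^ 2 ≤ ‖x‖ ^ 2} = {x | r ≤ ‖x‖} := by
    ext x
    simp only [Set.mem_ofPred_eq]
    exact pow_le_pow_iff_left₀ hr.le (norm_nonneg _) (by norm_num)
  rw [e] at h
  rw [le_div_iff₀ (by positivity)]
  linarith

lemma IsoLC.R_int (hμ : IsoLC μ) : Integrable (fun x => Rf x ^ 2) μ := by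
  have := hμ.prob
  simp only [Rf_sq]
  exact hμ.norm_int.add (integrable_const _)

lemma IsoLC.R_mean (hμ : IsoLC μ) : ∫ x, Rf x ^ 2 ∂μ = 2 * n := by
  have := hμ.prob
  simp only [Rf_sq]
  rw [integral_add hμ.norm_int (integrable_const _), hμ.norm_mean]
  simp
  ring

lemma IsoLC.R_markov (hμ : IsoLC μ) {r : ℝ} (hr : 0 < r) : μ.real {x | r ≤ Rf x} ≤ 2 * n / r ^ 2 := by
  have h := mul_meas_ge_le_integral_of_nonneg (μ := μ) (f := fun x => Rf x ^ 2)
    (Filter.Eventually.of_forall fun _ => sq_nonneg _) hμ.R_int (r ^ 2)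
  rw [hμ.R_mean] at h
  have e : {x : EuclideanSpace ℝ (Fin n) | r ^ 2 ≤ Rf x ^ 2} = {x | r ≤ Rf x} := by
    ext x
    simp only [Set.mem_ofPred_eq]
    exact pow_le_pow_iff_left₀ hr.le (Rf_nonneg _) (by norm_num)
  rw [e] at h
  rw [le_div_iff₀ (by positivity)]
  linarith

lemma Rf_ge (x : EuclideanSpace ℝ (Fin n)) : √n ≤ Rf x := by
  unfold Rf
  exact Real.sqrt_le_sqrt (by nlinarith [sq_nonneg ‖x‖])

lemma norm_le_Rf (x : EuclideanSpace ℝ (Fin n)) : ‖x‖ ≤ Rf x := by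
  unfold Rf
  exact Real.le_sqrt_of_sq_le (by linarith [(Nat.cast_nonneg n : (0:ℝ) ≤ n)])

end

lemma T1 : ∃ c C : ℝ, 0 < c ∧ 1 ≤ C ∧ ∀ (n : ℕ) (μ : Measure (EuclideanSpace ℝ (Fin n))), IsoLC μ → 0 < n →
    ∃ m, √n ≤ m ∧ m ≤ 2 * √n ∧ ∀ s, 0 ≤ s → μ.real {x | s ≤ |Rf x - m| ∧ Rf x ≤ 20 * √n} ≤
      C * rexp (-(c * ((s / √n) ^ 3 * √n))) := by
  obtain ⟨c, C, hc, hC, h⟩ := lemmaA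
  refine ⟨c / 8000, 6 * C, by positivity, by linarith, fun n μ hμ hn => ?_⟩
  have hpr := hμ.prob
  have hn0 : (0:ℝ) < n := by exact_mod_cast hn
  have hsn : √(n:ℝ) ^ 2 = n := Real.sq_sqrt hn0.le
  have hsn0 : 0 < √(n:ℝ) := Real.sqrt_pos.2 hn0
  obtain ⟨m, hm1, hm2⟩ := exists_median μ Rf measurable_Rf Rf_nonneg
  have hmn : √n ≤ m := by
    by_contra hlt
    push Not at hlt
    have : {x : EuclideanSpace ℝ (Fin n) | Rf x ≤ m} = ∅ := by
      ext x
      simp only [Set.mem_ofPred_eq, Set.mem_empty_iff_false, iff_false, not_le]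
      exact hlt.trans_le (Rf_ge x)
    rw [this] at hm1
    norm_num at hm1
  have hm0 : 0 < m := hsn0.trans_le hmn
  have hmn2 : m ≤ 2 * √n := by
    by_contra hlt
    push Not at hlt
    have h1 := hm2.trans (hμ.R_markov hm0)
    rw [le_div_iff₀ (by positivity)] at h1
    nlinarith
  have hbig : μ.real {x | 20 * √n ≤ Rf x} ≤ 1/4 := by
    refine (hμ.R_markov (by positivity)).trans ?_
    rw [mul_pow, hsn, div_le_iff₀ (by positivity)]
    linarith
  refine ⟨m, hmn, hmn2, fun s hs => ?_⟩
  set τ := s / √n with hτ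
  have hsτ : s = τ * √n := by rw [hτ]; field_simp
  have hτ0 : 0 ≤ τ := by positivity
  by_cases hs20 : 20 < τ
  · have : {x : EuclideanSpace ℝ (Fin n) | s ≤ |Rf x - m| ∧ Rf x ≤ 20 * √n} = ∅ := by
      ext x
      simp only [Set.mem_ofPred_eq, Set.mem_empty_iff_false, iff_false, not_and]
      intro h1 h2
      have h3 : |Rf x - m| ≤ 20 * √n := by
        rw [abs_le]
        constructor <;> nlinarith [Rf_nonneg x]
      nlinarith
    rw [this]
    simp only [measureReal_empty]
    positivity
  push Not at hs20
  set t := τ / 20 with ht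
  have ht0 : 0 ≤ t := by positivity
  have ht1 : t ≤ 1 := by rw [ht]; linarith
  set ε := C * rexp (-(c * (t ^ 3 * √n))) with hε
  have hε0 : 0 ≤ ε := by positivity
  have hεe : ε = C * rexp (-(c / 8000 * (τ ^ 3 * √n))) := by
    rw [hε, ht]; congr 3; ring
  have htm : t * (2 * √n) ≤ s := by rw [hsτ, ht]; nlinarith [mul_nonneg hτ0 hsn0.le]
  have hup : μ.real {x | m + s ≤ Rf x ∧ Rf x ≤ 20 * √n} ≤ 2 * ε := by
    have h1 := h n μ hμ hn m t hm0 ht0 ht1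
    have h2 : μ.real {x | m + s ≤ Rf x ∧ Rf x ≤ 20 * √n} ≤ μ.real {x | (1 + t) * m ≤ Rf x ∧ Rf x ≤ 20 * √n} := by
      refine measureReal_mono fun x hx => ⟨le_trans ?_ hx.1, hx.2⟩
      have : t * m ≤ t * (2 * √n) := by gcongr
      linarith
    have h3 : 1/2 * μ.real {x | m + s ≤ Rf x ∧ Rf x ≤ 20 * √n} ≤ ε := by
      refine le_trans ?_ h1
      gcongr
    linarith
  have hlow : μ.real {x | Rf x ≤ m - s} ≤ 4 * ε := by
    by_cases hms : m - s ≤ 0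
    · have : {x : EuclideanSpace ℝ (Fin n) | Rf x ≤ m - s} = ∅ := by
        ext x
        simp only [Set.mem_ofPred_eq, Set.mem_empty_iff_false, iff_false, not_le]
        linarith [Rf_ge x]
      rw [this]
      simp only [measureReal_empty]
      positivity
    push Not at hms
    have h1 := h n μ hμ hn (m - s) t hms ht0 ht1
    have h2 : 1/4 ≤ μ.real {x | (1 + t) * (m - s) ≤ Rf x ∧ Rf x ≤ 20 * √n} := by
      have h3 : μ.real {x | m ≤ Rf x} ≤ μ.real {x | (1 + t) * (m - s) ≤ Rf x ∧ Rf x ≤ 20 * √n} +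
          μ.real {x | 20 * √n ≤ Rf x} := by
        refine le_trans (measureReal_mono ?_) (measureReal_union_le _ _)
        intro x hx
        have hx' : m ≤ Rf x := hx
        by_cases hx2 : Rf x ≤ 20 * √n
        · left
          refine ⟨le_trans ?_ hx', hx2⟩
          have : t * (m - s) ≤ t * (2 * √n) := by gcongr; linarith
          linarith
        · right
          push Not at hx2
          exact hx2.le
      linarith
    have h3 : μ.real {x | Rf x ≤ m - s} * (1/4) ≤ ε := by
      refine le_trans ?_ h1
      gcongr
    linarith
  have hun : μ.real {x | s ≤ |Rf x - m| ∧ Rf x ≤ 20 * √n} ≤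
      μ.real {x | m + s ≤ Rf x ∧ Rf x ≤ 20 * √n} + μ.real {x | Rf x ≤ m - s} := by
    refine le_trans (measureReal_mono ?_) (measureReal_union_le _ _)
    intro x hx
    rcases le_abs.1 hx.1 with h1 | h1
    · left; exact ⟨by linarith, hx.2⟩
    · right
      show Rf x ≤ m - s
      linarith
  rw [mul_assoc, ← hεe]
  linarith

end

section

lemma IsLC.sets_real {n : ℕ} {μ : Measure (EuclideanSpace ℝ (Fin n))} [IsProbabilityMeasure μ]
    (hμ : IsLC μ) {l : ℝ} (hl0 : 0 < l)
    (hl1 : l < 1) {S K H : Set (EuclideanSpace ℝ (Fin n))} (hS : MeasurableSet S)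
    (hK : MeasurableSet K) (hH : MeasurableSet H)
    (h : ∀ x ∈ S, ∀ y ∈ K, l • x + (1 - l) • y ∈ H) :
    μ.real S ^ l * μ.real K ^ (1 - l) ≤ μ.real H := by
  have h1 := ENNReal.toReal_mono (measure_ne_top μ H) (hμ.sets hl0 hl1 hS hK hH h)
  rwa [ENNReal.toReal_mul, ← ENNReal.toReal_rpow, ← ENNReal.toReal_rpow] at h1

lemma aux_min {c C : ℝ} (hc : 0 < c) (hC : 1 ≤ C) : ∃ c' : ℝ, 0 < c' ∧ ∀ r η : ℝ, 0 ≤ r → η ≤ 1/25 →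
    η ≤ C * rexp (-(c * (27 * r))) → 4 / 3 * η ≤ rexp (-(c' * r)) := by
  set L := 2 / (27 * c) * Real.log (4 * C / 3) with hL
  have hlog : 0 < Real.log (4 * C / 3) := Real.log_pos (by linarith)
  have hL0 : 0 < L := by positivity
  refine ⟨min (27 * c / 2) (1 / L), by positivity, fun r η hr h1 h2 => ?_⟩
  by_cases hrL : L ≤ r
  · have h3 : Real.log (4 * C / 3) ≤ 27 * c / 2 * r := by
      calc Real.log (4 * C / 3) = 27 * c / 2 * L := by rw [hL]; field_simp
        _ ≤ _ := by gcongr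
    calc 4 / 3 * η ≤ 4 / 3 * (C * rexp (-(c * (27 * r)))) := by gcongr
      _ = rexp (Real.log (4 * C / 3)) * rexp (-(c * (27 * r))) := by
        rw [Real.exp_log (by positivity)]; ring
      _ = rexp (Real.log (4 * C / 3) - 27 * c * r) := by rw [← Real.exp_add]; congr 1; ring
      _ ≤ rexp (-(27 * c / 2 * r)) := by
        rw [Real.exp_le_exp]; linarith
      _ ≤ _ := by
        rw [Real.exp_le_exp, neg_le_neg_iff]
        gcongr
        exact min_le_left _ _
  · push Not at hrL
    have h3 : min (27 * c / 2) (1 / L) * r ≤ 1 := by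
      calc _ ≤ 1 / L * r := by gcongr; exact min_le_right _ _
        _ ≤ 1 / L * L := by gcongr
        _ = 1 := by field_simp
    calc 4 / 3 * η ≤ 1 / 4 := by linarith
      _ ≤ rexp (-1) := by
        rw [Real.exp_neg, ← one_div]
        exact one_div_le_one_div_of_le (Real.exp_pos _) (by linarith [Real.exp_one_lt_d9])
      _ ≤ _ := by rw [Real.exp_le_exp]; linarith

lemma T2a : ∃ c : ℝ, 0 < c ∧ ∀ (n : ℕ) (μ : Measure (EuclideanSpace ℝ (Fin n))), IsoLC μ → 0 < n →
    ∀ s, 8 * √n ≤ s → μ.real {x | s ≤ ‖x‖ ∧ ‖x‖ ≤ 2 * s} ≤ rexp (-(c * s)) := by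
  obtain ⟨c, C, hc, hC, h⟩ := T1
  obtain ⟨c', hc', hmin⟩ := aux_min hc hC
  refine ⟨c' / 7, by positivity, fun n μ hμ hn s hs => ?_⟩
  have hpr := hμ.prob
  have hn0 : (0:ℝ) < n := by exact_mod_cast hn
  have hsn : √(n:ℝ) ^ 2 = n := Real.sq_sqrt hn0.le
  have hsn0 : 0 < √(n:ℝ) := Real.sqrt_pos.2 hn0
  have hs0 : 0 < s := by linarith
  obtain ⟨m, hm1, hm2, hm⟩ := h n μ hμ hn
  set H := {x : EuclideanSpace ℝ (Fin n) | 5 * √n ≤ ‖x‖ ∧ ‖x‖ ≤ 18 * √n} with hH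
  have hη1 : μ.real H ≤ 1/25 := by
    refine (measureReal_mono (fun x hx => hx.1)).trans ((hμ.markov (r := 5 * √n) (by positivity)).trans ?_)
    rw [mul_pow, hsn, div_le_iff₀ (by positivity)]
    linarith
  have hη2 : μ.real H ≤ C * rexp (-(c * (27 * √n))) := by
    have h1 := hm (3 * √n) (by positivity)
    rw [show 3 * √n / √n = 3 by field_simp] at h1
    norm_num at h1
    refine (measureReal_mono ?_).trans h1
    intro x hx
    have hx1 : 5 * √n ≤ ‖x‖ := hx.1
    have hx2 : ‖x‖ ≤ 18 * √n := hx.2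
    have h2 := norm_le_Rf x
    refine ⟨le_trans ?_ (le_abs_self _), ?_⟩
    · linarith
    · refine le_of_sq_le_sq ?_ (by positivity)
      rw [Rf_sq]
      nlinarith [norm_nonneg x]
  have hη3 := hmin √n (μ.real H) hsn0.le hη1 hη2
  set K := {x : EuclideanSpace ℝ (Fin n) | ‖x‖ ≤ 2 * √n} with hK
  have mK : MeasurableSet K := measurableSet_le measurable_norm measurable_const
  have mI : ∀ a b : ℝ, MeasurableSet {x : EuclideanSpace ℝ (Fin n) | a ≤ ‖x‖ ∧ ‖x‖ ≤ b} := fun a b =>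
    (measurableSet_le measurable_const measurable_norm).inter (measurableSet_le measurable_norm measurable_const)
  have hK34 : 3/4 ≤ μ.real K := by
    have h1 := hμ.markov (r := 2 * √n) (by positivity)
    rw [mul_pow, hsn, show (n:ℝ) / (2 ^ 2 * n) = 1/4 by field_simp; norm_num] at h1
    have h2 : Kᶜ ⊆ {x : EuclideanSpace ℝ (Fin n) | 2 * √n ≤ ‖x‖} := by
      intro x hx
      have : ¬ (‖x‖ ≤ 2 * √n) := hx
      push Not at this
      exact this.le
    have h3 := (measureReal_mono (μ := μ) h2).trans h1
    have h4 := probReal_add_probReal_compl (μ := μ) mK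
    linarith
  set l := 7 * √n / s with hl
  have hl0 : 0 < l := by positivity
  have hl1 : l < 1 := by rw [hl, div_lt_one hs0]; linarith
  have hls : l * s = 7 * √n := by rw [hl]; field_simp
  set S := {x : EuclideanSpace ℝ (Fin n) | s ≤ ‖x‖ ∧ ‖x‖ ≤ 2 * s} with hS
  have key := hμ.lc.sets_real hl0 hl1 (mI s (2 * s)) mK (mI (5 * √n) (18 * √n)) (by
    intro x hx y hy
    have hx1 : s ≤ ‖x‖ := hx.1
    have hx2 : ‖x‖ ≤ 2 * s := hx.2
    have hy1 : ‖y‖ ≤ 2 * √n := hy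
    have e1 : ‖l • x‖ = l * ‖x‖ := by rw [norm_smul, Real.norm_of_nonneg hl0.le]
    have e2 : ‖(1 - l) • y‖ ≤ 2 * √n := by
      rw [norm_smul, Real.norm_of_nonneg (by linarith)]
      nlinarith [norm_nonneg y]
    have f1 : l * s ≤ l * ‖x‖ := by gcongr
    have f2 : l * ‖x‖ ≤ l * (2 * s) := by gcongr
    have g1 := norm_add_le (l • x) ((1 - l) • y)
    have g2 := norm_sub_le (l • x + (1 - l) • y) ((1 - l) • y)
    rw [add_sub_cancel_right] at g2
    exact ⟨by linarith, by linarith⟩)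
  have hSl : μ.real S ^ l ≤ rexp (-(c' * √n)) := by
    have h1 : (3/4:ℝ) ≤ μ.real K ^ (1 - l) := by
      calc (3/4:ℝ) = (3/4:ℝ) ^ (1:ℝ) := by rw [Real.rpow_one]
        _ ≤ (3/4:ℝ) ^ (1 - l) := Real.rpow_le_rpow_of_exponent_ge (by norm_num) (by norm_num) (by linarith)
        _ ≤ _ := Real.rpow_le_rpow (by norm_num) hK34 (by linarith)
    have h2 : μ.real S ^ l * (3/4) ≤ μ.real H := by
      refine le_trans ?_ key
      have : 0 ≤ μ.real S ^ l := Real.rpow_nonneg measureReal_nonneg _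
      gcongr
    linarith
  have h5 : μ.real S = (μ.real S ^ l) ^ (1 / l) := by
    rw [← Real.rpow_mul measureReal_nonneg, mul_one_div_cancel hl0.ne', Real.rpow_one]
  rw [h5]
  refine (Real.rpow_le_rpow (Real.rpow_nonneg measureReal_nonneg _) hSl (by positivity)).trans ?_
  rw [← Real.exp_mul, hl]
  refine le_of_eq ?_
  congr 1
  field_simp

lemma T2 : ∃ c C : ℝ, 0 < c ∧ 1 ≤ C ∧ ∀ (n : ℕ) (μ : Measure (EuclideanSpace ℝ (Fin n))), IsoLC μ → 0 < n →
    ∀ s, 8 * √n ≤ s → μ.real {x | s ≤ ‖x‖} ≤ C * rexp (-(c * s)) := by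
  obtain ⟨c, hc, h⟩ := T2a
  have hq1 : rexp (-c) < 1 := by rw [Real.exp_lt_one_iff]; linarith
  have hsum : Summable fun j : ℕ => rexp (-c) ^ j := summable_geometric_of_lt_one (Real.exp_pos _).le hq1
  refine ⟨c, (1 - rexp (-c))⁻¹, hc, ?_, fun n μ hμ hn s hs => ?_⟩
  · rw [one_le_inv₀ (by linarith)]
    linarith [Real.exp_pos (-c)]
  have hpr := hμ.prob
  have hn1 : (1:ℝ) ≤ n := by exact_mod_cast hn
  have hsn1 : 1 ≤ √(n:ℝ) := by rw [Real.one_le_sqrt]; exact hn1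
  have hs1 : 1 ≤ s := by linarith
  have hcov : {x : EuclideanSpace ℝ (Fin n) | s ≤ ‖x‖} ⊆
      ⋃ j : ℕ, {x | 2 ^ j * s ≤ ‖x‖ ∧ ‖x‖ ≤ 2 * (2 ^ j * s)} := by
    intro x hx
    have hx' : s ≤ ‖x‖ := hx
    obtain ⟨j, hj1, hj2⟩ := exists_nat_pow_near (x := ‖x‖ / s) (y := (2:ℝ))
      (by rw [le_div_iff₀ (by linarith)]; linarith) (by norm_num)
    rw [Set.mem_iUnion]
    rw [le_div_iff₀ (by linarith)] at hj1
    rw [div_lt_iff₀ (by linarith), pow_succ] at hj2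
    exact ⟨j, hj1, by linarith⟩
  have hpow : ∀ j : ℕ, (j:ℝ) + 1 ≤ 2 ^ j := by
    intro j
    have : j + 1 ≤ 2 ^ j := Nat.lt_two_pow_self
    exact_mod_cast this
  have hterm : ∀ j : ℕ, μ {x | 2 ^ j * s ≤ ‖x‖ ∧ ‖x‖ ≤ 2 * (2 ^ j * s)} ≤
      ENNReal.ofReal (rexp (-(c * s)) * rexp (-c) ^ j) := by
    intro j
    have h1 := h n μ hμ hn (2 ^ j * s) (by nlinarith [hpow j, (Nat.cast_nonneg j : (0:ℝ) ≤ j)])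
    rw [← ENNReal.ofReal_toReal (measure_ne_top μ _)]
    refine ENNReal.ofReal_le_ofReal (h1.trans ?_)
    rw [← Real.exp_nat_mul, ← Real.exp_add, Real.exp_le_exp]
    have h2 : ((j:ℝ) + 1) * s ≤ 2 ^ j * s := by gcongr; exact hpow j
    have h3 : (j:ℝ) + s ≤ ((j:ℝ) + 1) * s := by nlinarith [(Nat.cast_nonneg j : (0:ℝ) ≤ j)]
    nlinarith
  have hfin : μ {x | s ≤ ‖x‖} ≤ ENNReal.ofReal ((1 - rexp (-c))⁻¹ * rexp (-(c * s))) := by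
    refine (measure_mono hcov).trans ((measure_iUnion_le _).trans ((ENNReal.tsum_le_tsum hterm).trans ?_))
    rw [← ENNReal.ofReal_tsum_of_nonneg (fun j => by positivity) (hsum.mul_left _), tsum_mul_left,
      tsum_geometric_of_lt_one (Real.exp_pos _).le hq1, mul_comm]
  have := ENNReal.toReal_mono ENNReal.ofReal_ne_top hfin
  rwa [ENNReal.toReal_ofReal] at this
  have : 0 ≤ 1 - rexp (-c) := by linarith
  positivity

/-- discrete layer cake -/
lemma second_moment {c C : ℝ} (hc : 0 < c) (hC : 0 ≤ C) : ∃ S : ℝ, 0 ≤ S ∧ ∀ {α : Type} [MeasurableSpace α]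
    (μ : Measure α) [IsProbabilityMeasure μ] (A : Set α) (Y : α → ℝ) (h : ℝ), 0 < h → MeasurableSet A →
    Measurable Y → (∀ x, 0 ≤ Y x) →
    (∀ j : ℕ, μ.real {x | x ∈ A ∧ j * h ≤ Y x} ≤ C * rexp (-(c * j))) →
    ∫⁻ x in A, ENNReal.ofReal (Y x ^ 2) ∂μ ≤ ENNReal.ofReal (h ^ 2 * S) := by
  have hq1 : rexp (-c) < 1 := by rw [Real.exp_lt_one_iff]; linarith
  have hsum : Summable fun j : ℕ => (2 * (j:ℝ) + 1) * (C * rexp (-(c * j))) := by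
    have h1 := summable_pow_mul_geometric_of_norm_lt_one 1 (r := rexp (-c))
      (by rwa [Real.norm_of_nonneg (Real.exp_pos _).le])
    have h0 := summable_geometric_of_lt_one (Real.exp_pos (-c)).le hq1
    refine (((h1.mul_left 2).add h0).mul_left C).congr fun j => ?_
    rw [← Real.exp_nat_mul, show (j:ℝ) * -c = -(c * j) by ring]
    ring
  refine ⟨∑' j : ℕ, (2 * (j:ℝ) + 1) * (C * rexp (-(c * j))), tsum_nonneg fun j => by positivity, ?_⟩
  intro α _ μ _ A Y h hh hA hY hY0 hb
  have hT : ∀ j : ℕ, MeasurableSet {x | x ∈ A ∧ j * h ≤ Y x} := fun j =>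
    hA.inter (measurableSet_le measurable_const hY)
  set F : ℕ → α → ℝ≥0∞ := fun j => {x | x ∈ A ∧ j * h ≤ Y x}.indicator
    (fun _ => ENNReal.ofReal (h ^ 2 * (2 * j + 1))) with hF
  have hle : ∀ x ∈ A, ENNReal.ofReal (Y x ^ 2) ≤ ∑' j, F j x := by
    intro x hx
    set N := ⌊Y x / h⌋₊ with hN
    have hN1 : (N:ℝ) ≤ Y x / h := Nat.floor_le (div_nonneg (hY0 x) hh.le)
    have hN2 : Y x / h < N + 1 := Nat.lt_floor_add_one _
    rw [le_div_iff₀ hh] at hN1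
    rw [div_lt_iff₀ hh] at hN2
    refine le_trans ?_ (ENNReal.sum_le_tsum (Finset.range (N + 1)))
    have e : ∀ j ∈ Finset.range (N + 1), F j x = ENNReal.ofReal (h ^ 2 * (2 * j + 1)) := by
      intro j hj
      have hj' : (j:ℝ) ≤ N := by
        have := Finset.mem_range.1 hj
        exact_mod_cast (by omega : j ≤ N)
      exact Set.indicator_of_mem (show x ∈ {x | x ∈ A ∧ j * h ≤ Y x} from
        ⟨hx, (mul_le_mul_of_nonneg_right hj' hh.le).trans hN1⟩) _
    rw [Finset.sum_congr rfl e, ← ENNReal.ofReal_sum_of_nonneg (fun j _ => by positivity)]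
    refine ENNReal.ofReal_le_ofReal ?_
    have hs : ∀ M : ℕ, ∑ j ∈ Finset.range M, h ^ 2 * (2 * (j:ℝ) + 1) = h ^ 2 * (M:ℝ) ^ 2 := by
      intro M
      induction M with
      | zero => simp
      | succ M ih => rw [Finset.sum_range_succ, ih]; push_cast; ring
    rw [hs, ← mul_pow]
    have := hY0 x
    push_cast
    gcongr
    linarith
  calc ∫⁻ x in A, ENNReal.ofReal (Y x ^ 2) ∂μ ≤ ∫⁻ x in A, ∑' j, F j x ∂μ := setLIntegral_mono' hA hle
    _ ≤ ∫⁻ x, ∑' j, F j x ∂μ := setLIntegral_le_lintegral _ _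
    _ = ∑' j, ∫⁻ x, F j x ∂μ := lintegral_tsum fun j => (measurable_const.indicator (hT j)).aemeasurable
    _ ≤ ∑' j : ℕ, ENNReal.ofReal (h ^ 2 * ((2 * (j:ℝ) + 1) * (C * rexp (-(c * j))))) := by
      refine ENNReal.tsum_le_tsum fun j => ?_
      rw [hF]
      simp only []
      rw [lintegral_indicator_const (hT j), ← ENNReal.ofReal_toReal (measure_ne_top μ _),
        ← ENNReal.ofReal_mul (by positivity)]
      refine ENNReal.ofReal_le_ofReal ?_
      rw [← mul_assoc]
      gcongr
      exact hb j
    _ = _ := by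
      rw [← ENNReal.ofReal_tsum_of_nonneg (fun j => by positivity) (hsum.mul_left _), tsum_mul_left]

end

section

lemma aux_cube {j h N r : ℝ} (hr : 0 < r) (hr2 : r ^ 2 = N) (hh : h ^ 3 = N) :
    (j * h / r) ^ 3 * r = j ^ 3 := by
  have : (j * h / r) ^ 3 * r = j ^ 3 * h ^ 3 / r ^ 2 := by field_simp
  rw [this, hh, hr2]
  have : N ≠ 0 := by rw [← hr2]; positivity
  field_simp

lemma aux_far {R m r x : ℝ} (hr : 0 ≤ r) (hm0 : 0 ≤ m) (hm : m ≤ 2 * r) (hR : 20 * r < R)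
    (hx : 0 ≤ x) (hRx : R ^ 2 = x ^ 2 + r ^ 2) :
    |R - m| ^ 2 ≤ 2 * x ^ 2 ∧ 8 * r ≤ x := by
  have h1 : (20 * r) ^ 2 ≤ R ^ 2 := by gcongr
  constructor
  · have h2 : |R - m| ^ 2 ≤ R ^ 2 := by
      have : |R - m| ≤ R := by rw [abs_le]; constructor <;> linarith
      gcongr
    nlinarith [sq_nonneg r]
  · apply le_of_sq_le_sq _ hx
    nlinarith [sq_nonneg r]

lemma aux_q {R m q : ℝ} (hm : 0 ≤ m) (hq : 0 < q) :
    R ^ 2 * (1 - m / q) + (m ^ 2 - m * q) ≤ |R - m| ^ 2 := by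
  rw [sq_abs]
  have h : (R - m) ^ 2 - (R ^ 2 * (1 - m / q) + (m ^ 2 - m * q)) = m / q * (R - q) ^ 2 := by
    field_simp; ring
  have : 0 ≤ m / q * (R - q) ^ 2 := by positivity
  linarith

lemma T3 : ∃ c C D : ℝ, 0 < c ∧ 1 ≤ C ∧ 1 ≤ D ∧ ∀ (n : ℕ) (μ : Measure (EuclideanSpace ℝ (Fin n))), IsoLC μ → 0 < n →
    ∃ m h : ℝ, 0 < h ∧ h ^ 3 = n ∧ |m - √(2 * n)| ≤ D * h ∧ ∀ s, 0 ≤ s →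
      μ.real {x | s ≤ |Rf x - m| ∧ Rf x ≤ 20 * √n} ≤ C * rexp (-(c * ((s / √n) ^ 3 * √n))) := by
  obtain ⟨c, C, hc, hC, h1⟩ := T1
  obtain ⟨c2, C2, hc2, hC2, h2⟩ := T2
  obtain ⟨S1, hS1, H1⟩ := second_moment hc (by linarith : (0:ℝ) ≤ C)
  obtain ⟨S2, hS2, H2⟩ := second_moment hc2 (by linarith : (0:ℝ) ≤ C2)
  refine ⟨c, C, 1 + S1 + 2 * S2, hc, hC, by linarith, ?_⟩
  intro n μ hμ hn
  have := hμ.prob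
  obtain ⟨m, hm1, hm2, hm⟩ := h1 n μ hμ hn
  have hn1 : (1:ℝ) ≤ n := by exact_mod_cast hn
  have hr : 0 < √(n:ℝ) := Real.sqrt_pos.2 (by linarith)
  have hr2 : √(n:ℝ) ^ 2 = n := Real.sq_sqrt (by linarith)
  set h : ℝ := (n:ℝ) ^ ((1:ℝ)/3) with hh
  have hh3 : h ^ 3 = n := by
    rw [hh, ← Real.rpow_natCast, ← Real.rpow_mul (by linarith)]; norm_num
  have hh1 : 1 ≤ h := by
    rw [hh]; exact Real.one_le_rpow hn1 (by norm_num)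
  refine ⟨m, h, by linarith, hh3, ?_, hm⟩
  have hm0 : 0 ≤ m := by linarith
  set A : Set (EuclideanSpace ℝ (Fin n)) := {x | Rf x ≤ 20 * √n} with hA
  have hAm : MeasurableSet A := measurableSet_le measurable_Rf measurable_const
  have hYm : Measurable (fun x : EuclideanSpace ℝ (Fin n) => |Rf x - m|) := by
    have : Continuous (fun x : EuclideanSpace ℝ (Fin n) => |Rf x - m|) :=
      (continuous_Rf.sub continuous_const).abs
    exact this.measurable
  have B1 := H1 μ A (fun x => |Rf x - m|) h (by linarith) hAm hYm (fun x => abs_nonneg _) (by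
    intro j
    have e1 := hm (j * h) (by positivity)
    rw [aux_cube hr hr2 hh3] at e1
    have e2 : {x | x ∈ A ∧ j * h ≤ |Rf x - m|} ⊆ {x | j * h ≤ |Rf x - m| ∧ Rf x ≤ 20 * √n} :=
      fun x hx => ⟨hx.2, hx.1⟩
    refine (measureReal_mono e2).trans (e1.trans ?_)
    have e3 : (j:ℝ) ≤ (j:ℝ) ^ 3 := by exact_mod_cast Nat.le_self_pow (by norm_num) j
    gcongr)
  have B2 := H2 μ Aᶜ (fun x => ‖x‖) 1 one_pos hAm.compl measurable_norm (fun x => norm_nonneg _) (by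
    intro j
    have e2 : {x | x ∈ Aᶜ ∧ j * (1:ℝ) ≤ ‖x‖} ⊆ {x | max (j:ℝ) (8 * √n) ≤ ‖x‖} := by
      intro x hx
      have hx1 : 20 * √(n:ℝ) < Rf x := not_le.1 hx.1
      have hx2 : (j:ℝ) * 1 ≤ ‖x‖ := hx.2
      have := (aux_far hr.le hm0 hm2 hx1 (norm_nonneg x) (by rw [hr2]; exact Rf_sq x)).2
      exact max_le (by linarith) this
    refine (measureReal_mono e2).trans ((h2 n μ hμ hn _ (le_max_right _ _)).trans ?_)
    have : (j:ℝ) ≤ max (j:ℝ) (8 * √n) := le_max_left _ _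
    gcongr)
  have hIntg : Integrable (fun x => |Rf x - m| ^ 2) μ := by
    refine Integrable.mono' ((hμ.R_int.const_mul 2).add (integrable_const (2 * m ^ 2))) (hYm.pow_const 2).aestronglyMeasurable ?_
    refine Filter.Eventually.of_forall fun x => ?_
    simp only [sq_abs, Pi.add_apply]
    rw [Real.norm_of_nonneg (sq_nonneg _)]
    nlinarith [sq_nonneg (Rf x + m)]
  have B3 : ∫⁻ x in Aᶜ, ENNReal.ofReal (|Rf x - m| ^ 2) ∂μ ≤ ENNReal.ofReal (2 * S2) := by
    calc ∫⁻ x in Aᶜ, ENNReal.ofReal (|Rf x - m| ^ 2) ∂μ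
        ≤ ∫⁻ x in Aᶜ, ENNReal.ofReal 2 * ENNReal.ofReal (‖x‖ ^ 2) ∂μ := by
          refine setLIntegral_mono' hAm.compl fun x hx => ?_
          rw [← ENNReal.ofReal_mul (by norm_num)]
          have hx1 : 20 * √(n:ℝ) < Rf x := not_le.1 hx
          exact ENNReal.ofReal_le_ofReal (aux_far hr.le hm0 hm2 hx1 (norm_nonneg x) (by rw [hr2]; exact Rf_sq x)).1
      _ = ENNReal.ofReal 2 * ∫⁻ x in Aᶜ, ENNReal.ofReal (‖x‖ ^ 2) ∂μ := by
          rw [lintegral_const_mul']; exact ENNReal.ofReal_ne_top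
      _ ≤ ENNReal.ofReal 2 * ENNReal.ofReal (1 ^ 2 * S2) := by gcongr
      _ = ENNReal.ofReal (2 * S2) := by rw [← ENNReal.ofReal_mul (by norm_num)]; norm_num
  have B4 : ∫ x, |Rf x - m| ^ 2 ∂μ ≤ h ^ 2 * S1 + 2 * S2 := by
    have e := ofReal_integral_eq_lintegral_ofReal hIntg (Filter.Eventually.of_forall fun x => sq_nonneg _)
    rw [← lintegral_add_compl _ hAm] at e
    have e2 := add_le_add B1 B3
    rw [← e, ← ENNReal.ofReal_add (by positivity) (by positivity)] at e2
    exact (ENNReal.ofReal_le_ofReal_iff (by positivity)).1 e2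
  set q : ℝ := √(2 * n) with hq
  have hq0 : 0 < q := Real.sqrt_pos.2 (by linarith)
  have hq2 : q ^ 2 = 2 * n := Real.sq_sqrt (by linarith)
  have B5 : (m - q) ^ 2 ≤ ∫ x, |Rf x - m| ^ 2 ∂μ := by
    have e : ∫ x, (Rf x ^ 2 * (1 - m / q) + (m ^ 2 - m * q)) ∂μ ≤ ∫ x, |Rf x - m| ^ 2 ∂μ :=
      integral_mono ((hμ.R_int.mul_const _).add (integrable_const _)) hIntg (fun x => aux_q hm0 hq0)
    rw [integral_add (hμ.R_int.mul_const _) (integrable_const _), integral_mul_const, hμ.R_mean, ← hq2] at e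
    have e3 : q ^ 2 * (1 - m / q) + (m ^ 2 - m * q) = (m - q) ^ 2 := by field_simp; ring
    simp only [integral_const, probReal_univ, one_smul] at e
    linarith
  apply abs_le_of_sq_le_sq _ (by positivity)
  have h1' : 1 ≤ h ^ 2 := by nlinarith
  calc (m - q) ^ 2 ≤ h ^ 2 * S1 + 2 * S2 := B5.trans B4
    _ ≤ h ^ 2 * (S1 + 2 * S2) := by nlinarith
    _ ≤ h ^ 2 * (1 + S1 + 2 * S2) ^ 2 := by gcongr; nlinarith
    _ = ((1 + S1 + 2 * S2) * h) ^ 2 := by ring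

lemma aux_fin1 {R x r q t : ℝ} (hr : 0 < r) (hx : 0 ≤ x) (hR : 0 ≤ R) (hq : 0 ≤ q) (ht : 0 ≤ t)
    (hq2 : q ^ 2 = 2 * r ^ 2) (hR2 : R ^ 2 = x ^ 2 + r ^ 2) (h : t * r ≤ |x - r|) :
    t * r / 3 ≤ |R - q| := by
  have e1 : (R - q) * (R + q) = (x - r) * (x + r) := by nlinarith
  have e2 : |R - q| * (R + q) = |x - r| * (x + r) := by
    rw [← abs_of_nonneg (by linarith : 0 ≤ R + q), ← abs_mul, e1, abs_mul, abs_of_nonneg (by linarith : 0 ≤ x + r)]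
  have hRx : R ≤ x + r := le_of_sq_le_sq (by nlinarith) (by linarith)
  have hqr : q ≤ 2 * r := le_of_sq_le_sq (by nlinarith) (by linarith)
  have e3 : R + q ≤ 3 * (x + r) := by linarith
  have e4 : |x - r| * (x + r) ≤ |R - q| * (3 * (x + r)) := by
    rw [← e2]; gcongr
  have e5 : |x - r| ≤ |R - q| * 3 := by
    have : 0 < x + r := by linarith
    nlinarith
  linarith

lemma T4 : ∃ c C : ℝ, 0 < c ∧ 1 ≤ C ∧ ∀ (n : ℕ) (μ : Measure (EuclideanSpace ℝ (Fin n))), IsoLC μ → 0 < n →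
    ∀ t : ℝ, 0 ≤ t → μ.real {x | t * √n ≤ |‖x‖ - √n|} ≤ C * rexp (-(c * √n * min (t ^ 3) t)) := by
  obtain ⟨c, C, D, hc, hC, hD, h1⟩ := T3
  obtain ⟨c2, C2, hc2, hC2, h2⟩ := T2
  set L : ℝ := (6 * D) ^ 3 with hL
  have hL0 : 0 ≤ L := by positivity
  set c' : ℝ := min (c / 216) c2 with hc'
  have hc'0 : 0 < c' := lt_min (by positivity) hc2
  have hexp : 1 ≤ rexp (c' * L) := Real.one_le_exp (by positivity)
  refine ⟨c', rexp (c' * L) + C + C2, hc'0, by linarith, ?_⟩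
  intro n μ hμ hn t ht
  have := hμ.prob
  obtain ⟨m, h, hh0, hh3, hmq, hm⟩ := h1 n μ hμ hn
  have hn1 : (1:ℝ) ≤ n := by exact_mod_cast hn
  have hr : 0 < √(n:ℝ) := Real.sqrt_pos.2 (by linarith)
  have hr2 : √(n:ℝ) ^ 2 = n := Real.sq_sqrt (by linarith)
  set r : ℝ := √(n:ℝ) with hrdef
  set M : ℝ := min (t ^ 3) t with hM
  have hM1 : M ≤ t ^ 3 := min_le_left _ _
  have hM2 : M ≤ t := min_le_right _ _
  have hM0 : 0 ≤ M := le_min (by positivity) ht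
  rcases le_or_gt (t ^ 3 * r) L with hcase | hcase
  · refine measureReal_le_one.trans ?_
    have e1 : c' * r * M ≤ c' * L := by
      calc c' * r * M ≤ c' * r * t ^ 3 := by gcongr
        _ = c' * (t ^ 3 * r) := by ring
        _ ≤ c' * L := by gcongr
    calc (1:ℝ) ≤ rexp (c' * L + -(c' * r * M)) := Real.one_le_exp (by linarith)
      _ = rexp (c' * L) * rexp (-(c' * r * M)) := Real.exp_add _ _
      _ ≤ _ := by gcongr; linarith
  · have hth : 6 * (D * h) ≤ t * r := by
      have e : (6 * (D * h)) ^ 3 ≤ (t * r) ^ 3 := by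
        have : (6 * (D * h)) ^ 3 = L * r ^ 2 := by rw [hr2, ← hh3, hL]; ring
        rw [this]
        have : (t * r) ^ 3 = (t ^ 3 * r) * r ^ 2 := by ring
        rw [this]
        gcongr
      exact le_of_pow_le_pow_left₀ (by norm_num) (by positivity) e
    have hq0 : 0 ≤ √(2 * (n:ℝ)) := Real.sqrt_nonneg _
    have hq2 : √(2 * (n:ℝ)) ^ 2 = 2 * r ^ 2 := by rw [Real.sq_sqrt (by linarith), hr2]
    set q := √(2 * (n:ℝ)) with hq
    have hsub : {x : EuclideanSpace ℝ (Fin n) | t * r ≤ |‖x‖ - r|} ⊆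
        {x | t * r / 6 ≤ |Rf x - m| ∧ Rf x ≤ 20 * r} ∪ {x | max (8 * r) (t * r) ≤ ‖x‖} := by
      intro x hx
      have hx' : t * r ≤ |‖x‖ - r| := hx
      have hR2 : Rf x ^ 2 = ‖x‖ ^ 2 + r ^ 2 := by rw [hr2]; exact Rf_sq x
      rcases le_or_gt (Rf x) (20 * r) with h20 | h20
      · left
        refine ⟨?_, h20⟩
        have e1 := aux_fin1 hr (norm_nonneg x) (Rf_nonneg x) hq0 ht hq2 hR2 hx'
        have e2 : |Rf x - q| ≤ |Rf x - m| + |m - q| := abs_sub_le _ _ _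
        linarith
      · right
        have e1 := (aux_far (m := 0) hr.le le_rfl (by linarith) h20 (norm_nonneg x) hR2).2
        rw [abs_of_nonneg (by linarith)] at hx'
        exact max_le e1 (by linarith)
    have e1 := hm (t * r / 6) (by positivity)
    have e2 := h2 n μ hμ hn (max (8 * r) (t * r)) (le_max_left _ _)
    have e1' : C * rexp (-(c * ((t * r / 6 / r) ^ 3 * r))) ≤ C * rexp (-(c' * r * M)) := by
      have : c' * r * M ≤ c * ((t * r / 6 / r) ^ 3 * r) := by
        calc c' * r * M ≤ (c / 216) * r * t ^ 3 := by gcongr; exact min_le_left _ _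
          _ = _ := by field_simp; norm_num; ring
      gcongr
    have e2' : C2 * rexp (-(c2 * max (8 * r) (t * r))) ≤ C2 * rexp (-(c' * r * M)) := by
      have : c' * r * M ≤ c2 * max (8 * r) (t * r) := by
        calc c' * r * M ≤ c2 * r * t := by gcongr; exact min_le_right _ _
          _ = c2 * (t * r) := by ring
          _ ≤ _ := by gcongr; exact le_max_right _ _
      gcongr
    have e3 := (measureReal_mono (μ := μ) hsub).trans (measureReal_union_le _ _)
    have e4 : 0 ≤ rexp (c' * L) * rexp (-(c' * r * M)) := by positivity
    calc _ ≤ _ := e3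
      _ ≤ C * rexp (-(c' * r * M)) + C2 * rexp (-(c' * r * M)) := add_le_add (e1.trans e1') (e2.trans e2')
      _ ≤ _ := by linarith [add_mul (rexp (c' * L) + C) C2 (rexp (-(c' * r * M))), add_mul (rexp (c' * L)) C (rexp (-(c' * r * M)))]

end

/-- sharp interpolating thin-shell/large-deviation estimate for isotropic
log-concave random vectors. -/
theorem statement0 :
    ∃ c C : ℝ, 0 < c ∧ 0 < C ∧
      ∀ (n : ℕ) (Ω : Type) (_mΩ : MeasurableSpace Ω) (P : Measure Ω),
        IsProbabilityMeasure P →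
        ∀ (X : Ω → EuclideanSpace ℝ (Fin n)) (f : EuclideanSpace ℝ (Fin n) → ℝ),
          HasDensityFn P X f → IsLogConcaveFn f → Isotropic P X →
          ∀ t : ℝ, 0 ≤ t →
            P {ω | t * Real.sqrt n ≤ |‖X ω‖ - Real.sqrt n|} ≤
              ENNReal.ofReal (C * Real.exp (-(c * (n : ℝ) ^ ((1:ℝ)/2) * min (t ^ 3) t))) := by
  obtain ⟨c, C, hc, hC, h⟩ := T4
  refine ⟨c, C, hc, by linarith, ?_⟩
  intro n Ω _mΩ P hP X f hX hf hiso t ht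
  rcases Nat.eq_zero_or_pos n with hn | hn
  · subst hn
    refine prob_le_one.trans ?_
    rw [ENNReal.one_le_ofReal]
    norm_num
    exact hC
  · obtain ⟨hXm, hXd⟩ := hX
    have hprob : IsProbabilityMeasure (Measure.map X P) :=
      Measure.isProbabilityMeasure_map hXm.aemeasurable
    have hmeas : ∀ v : EuclideanSpace ℝ (Fin n),
        Measurable (fun x : EuclideanSpace ℝ (Fin n) => ⟪x, v⟫ ^ 2) := by
      intro v
      have : Continuous (fun x : EuclideanSpace ℝ (Fin n) => ⟪x, v⟫ ^ 2) := by fun_prop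
      exact this.measurable
    have hI : ∀ v : EuclideanSpace ℝ (Fin n),
        ∫ x, ⟪x, v⟫ ^ 2 ∂(Measure.map X P) = ‖v‖ ^ 2 := by
      intro v
      rw [integral_map hXm.aemeasurable (hmeas v).aestronglyMeasurable,
        ← real_inner_self_eq_norm_sq, ← hiso.2 v v]
      simp only [sq]
    have hμ : IsoLC (Measure.map X P) := by
      refine ⟨hprob, ?_, ?_, hI⟩
      · rw [hXd]
        exact isLC_of_logconcave f hf.1 hf.2
      · intro v
        by_cases hv : v = 0
        · simp [hv]
        · by_contra hcon
          have e := hI v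
          rw [integral_undef hcon] at e
          have : 0 < ‖v‖ ^ 2 := by positivity
          linarith
    have key := h n _ hμ hn t ht
    have hset : MeasurableSet {x : EuclideanSpace ℝ (Fin n) | t * √(n:ℝ) ≤ |‖x‖ - √(n:ℝ)|} := by
      have : Continuous (fun x : EuclideanSpace ℝ (Fin n) => |‖x‖ - √(n:ℝ)|) := by fun_prop
      exact measurableSet_le measurable_const this.measurable
    have e1 : P {ω | t * √(n:ℝ) ≤ |‖X ω‖ - √(n:ℝ)|} =
        Measure.map X P {x | t * √(n:ℝ) ≤ |‖x‖ - √(n:ℝ)|} := by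
      rw [Measure.map_apply hXm hset]
      rfl
    rw [e1, ← Real.sqrt_eq_rpow, ← ofReal_measureReal]
    exact ENNReal.ofReal_le_ofReal key
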